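/- Let K be a number field and h ≥ 2 an integer. Then ∑_{𝔪 ∈ 𝒩_h(x)} ω(𝔪)² = κ_K·γ_h·x^{1/h}·(log log x)² + κ_K·γ_h·(2𝔇₁ + 1)·x^{1/h}·log log x + κ_K·γ_h·𝔇₂·x^{1/h} + O_h(x^{1/h}·log log x/log x) as the real number x → ∞, where the implied constant depends only on h and K. -/

import Mathlib

open Filter Topology Asymptotics NumberField

noncomputable section

/-- The number of distinct (nonzero) prime ideals dividing the ideal `I`. -/
def omegaK {K : Type*} [Field K] [NumberField K] (I : Ideal (𝓞 K)) : ℕ :=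
  {p : Ideal (𝓞 K) | p.IsPrime ∧ p ≠ ⊥ ∧ p ∣ I}.ncard

/-- The ideal `I` is `h`-free: no prime ideal divides it to order `h`. -/
def HFreeI {K : Type*} [Field K] [NumberField K] (h : ℕ) (I : Ideal (𝓞 K)) : Prop :=
  ∀ p : Ideal (𝓞 K), p.IsPrime → p ≠ ⊥ → ¬ p ^ h ∣ I

/-- The ideal `I` is `h`-full: every prime ideal dividing it divides it to
order at least `h`. -/
def HFullI {K : Type*} [Field K] [NumberField K] (h : ℕ) (I : Ideal (𝓞 K)) : Prop :=
  ∀ p : Ideal (𝓞 K), p.IsPrime → p ≠ ⊥ → p ∣ I → p ^ h ∣ I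

/-- The ideal-counting constant `κ_K = 2^{r₁} (2π)^{r₂} h_K R_K / (w_K √|d_K|)`. -/
def kappaK (K : Type*) [Field K] [NumberField K] : ℝ :=
  (2 ^ InfinitePlace.nrRealPlaces K * (2 * Real.pi) ^ InfinitePlace.nrComplexPlaces K *
      (classNumber K) * Units.regulator K) /
    ((Units.torsionOrder K : ℕ) * Real.sqrt |(discr K : ℝ)|)

/-- The Dedekind zeta value `ζ_K(h) = ∑_{𝔞 ≠ 0} N(𝔞)^{-h}`. -/
def zetaK (K : Type*) [Field K] [NumberField K] (h : ℕ) : ℝ :=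
  ∑' I : {I : Ideal (𝓞 K) // I ≠ ⊥}, 1 / (Ideal.absNorm I.val : ℝ) ^ h

/-- `A` is the Mertens constant `𝔄` for the prime ideals of `K`:
`𝔄 = lim (∑_{N(𝔭) ≤ x} 1/N(𝔭) − log log x)`. -/
def MertensK (K : Type*) [Field K] [NumberField K] (A : ℝ) : Prop :=
  Tendsto (fun x : ℝ =>
      (∑ᶠ p ∈ {p : Ideal (𝓞 K) | p.IsPrime ∧ p ≠ ⊥ ∧ (Ideal.absNorm p : ℝ) ≤ x},
        1 / (Ideal.absNorm p : ℝ)) - Real.log (Real.log x))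
    atTop (𝓝 A)

/-- The constant `𝔅 = -π²/6`. -/
def BconstK : ℝ := -(Real.pi ^ 2) / 6

/-- The constant `ℭ₁` for `K`, given the Mertens constant `A`. -/
def C1K (K : Type*) [Field K] [NumberField K] (h : ℕ) (A : ℝ) : ℝ :=
  A - ∑' p : {p : Ideal (𝓞 K) // p.IsPrime ∧ p ≠ ⊥},
    ((Ideal.absNorm p.val : ℝ) - 1) /
      ((Ideal.absNorm p.val : ℝ) * ((Ideal.absNorm p.val : ℝ) ^ h - 1))

/-- The constant `ℭ₂` for `K`, given the Mertens constant `A`. -/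
def C2K (K : Type*) [Field K] [NumberField K] (h : ℕ) (A : ℝ) : ℝ :=
  C1K K h A ^ 2 + C1K K h A + BconstK -
    ∑' p : {p : Ideal (𝓞 K) // p.IsPrime ∧ p ≠ ⊥},
      (((Ideal.absNorm p.val : ℝ) ^ (h - 1) - 1) /
        ((Ideal.absNorm p.val : ℝ) ^ h - 1)) ^ 2

/-- The constant `γ_h` for `K`. -/
def gammaK (K : Type*) [Field K] [NumberField K] (h : ℕ) : ℝ :=
  ∏' p : {p : Ideal (𝓞 K) // p.IsPrime ∧ p ≠ ⊥},
    (1 + ((Ideal.absNorm p.val : ℝ) - (Ideal.absNorm p.val : ℝ) ^ (1 / (h : ℝ))) /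
      ((Ideal.absNorm p.val : ℝ) ^ 2 *
        ((Ideal.absNorm p.val : ℝ) ^ (1 / (h : ℝ)) - 1)))

/-- The convergent series `𝔏_h(r)` for `K`. -/
def LhK (K : Type*) [Field K] [NumberField K] (h : ℕ) (r : ℝ) : ℝ :=
  ∑' p : {p : Ideal (𝓞 K) // p.IsPrime ∧ p ≠ ⊥},
    1 / ((Ideal.absNorm p.val : ℝ) ^ (r / (h : ℝ) - 1) *
      ((Ideal.absNorm p.val : ℝ) -
        (Ideal.absNorm p.val : ℝ) ^ (1 - 1 / (h : ℝ)) + 1))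

/-- The constant `𝔇₁` for `K`, given the Mertens constant `A`. -/
def D1K (K : Type*) [Field K] [NumberField K] (h : ℕ) (A : ℝ) : ℝ :=
  A - Real.log (h : ℝ) + LhK K h ((h : ℝ) + 1) - LhK K h (2 * (h : ℝ))

/-- The constant `𝔇₂` for `K`, given the Mertens constant `A`. -/
def D2K (K : Type*) [Field K] [NumberField K] (h : ℕ) (A : ℝ) : ℝ :=
  D1K K h A ^ 2 + D1K K h A + BconstK -
    ∑' p : {p : Ideal (𝓞 K) // p.IsPrime ∧ p ≠ ⊥},
      ((Ideal.absNorm p.val : ℝ) -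
        (Ideal.absNorm p.val : ℝ) ^ (1 - 1 / (h : ℝ)) + 1)⁻¹ ^ 2

/-!
Write `ω(𝔪)²` as the number of ordered pairs of prime divisors of `𝔪`. The sum of `ω²` over
`h`-full ideals becomes a sum, over primes `𝔭` and over pairs `𝔭 ≠ 𝔮`, of the number of `h`-full
ideals of norm at most `x` divisible by `𝔭`, respectively by `𝔭𝔮`. An `h`-full ideal is uniquely
the `h`-th power of an ideal times a factor with exponents in `{0} ∪ (h, 2h)`, so these counts
follow, with a power saving, from the number of ideals of norm at most `x`, which is
`κ_K x + O(x ^ (1 - 1 / (2 [K : ℚ])))` because the boundary of the fundamental domain of the unit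
action is thin. The multiples of `𝔭` have density `ρ(𝔭) = 1 / (N𝔭 - N𝔭 ^ (1 - 1 / h) + 1)` among
the `h`-full ideals, and those of `𝔭𝔮` have density `ρ(𝔭) ρ(𝔮)`.

It remains to evaluate `∑ ρ(𝔭)` over `N𝔭 ^ h ≤ x` and `∑ ρ(𝔭) ρ(𝔮)` over `N(𝔭𝔮) ^ h ≤ x`. Since
`ρ(𝔭)` is `1 / N𝔭` up to a summable correction, Mertens' theorem gives the first. The hyperbola
method reduces the second to the first and to the integral of `log (1 - u) / u`, which is where the
dilogarithm and the constant `-π² / 6` come from. Apart from the count of ideals, the argument only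
uses unique factorisation and Chebyshev's bound, so it is carried out for Beurling primes, with
logarithms of norms in place of norms.
-/

/-! ## Lattice points and the boundary shell -/

section LatticeCount

open MeasureTheory Metric
open scoped Pointwise

/-- The points within distance `c` of both `S` and its complement, a two-sided collar of the
frontier of `S`. Its measure bounds the error when lattice points of `S` are counted by volume. -/
def boundaryShell {X : Type*} [PseudoEMetricSpace X] (c : ℝ) (S : Set X) : Set X :=
  thickening c S ∩ thickening c Sᶜ

variable {E : Type*} [NormedAddCommGroup E] {L : Submodule ℤ E} {F S : Set E} {c : ℝ}

theorem boundaryShell_smul [NormedSpace ℝ E] {t : ℝ} (ht : 0 < t) (c : ℝ) (S : Set E) :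
    boundaryShell c (t • S) = t • boundaryShell (c / t) S := by
  have thickening_smul (A : Set E) : thickening c (t • A) = t • thickening (c / t) A := by
    ext y
    simp_rw [Set.mem_smul_set_iff_inv_smul_mem₀ ht.ne', mem_thickening_iff]
    refine ⟨?_, ?_⟩
    · rintro ⟨_, ⟨z, hz, rfl⟩, hyz⟩
      refine ⟨z, hz, ?_⟩
      rw [← inv_smul_smul₀ ht.ne' z, dist_smul₀, norm_inv, Real.norm_of_nonneg ht.le,
        div_eq_inv_mul]
      gcongr
    · rintro ⟨z, hz, hyz⟩
      refine ⟨t • z, Set.smul_mem_smul_set hz, ?_⟩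
      rw [← smul_inv_smul₀ ht.ne' y, dist_smul₀, Real.norm_of_nonneg ht.le]
      rwa [lt_div_iff₀' ht] at hyz
  have smul_compl : (t • S)ᶜ = t • Sᶜ := by
    ext; simp [Set.mem_smul_set_iff_inv_smul_mem₀ ht.ne']
  rw [boundaryShell, boundaryShell, smul_compl, thickening_smul, thickening_smul,
    Set.smul_set_inter₀ ht.ne']

/-- The union of the translates of `F` by the points of `L` lying in `S`. -/
def latticeTiles (L : Submodule ℤ E) (F S : Set E) : Set E := ⋃ l ∈ {l : L | (l : E) ∈ S}, l +ᵥ F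

theorem latticeTiles_sdiff_subset (hF : F ⊆ ball 0 c) :
    latticeTiles L F S \ S ⊆ boundaryShell c S := by
  rintro y ⟨hy, hyS⟩
  simp only [latticeTiles, Set.mem_iUnion] at hy
  obtain ⟨l, hl, f, hf, rfl⟩ := hy
  have hfc : ‖f‖ < c := by simpa using hF hf
  exact ⟨mem_thickening_iff.mpr ⟨l, hl, by simpa [Submodule.vadd_def] using hfc⟩,
    self_subset_thickening ((norm_nonneg f).trans_lt hfc) _ hyS⟩

theorem finite_setOf_mem_of_isBounded [ProperSpace E] [DiscreteTopology L]
    (hS : Bornology.IsBounded S) : {l : L | (l : E) ∈ S}.Finite := by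
  have : DiscreteTopology L.toAddSubgroup := ‹_›
  refine Set.Finite.of_finite_image ?_ Subtype.val_injective.injOn
  refine (finite_isBounded_inter_isClosed (s := (L : Set E)) ⟨‹_›⟩ hS
    (AddSubgroup.isClosed_of_discrete (H := L.toAddSubgroup))).subset ?_
  rintro _ ⟨l, hl, rfl⟩
  exact ⟨hl, l.2⟩

variable [MeasurableSpace E] {μ : Measure E}

theorem sdiff_latticeTiles_ae_le (hF : F ⊆ ball 0 c) (hfd : IsAddFundamentalDomain L F μ) :
    (S \ latticeTiles L F S : Set E) ≤ᵐ[μ] boundaryShell c S := by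
  filter_upwards [hfd.ae_covers] with y ⟨l, hl⟩ ⟨hyS, hy⟩
  have hlc : ‖(l : E) + y‖ < c := by simpa [Submodule.vadd_def] using hF hl
  refine ⟨self_subset_thickening ((norm_nonneg _).trans_lt hlc) _ hyS,
    mem_thickening_iff.mpr ⟨-l, fun hlS ↦ hy ?_, by rwa [dist_eq_norm, sub_neg_eq_add, add_comm]⟩⟩
  exact Set.mem_biUnion (x := -l) hlS ⟨l +ᵥ y, hl, neg_vadd_vadd l y⟩

variable [BorelSpace E]

instance vaddInvariantMeasure_submodule [μ.IsAddLeftInvariant] : VAddInvariantMeasure L E μ :=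
  inferInstanceAs (VAddInvariantMeasure L.toAddSubgroup E μ)

theorem measure_latticeTiles [ProperSpace E] [DiscreteTopology L] [μ.IsAddLeftInvariant]
    (hfd : IsAddFundamentalDomain L F μ) (hS : Bornology.IsBounded S) :
    μ (latticeTiles L F S) = {l : L | (l : E) ∈ S}.ncard * μ F := by
  have hfin := finite_setOf_mem_of_isBounded (L := L) hS
  rw [Set.ncard_eq_toFinset_card _ hfin, ← nsmul_eq_mul, ← Finset.sum_const, latticeTiles,
    ← Finset.sum_congr rfl fun l _ ↦ measure_vadd μ l F, ← measure_biUnion_finset₀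
      (fun l _ m _ hlm ↦ hfd.aedisjoint hlm) fun l _ ↦ hfd.nullMeasurableSet_vadd l]
  simp

theorem abs_ncard_mul_measureReal_sub_le [ProperSpace E] [DiscreteTopology L]
    [μ.IsAddHaarMeasure] (hfd : IsAddFundamentalDomain L F μ) (hF : F ⊆ ball 0 c)
    (hS : Bornology.IsBounded S) (hSm : NullMeasurableSet S μ) :
    |{l : L | (l : E) ∈ S}.ncard * μ.real F - μ.real S| ≤ μ.real (boundaryShell c S) := by
  have hfin := finite_setOf_mem_of_isBounded (L := L) hS
  have htiles := measure_latticeTiles hfd hS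
  have hF_top : μ F ≠ ⊤ := (isBounded_ball.subset hF).measure_lt_top.ne
  have hU : NullMeasurableSet (latticeTiles L F S) μ :=
    .biUnion hfin.countable fun l _ ↦ hfd.nullMeasurableSet_vadd l
  have hshell : μ (boundaryShell c S) ≠ ⊤ :=
    (hS.thickening.subset Set.inter_subset_left).measure_lt_top.ne
  have hreal : μ.real (latticeTiles L F S) = {l : L | (l : E) ∈ S}.ncard * μ.real F := by
    simp [measureReal_def, htiles]
  rw [← hreal]
  refine (abs_measureReal_sub_le_measureReal_symmDiff' hU hSm
    (htiles ▸ ENNReal.mul_ne_top (by simp) hF_top) hS.measure_lt_top.ne).trans ?_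
  refine ENNReal.toReal_mono hshell (measure_mono_ae ?_)
  filter_upwards [sdiff_latticeTiles_ae_le (S := S) hF hfd] with y hy
  rintro (hyU | hyS)
  exacts [latticeTiles_sdiff_subset hF hyU, hy hyS]

theorem exists_abs_ncard_mul_covolume_sub_le [NormedSpace ℝ E]
    [FiniteDimensional ℝ E] (μ : Measure E) [μ.IsAddHaarMeasure]
    (L : Submodule ℤ E) [DiscreteTopology L] [IsZLattice ℝ L] :
    ∃ c > 0, ∀ S : Set E, Bornology.IsBounded S → NullMeasurableSet S μ →
      |{l : L | (l : E) ∈ S}.ncard * ZLattice.covolume L μ - μ.real S| ≤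
        μ.real (boundaryShell c S) := by
  have hfd := ZLattice.isAddFundamentalDomain (Module.Free.chooseBasis ℤ L) μ
  obtain ⟨c, hc, hF⟩ := (ZSpan.fundamentalDomain_isBounded
    ((Module.Free.chooseBasis ℤ L).ofZLatticeBasis ℝ)).exists_pos_norm_lt
  refine ⟨c, hc, fun S hS hSm ↦ ?_⟩
  rw [ZLattice.covolume_eq_measure_fundamentalDomain L μ hfd]
  exact abs_ncard_mul_measureReal_sub_le hfd (fun x hx ↦ by simpa using hF x hx) hS hSm

end LatticeCount

/-! ## The frontier of `normLeOne K` is thin -/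

section BoxMeasure

open MeasureTheory Metric ENNReal

theorem prod_le_pow_card_mul {ι : Type*} [Fintype ι] {f : ι → ℝ≥0∞} {A δ : ℝ≥0∞} (v : ι)
    (hv : f v ≤ A * δ) (hf : ∀ w ≠ v, f w ≤ A) : ∏ w, f w ≤ A ^ Fintype.card ι * δ := by
  classical
  calc ∏ w, f w = f v * ∏ w ∈ Finset.univ.erase v, f w :=
        (Finset.mul_prod_erase _ _ (Finset.mem_univ v)).symm
    _ ≤ A * δ * A ^ (Fintype.card ι - 1) := by
        gcongr
        refine (Finset.prod_le_pow_card _ _ A fun w hw ↦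
          hf w (Finset.ne_of_mem_erase hw)).trans_eq ?_
        rw [Finset.card_erase_of_mem (Finset.mem_univ v), Finset.card_univ]
    _ = A ^ Fintype.card ι * δ := by
        rw [mul_right_comm, ← pow_succ', Nat.sub_add_cancel (Fintype.card_pos_iff.mpr ⟨v⟩)]

theorem boundaryShell_univ_pi_subset {ι : Type*} [Fintype ι] [DecidableEq ι] {X : ι → Type*}
    [∀ i, PseudoEMetricSpace (X i)] (η : ℝ) (t : ∀ i, Set (X i)) :
    boundaryShell η (Set.univ.pi t) ⊆
      ⋃ v, Set.univ.pi
        (Function.update (fun w ↦ thickening η (t w)) v (boundaryShell η (t v))) := by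
  rintro x ⟨hx, hx'⟩
  obtain ⟨a, ha, hxa⟩ := (mem_thickening_iff_exists_edist_lt _ _).mp hx
  obtain ⟨b, hb, hxb⟩ := (mem_thickening_iff_exists_edist_lt _ _).mp hx'
  have hthick (w : ι) : x w ∈ thickening η (t w) :=
    (mem_thickening_iff_exists_edist_lt _ _).mpr
      ⟨a w, ha w trivial, (edist_le_pi_edist x a w).trans_lt hxa⟩
  obtain ⟨v, hv⟩ : ∃ v, b v ∉ t v := by simpa [Set.mem_pi] using hb
  refine Set.mem_iUnion.mpr ⟨v, fun w _ ↦ ?_⟩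
  obtain rfl | hw := eq_or_ne w v
  · rw [Function.update_self]
    exact ⟨hthick w, (mem_thickening_iff_exists_edist_lt _ _).mpr
      ⟨b w, hv, (edist_le_pi_edist x b w).trans_lt hxb⟩⟩
  · rw [Function.update_of_ne hw]
    exact hthick w

theorem setLIntegral_univ_pi_eval {ι : Type*} [Fintype ι] [DecidableEq ι] {X : ι → Type*}
    [∀ i, Nonempty (X i)] [∀ i, MeasureSpace (X i)]
    [∀ i, SigmaFinite (volume : Measure (X i))] (i₀ : ι)
    {f : X i₀ → ℝ≥0∞} (hf : Measurable f) (t : ∀ i, Set (X i)) :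
    ∫⁻ x in Set.univ.pi t, f (x i₀) =
      (∫⁻ y in t i₀, f y) * ∏ i ∈ Finset.univ.erase i₀, volume (t i) := by
  rw [volume_pi, Measure.restrict_pi_pi, lintegral_eq_lmarginal_univ Classical.ofNonempty,
    lmarginal_erase' _ (by fun_prop) (Finset.mem_univ i₀)]
  simp_rw [Function.update_self, lmarginal, lintegral_const, Measure.pi_univ,
    Measure.restrict_apply_univ]
  rw [Finset.prod_coe_sort (Finset.univ.erase i₀) (fun i ↦ volume (t i))]

theorem thickening_Iic_subset (η a : ℝ) : thickening η (Set.Iic a) ⊆ Set.Iic (a + η) := by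
  intro x hx
  obtain ⟨b, hb, hxb⟩ := mem_thickening_iff.mp hx
  rw [Real.dist_eq, abs_lt] at hxb
  rw [Set.mem_Iic] at hb ⊢
  linarith

theorem thickening_Ici_subset (η a : ℝ) : thickening η (Set.Ici a) ⊆ Set.Ici (a - η) := by
  intro x hx
  obtain ⟨b, hb, hxb⟩ := mem_thickening_iff.mp hx
  rw [Real.dist_eq, abs_lt] at hxb
  rw [Set.mem_Ici] at hb ⊢
  linarith

theorem thickening_Ico_subset (η a b : ℝ) :
    thickening η (Set.Ico a b) ⊆ Set.Icc (a - η) (b + η) := fun _ hx ↦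
  ⟨thickening_Ici_subset η a (thickening_subset_of_subset η Set.Ico_subset_Ici_self hx),
    thickening_Iic_subset η b (thickening_subset_of_subset η
      (Set.Ico_subset_Iio_self.trans Set.Iio_subset_Iic_self) hx)⟩

theorem boundaryShell_Iic_subset (η a : ℝ) :
    boundaryShell η (Set.Iic a) ⊆ Set.Icc (a - η) (a + η) := fun _ hx ↦
  ⟨thickening_Ici_subset η a (thickening_subset_of_subset η
    (Set.compl_Iic (a := a) ▸ Set.Ioi_subset_Ici_self) hx.2), thickening_Iic_subset η a hx.1⟩

theorem boundaryShell_Ico_subset (η a b : ℝ) :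
    boundaryShell η (Set.Ico a b) ⊆ Set.Icc (a - η) (a + η) ∪ Set.Icc (b - η) (b + η) := by
  rintro x ⟨hx, hx'⟩
  obtain ⟨hxa, hxb⟩ := thickening_Ico_subset η a b hx
  have hcompl : (Set.Ico a b)ᶜ ⊆ Set.Iic a ∪ Set.Ici b := by
    intro y hy
    by_contra! hcon
    simp only [Set.mem_union, Set.mem_Iic, Set.mem_Ici, not_or, not_le] at hcon
    exact hy ⟨hcon.1.le, hcon.2⟩
  rcases thickening_union η (Set.Iic a) (Set.Ici b) ▸ thickening_subset_of_subset η hcompl hx'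
    with hx' | hx'
  · exact .inl ⟨hxa, thickening_Iic_subset η a hx'⟩
  · exact .inr ⟨thickening_Ici_subset η b hx', hxb⟩

theorem abs_log_sub_log_le {a b δ : ℝ} (hδ : 0 < δ) (ha : δ ≤ a) (hb : δ ≤ b) :
    |Real.log a - Real.log b| ≤ |a - b| / δ := by
  have log_sub_le {a b : ℝ} (ha : δ ≤ a) (hb : δ ≤ b) :
      Real.log a - Real.log b ≤ |a - b| / δ := by
    have ha0 := hδ.trans_le ha
    have hb0 := hδ.trans_le hb
    calc Real.log a - Real.log b = Real.log (a / b) := (Real.log_div ha0.ne' hb0.ne').symm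
      _ ≤ a / b - 1 := Real.log_le_sub_one_of_pos (div_pos ha0 hb0)
      _ = (a - b) / b := div_sub_one hb0.ne'
      _ ≤ |a - b| / b := by gcongr; exact le_abs_self _
      _ ≤ |a - b| / δ := by gcongr
  exact abs_sub_le_iff.mpr ⟨log_sub_le ha hb, abs_sub_comm a b ▸ log_sub_le hb ha⟩

end BoxMeasure

section NormLeOneShell

open MeasureTheory Metric ENNReal NNReal NumberField.InfinitePlace NumberField.mixedEmbedding
  NumberField.mixedEmbedding.fundamentalCone NumberField.Units
  NumberField.Units.dirichletUnitTheorem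

variable (K : Type*) [Field K]

variable {K} in
theorem mem_convexBodyLT_of_normAtPlace_lt {f : InfinitePlace K → ℝ≥0} {x : mixedSpace K}
    (hx : ∀ w, normAtPlace w x < f w) : x ∈ convexBodyLT K f :=
  ⟨fun w _ ↦ by simpa [normAtPlace_apply_of_isReal w.2] using hx w,
    fun w _ ↦ by simpa [normAtPlace_apply_of_isComplex w.2] using hx w⟩

variable {K} in
theorem mult_le_two (w : InfinitePlace K) : mult w ≤ 2 := by
  unfold mult
  split_ifs <;> norm_num

variable [NumberField K]

open scoped Classical in
/-- The measure on the `w`-th axis of the parameter space of `expMapBasis`: the Jacobian of the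
parametrisation depends on the coordinate at `w₀` only, exponentially. -/
def paramMeasure (w : InfinitePlace K) : Measure ℝ :=
  if w = w₀ then volume.withDensity fun x ↦ .ofReal (Real.exp (x * Module.finrank ℚ K)) else volume

open scoped Classical in
theorem exists_volume_preimage_expMapBasis_univ_pi_le : ∃ C : ℝ≥0, ∀ t : InfinitePlace K → Set ℝ,
    (∀ w, MeasurableSet (t w)) →
    volume (normAtAllPlaces ⁻¹' (expMapBasis '' Set.univ.pi t)) ≤
      C * ∏ w, paramMeasure K w (t w) := by
  refine ⟨2 ^ nrRealPlaces K * (2 * Real.pi).toNNReal ^ nrComplexPlaces K *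
    (2⁻¹ ^ nrComplexPlaces K * (regulator K).toNNReal * Module.finrank ℚ K), fun t ht ↦ ?_⟩
  have hpi : MeasurableSet (Set.univ.pi t) := .univ_pi ht
  have hmeas : MeasurableSet (normAtAllPlaces ⁻¹' (expMapBasis '' Set.univ.pi t)) :=
    (continuous_normAtAllPlaces K).measurable <|
      hpi.image_of_continuousOn_injOn (continuous_expMapBasis K).continuousOn
        (injective_expMapBasis K).injOn
  have hprod : ∏ w, paramMeasure K w (t w) =
      (∫⁻ y in t w₀, .ofReal (Real.exp (y * Module.finrank ℚ K))) *
        ∏ w ∈ Finset.univ.erase w₀, volume (t w) := by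
    rw [← Finset.mul_prod_erase _ _ (Finset.mem_univ w₀), paramMeasure, if_pos rfl,
      withDensity_apply _ (ht _)]
    congr 1
    exact Finset.prod_congr rfl fun w hw ↦ by rw [paramMeasure, if_neg (Finset.ne_of_mem_erase hw)]
  rw [volume_eq_two_pow_mul_two_pi_pow_mul_integral Set.preimage_image_preimage hmeas,
    normAtAllPlaces_image_preimage_expMapBasis, setLIntegral_expMapBasis_image hpi (by fun_prop),
    hprod, ← setLIntegral_univ_pi_eval w₀
      (f := fun x ↦ .ofReal (Real.exp (x * Module.finrank ℚ K))) (by fun_prop) t]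
  simp_rw [ENNReal.inv_mul_cancel_right
    (Finset.prod_ne_zero_iff.mpr fun _ _ ↦ ENNReal.ofReal_ne_zero_iff.mpr (expMapBasis_pos _ _))
    (ENNReal.prod_ne_top fun _ _ ↦ ENNReal.ofReal_ne_top)]
  rw [← mul_assoc]
  push_cast
  rfl

theorem paramMeasure_Icc_le (w : InfinitePlace K) {a b : ℝ} (hb : b ≤ 2) :
    paramMeasure K w (Set.Icc a b) ≤
      .ofReal (Real.exp (2 * Module.finrank ℚ K)) * .ofReal (b - a) := by
  rw [paramMeasure]
  split_ifs
  · rw [withDensity_apply _ measurableSet_Icc, ← Real.volume_Icc, ← setLIntegral_const]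
    refine setLIntegral_mono measurable_const fun x hx ↦ ?_
    gcongr
    exact hx.2.trans hb
  · rw [Real.volume_Icc]
    exact le_mul_of_one_le_left zero_le (by simp [ENNReal.one_le_ofReal])

theorem paramMeasure_w₀_Iic_ne_top (a : ℝ) : paramMeasure K w₀ (Set.Iic a) ≠ ⊤ := by
  have hn : 0 < (Module.finrank ℚ K : ℝ) := Nat.cast_pos.mpr Module.finrank_pos
  rw [paramMeasure, if_pos rfl, withDensity_apply _ measurableSet_Iic]
  simp_rw [mul_comm _ (Module.finrank ℚ K : ℝ)]
  exact (integrableOn_exp_mul_Iic hn a).lintegral_lt_top.ne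

open scoped Classical in
/-- The factors of the box `paramSet K`. -/
def paramInterval (w : InfinitePlace K) : Set ℝ := if w = w₀ then Set.Iic 0 else Set.Ico 0 1

theorem exists_paramMeasure_thickening_paramInterval_le : ∃ A : ℝ≥0, ∀ w, ∀ η ≤ 1,
    paramMeasure K w (thickening η (paramInterval K w)) ≤ A := by
  refine ⟨(paramMeasure K w₀ (Set.Iic 1)).toNNReal +
    (Real.exp (2 * Module.finrank ℚ K)).toNNReal * 3, fun w η hη ↦ ?_⟩
  refine (measure_mono (thickening_mono hη _)).trans ?_
  rw [ENNReal.coe_add, ENNReal.coe_toNNReal (paramMeasure_w₀_Iic_ne_top K 1), paramInterval]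
  split_ifs with hw
  · subst hw
    refine le_add_right (measure_mono ?_)
    simpa using thickening_Iic_subset 1 0
  · refine le_add_left ((measure_mono (thickening_Ico_subset 1 0 1)).trans ?_)
    refine (paramMeasure_Icc_le K w (by norm_num)).trans_eq ?_
    norm_num [ENNReal.ofReal]

theorem exists_paramMeasure_boundaryShell_paramInterval_le : ∃ A : ℝ≥0, ∀ w, ∀ η ≤ 1,
    paramMeasure K w (boundaryShell η (paramInterval K w)) ≤ A * .ofReal η := by
  set A := Real.exp (2 * Module.finrank ℚ K)
  have hIcc (w : InfinitePlace K) {η : ℝ} (hη : η ≤ 1) {a : ℝ} (ha : a ≤ 1) :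
      paramMeasure K w (Set.Icc (a - η) (a + η)) ≤ .ofReal A * 2 * .ofReal η := by
    refine (paramMeasure_Icc_le K w (by linarith)).trans_eq ?_
    rw [mul_assoc, ← ENNReal.ofReal_ofNat 2, ← ENNReal.ofReal_mul zero_le_two,
      show a + η - (a - η) = 2 * η by ring]
  refine ⟨A.toNNReal * 2 + A.toNNReal * 2, fun w η hη ↦ ?_⟩
  push_cast
  rw [add_mul, paramInterval]
  split_ifs
  · exact le_add_right ((measure_mono (boundaryShell_Iic_subset η 0)).trans
      (hIcc w hη zero_le_one))
  · refine (measure_mono (boundaryShell_Ico_subset η 0 1)).trans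
      ((measure_union_le _ _).trans ?_)
    exact add_le_add (hIcc w hη zero_le_one) (hIcc w hη le_rfl)

theorem measurableSet_boundaryShell {X : Type*} [PseudoEMetricSpace X] [MeasurableSpace X]
    [OpensMeasurableSpace X] (c : ℝ) (S : Set X) : MeasurableSet (boundaryShell c S) :=
  (isOpen_thickening.inter isOpen_thickening).measurableSet

open scoped Classical in
theorem exists_volume_preimage_boundaryShell_paramSet_le : ∃ C : ℝ≥0, ∀ η ≤ 1,
    volume (normAtAllPlaces ⁻¹' (expMapBasis '' boundaryShell η (paramSet K))) ≤
      C * .ofReal η := by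
  obtain ⟨C, hC⟩ := exists_volume_preimage_expMapBasis_univ_pi_le K
  obtain ⟨A, hA⟩ := exists_paramMeasure_thickening_paramInterval_le K
  obtain ⟨B, hB⟩ := exists_paramMeasure_boundaryShell_paramInterval_le K
  refine ⟨Fintype.card (InfinitePlace K) * (C * (A + B) ^ Fintype.card (InfinitePlace K)),
    fun η hη ↦ ?_⟩
  let box (v : InfinitePlace K) : InfinitePlace K → Set ℝ := Function.update
    (fun w ↦ thickening η (paramInterval K w)) v (boundaryShell η (paramInterval K v))
  have hbox (v w : InfinitePlace K) : MeasurableSet (box v w) := by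
    obtain rfl | hw := eq_or_ne w v
    · simpa [box] using measurableSet_boundaryShell η _
    · simpa [box, hw] using isOpen_thickening.measurableSet
  have hvol (v : InfinitePlace K) :
      volume (normAtAllPlaces ⁻¹' (expMapBasis '' Set.univ.pi (box v))) ≤
        C * ((A + B) ^ Fintype.card (InfinitePlace K) * .ofReal η) := by
    refine (hC _ (hbox v)).trans ?_
    gcongr
    refine prod_le_pow_card_mul v ?_ fun w hw ↦ ?_
    · rw [show box v v = _ from Function.update_self v _ _]
      refine (hB v η hη).trans ?_
      gcongr
      exact le_add_self
    · rw [show box v w = _ from Function.update_of_ne hw _ _]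
      exact (hA w η hη).trans le_self_add
  calc _ ≤ volume (⋃ v, normAtAllPlaces ⁻¹' (expMapBasis '' Set.univ.pi (box v))) := by
        rw [← Set.preimage_iUnion, ← Set.image_iUnion]
        gcongr
        exact boundaryShell_univ_pi_subset η (paramInterval K)
    _ ≤ ∑ v, volume (normAtAllPlaces ⁻¹' (expMapBasis '' Set.univ.pi (box v))) :=
        measure_iUnion_fintype_le _ _
    _ ≤ ∑ _v : InfinitePlace K,
        (C * ((A + B) ^ Fintype.card (InfinitePlace K) * .ofReal η) : ℝ≥0∞) :=
        Finset.sum_le_sum fun v _ ↦ hvol v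
    _ = _ := by
        rw [Finset.sum_const, Finset.card_univ, nsmul_eq_mul]
        push_cast
        ring

open scoped Classical in
theorem normAtPlace_le_norm (w : InfinitePlace K) (x : mixedSpace K) : normAtPlace w x ≤ ‖x‖ := by
  rw [norm_eq_sup'_normAtPlace]
  exact Finset.le_sup' (fun w ↦ normAtPlace w x) (Finset.mem_univ w)

open scoped Classical in
theorem abs_normAtPlace_sub_le_dist (w : InfinitePlace K) (x y : mixedSpace K) :
    |normAtPlace w x - normAtPlace w y| ≤ dist x y := by
  have sub_le (x y : mixedSpace K) : normAtPlace w x - normAtPlace w y ≤ dist x y := by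
    have htri := normAtPlace_add_le w (x - y) y
    rw [sub_add_cancel] at htri
    rw [dist_eq_norm]
    linarith [normAtPlace_le_norm K w (x - y)]
  exact abs_sub_le_iff.mpr ⟨sub_le x y, dist_comm x y ▸ sub_le y x⟩

open scoped Classical in
theorem exists_volume_smallCoord_le {R : ℝ} (hR : 1 ≤ R) : ∃ C : ℝ≥0, ∀ η ≤ 1,
    volume {y : mixedSpace K | (∃ w, normAtPlace w y < η) ∧ ∀ w, normAtPlace w y < R} ≤
      C * .ofReal η := by
  let A : ℝ≥0 := R.toNNReal ^ 2
  refine ⟨Fintype.card (InfinitePlace K) * (convexBodyLTFactor K *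
    A ^ Fintype.card (InfinitePlace K)), fun η hη ↦ ?_⟩
  let side (v : InfinitePlace K) : InfinitePlace K → ℝ≥0 :=
    Function.update (fun _ ↦ R.toNNReal) v η.toNNReal
  have hvol (v : InfinitePlace K) : volume (convexBodyLT K (side v)) ≤
      convexBodyLTFactor K * (A ^ Fintype.card (InfinitePlace K) * .ofReal η) := by
    rw [convexBodyLT_volume, ENNReal.ofNNReal_finsetProd]
    gcongr
    refine prod_le_pow_card_mul v ?_ fun w hw ↦ ?_
    · refine (?_ : _ ≤ ENNReal.ofReal η).trans (le_mul_of_one_le_left zero_le ?_)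
      · rw [show side v v = _ from Function.update_self v _ _, ENNReal.coe_pow]
        exact pow_le_of_le_one zero_le (by simpa using hη) mult_ne_zero
      · exact_mod_cast one_le_pow₀ (Real.one_le_toNNReal.mpr hR)
    · rw [show side v w = _ from Function.update_of_ne hw _ _]
      exact_mod_cast pow_le_pow_right₀ (Real.one_le_toNNReal.mpr hR) (mult_le_two w)
  have hsub : {y : mixedSpace K | (∃ w, normAtPlace w y < η) ∧ ∀ w, normAtPlace w y < R} ⊆
      ⋃ v, convexBodyLT K (side v) := by
    rintro y ⟨⟨v, hv⟩, hy⟩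
    refine Set.mem_iUnion.mpr ⟨v, mem_convexBodyLT_of_normAtPlace_lt fun w ↦ ?_⟩
    obtain rfl | hw := eq_or_ne w v
    · simpa [side] using .inl hv
    · simpa [side, hw] using .inl (hy w)
  calc _ ≤ volume (⋃ v, convexBodyLT K (side v)) := measure_mono hsub
    _ ≤ ∑ v, volume (convexBodyLT K (side v)) := measure_iUnion_fintype_le _ _
    _ ≤ ∑ _v : InfinitePlace K, (convexBodyLTFactor K *
        (A ^ Fintype.card (InfinitePlace K) * .ofReal η) : ℝ≥0∞) :=
        Finset.sum_le_sum fun v _ ↦ hvol v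
    _ = _ := by
        rw [Finset.sum_const, Finset.card_univ, nsmul_eq_mul]
        push_cast
        ring

open scoped Classical in
theorem exists_dist_expMapBasis_symm_lt : ∃ C : ℝ, 1 ≤ C ∧ ∀ {η : ℝ} {u y : mixedSpace K},
    0 < η → (∀ w, η ≤ normAtPlace w u) → (∀ w, η ≤ normAtPlace w y) → dist u y < η ^ 2 →
    dist (expMapBasis.symm (normAtAllPlaces y)) (expMapBasis.symm (normAtAllPlaces u)) <
      C * η := by
  let T : realSpace K →L[ℝ] realSpace K := (completeBasis K).equivFunL
  refine ⟨‖T‖ * 2 + 1, by linarith [norm_nonneg T], fun {η u y} hη hu hy huy ↦ ?_⟩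
  have hlog (w : InfinitePlace K) :
      |Real.log (normAtPlace w y) - Real.log (normAtPlace w u)| ≤ η := by
    refine (abs_log_sub_log_le hη (hy w) (hu w)).trans ((div_le_iff₀ hη).mpr ?_)
    rw [← sq]
    exact (abs_normAtPlace_sub_le_dist K w y u).trans (dist_comm u y ▸ huy.le)
  have hexp : ‖expMap.symm (normAtAllPlaces y) - expMap.symm (normAtAllPlaces u)‖ ≤ 2 * η := by
    refine (pi_norm_le_iff_of_nonneg (by positivity)).mpr fun w ↦ ?_
    rw [Pi.sub_apply, expMap_symm_apply, expMap_symm_apply, ← mul_sub, norm_mul]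
    gcongr
    · simpa using mult_le_two w
    · exact hlog w
  calc dist (expMapBasis.symm (normAtAllPlaces y)) (expMapBasis.symm (normAtAllPlaces u))
      = ‖T (expMap.symm (normAtAllPlaces y) - expMap.symm (normAtAllPlaces u))‖ := by
        rw [map_sub, dist_eq_norm]
        rfl
    _ ≤ ‖T‖ * (2 * η) := (T.le_opNorm _).trans (by gcongr)
    _ < (‖T‖ * 2 + 1) * η := by linarith

variable {K} in
theorem mem_normLeOne_iff_expMapBasis_symm_mem {u : mixedSpace K}
    (hu : ∀ w, 0 < normAtPlace w u) :
    u ∈ normLeOne K ↔ expMapBasis.symm (normAtAllPlaces u) ∈ paramSet K := by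
  have hu : normAtAllPlaces u ∈ expMapBasis.target := Set.mem_univ_pi.mpr hu
  rw [normLeOne_eq_preimage, Set.mem_preimage,
    ← (injective_expMapBasis K).mem_set_image (a := expMapBasis.symm _), expMapBasis.right_inv hu]

open scoped Classical in
/-- In logarithmic coordinates the norm form becomes linear and `normLeOne K` a box, at the price
of distorting the regions where a coordinate is smaller than about `η`; these have volume `O(η)`. -/
theorem exists_boundaryShell_normLeOne_subset : ∃ C R : ℝ, 1 ≤ C ∧ 1 ≤ R ∧ ∀ η > 0, η ≤ 1 →
    boundaryShell (η ^ 2) (normLeOne K) ⊆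
      {y | (∃ w, normAtPlace w y < 2 * η) ∧ ∀ w, normAtPlace w y < R} ∪
      normAtAllPlaces ⁻¹' (expMapBasis '' boundaryShell (C * η) (paramSet K)) := by
  obtain ⟨R, hR0, hR⟩ := (isBounded_normLeOne K).exists_pos_norm_le
  obtain ⟨C, hC1, hC⟩ := exists_dist_expMapBasis_symm_lt K
  refine ⟨C, R + 2, hC1, by linarith, fun η hη hη1 y ⟨hy, hy'⟩ ↦ ?_⟩
  obtain ⟨u, hu, hyu⟩ := mem_thickening_iff.mp hy
  obtain ⟨v, hv, hyv⟩ := mem_thickening_iff.mp hy'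
  by_cases hsmall : ∃ w, normAtPlace w y < 2 * η
  · refine .inl ⟨hsmall, fun w ↦ ?_⟩
    have hdist := abs_le.mp ((abs_normAtPlace_sub_le_dist K w y u).trans hyu.le)
    nlinarith [(normAtPlace_le_norm K w u).trans (hR u hu)]
  · right
    push Not at hsmall
    have hlarge {z : mixedSpace K} (hz : dist y z < η ^ 2) (w : InfinitePlace K) :
        η ≤ normAtPlace w z := by
      have hdist := abs_le.mp ((abs_normAtPlace_sub_le_dist K w y z).trans hz.le)
      nlinarith [hsmall w]
    have hclose {z : mixedSpace K} (hz : dist y z < η ^ 2) :=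
      hC hη (hlarge hz) (fun w ↦ (by linarith [hsmall w])) (dist_comm y z ▸ hz)
    have hpos {z : mixedSpace K} (hz : dist y z < η ^ 2) (w : InfinitePlace K) :
        0 < normAtPlace w z := hη.trans_le (hlarge hz w)
    refine ⟨expMapBasis.symm (normAtAllPlaces y), ⟨?_, ?_⟩,
      expMapBasis.right_inv (Set.mem_univ_pi.mpr fun w ↦
        (mul_pos two_pos hη).trans_le (hsmall w))⟩
    · exact mem_thickening_iff.mpr
        ⟨_, (mem_normLeOne_iff_expMapBasis_symm_mem (hpos hyu)).mp hu, hclose hyu⟩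
    · exact mem_thickening_iff.mpr
        ⟨_, (mem_normLeOne_iff_expMapBasis_symm_mem (hpos hyv)).not.mp hv, hclose hyv⟩

open scoped Classical in
theorem isBigO_volume_boundaryShell_normLeOne :
    (fun ε ↦ volume.real (boundaryShell ε (normLeOne K))) =O[𝓝[>] 0] Real.sqrt := by
  obtain ⟨T, R, hT, hR, hsub⟩ := exists_boundaryShell_normLeOne_subset K
  obtain ⟨C₁, hC₁⟩ := exists_volume_smallCoord_le K hR
  obtain ⟨C₂, hC₂⟩ := exists_volume_preimage_boundaryShell_paramSet_le K
  refine .of_bound (C₁ * 2 + C₂ * T) ?_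
  have hT2 : 0 < (1 / (2 * T)) ^ 2 := by positivity
  filter_upwards [Ioc_mem_nhdsGT hT2] with ε ⟨hε, hεT⟩
  obtain ⟨η, hη, rfl⟩ : ∃ η > 0, ε = η ^ 2 := ⟨√ε, Real.sqrt_pos.mpr hε, (Real.sq_sqrt hε.le).symm⟩
  have hηT : T * η ≤ 1 / 2 := by
    have := (pow_le_pow_iff_left₀ hη.le (by positivity) two_ne_zero).mp hεT
    rw [le_div_iff₀ (by positivity)] at this
    linarith
  have hη2 : 2 * η ≤ 1 := by nlinarith
  rw [Real.norm_of_nonneg measureReal_nonneg, Real.sqrt_sq hη.le, Real.norm_of_nonneg hη.le]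
  refine ENNReal.toReal_le_of_le_ofReal (by positivity) ?_
  calc volume (boundaryShell (η ^ 2) (normLeOne K))
      ≤ _ := measure_mono (hsub η hη (by linarith))
    _ ≤ _ := measure_union_le _ _
    _ ≤ C₁ * .ofReal (2 * η) + C₂ * .ofReal (T * η) :=
        add_le_add (hC₁ _ hη2) (hC₂ _ (by linarith))
    _ = .ofReal ((C₁ * 2 + C₂ * T) * η) := by
        rw [add_mul, mul_assoc, mul_assoc, ENNReal.ofReal_add (by positivity) (by positivity),
          ENNReal.ofReal_mul C₁.coe_nonneg, ENNReal.ofReal_mul C₂.coe_nonneg]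
        simp only [ENNReal.ofReal_coe_nnreal]

end NormLeOneShell

/-! ## Counting ideals -/

section IdealCount

open MeasureTheory NumberField.mixedEmbedding NumberField.mixedEmbedding.fundamentalCone
  NumberField.Units
open scoped nonZeroDivisors Pointwise

theorem isBigO_ncard_smul_mul_covolume_sub {E : Type*} [NormedAddCommGroup E] [NormedSpace ℝ E]
    [FiniteDimensional ℝ E] [MeasurableSpace E] [BorelSpace E] {μ : Measure E}
    [μ.IsAddHaarMeasure] (L : Submodule ℤ E) [DiscreteTopology L] [IsZLattice ℝ L] {S : Set E}
    (hS : Bornology.IsBounded S) (hSm : MeasurableSet S)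
    (hshell : (fun ε ↦ μ.real (boundaryShell ε S)) =O[𝓝[>] 0] Real.sqrt) :
    (fun t : ℝ ↦ {l : L | (l : E) ∈ t • S}.ncard * ZLattice.covolume L μ -
      t ^ Module.finrank ℝ E * μ.real S) =O[atTop]
      fun t ↦ t ^ Module.finrank ℝ E * √t⁻¹ := by
  obtain ⟨c, hc, hcount⟩ := exists_abs_ncard_mul_covolume_sub_le μ L
  have hdiv : Tendsto (fun t : ℝ ↦ c / t) atTop (𝓝[>] 0) := by
    refine tendsto_nhdsWithin_iff.mpr ⟨tendsto_const_nhds.div_atTop tendsto_id, ?_⟩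
    filter_upwards [eventually_gt_atTop 0] with t ht using div_pos hc ht
  have hreal (t : ℝ) (ht : 0 < t) (A : Set E) :
      μ.real (t • A) = t ^ Module.finrank ℝ E * μ.real A := by
    rw [Measure.real, Measure.addHaar_smul, ENNReal.toReal_mul,
      ENNReal.toReal_ofReal (abs_nonneg _), abs_of_pos (pow_pos ht _), Measure.real]
  calc (fun t : ℝ ↦ {l : L | (l : E) ∈ t • S}.ncard * ZLattice.covolume L μ -
        t ^ Module.finrank ℝ E * μ.real S)
      =O[atTop] fun t ↦ t ^ Module.finrank ℝ E * μ.real (boundaryShell (c / t) S) := by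
        refine .of_bound' ?_
        filter_upwards [eventually_gt_atTop 0] with t ht
        rw [← hreal t ht, ← hreal t ht, ← boundaryShell_smul ht,
          Real.norm_of_nonneg measureReal_nonneg]
        exact hcount _ (hS.smul₀ t) (hSm.const_smul₀ t).nullMeasurableSet
    _ =O[atTop] fun t ↦ t ^ Module.finrank ℝ E * √(c / t) :=
        (isBigO_refl _ _).mul (hshell.comp_tendsto hdiv)
    _ =O[atTop] fun t ↦ t ^ Module.finrank ℝ E * √t⁻¹ := by
        refine (isBigO_refl _ _).mul (.of_bound (√c) (.of_forall fun t ↦ ?_))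
        rw [div_eq_mul_inv, Real.sqrt_mul hc.le, norm_mul, Real.norm_of_nonneg (Real.sqrt_nonneg c)]

variable (K : Type*) [Field K] [NumberField K]

variable {K} in
theorem ncard_class_eq_card_isPrincipal {C : ClassGroup (𝓞 K)} {J : (Ideal (𝓞 K))⁰}
    (hJ : ClassGroup.mk0 J = C⁻¹) (s : ℝ) :
    {I : (Ideal (𝓞 K))⁰ | Ideal.absNorm I.1 ≤ s ∧ ClassGroup.mk0 I = C}.ncard =
      Nat.card {I : (Ideal (𝓞 K))⁰ // J.1 ∣ I.1 ∧ I.1.IsPrincipal ∧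
        Ideal.absNorm I.1 ≤ s * Ideal.absNorm J.1} := by
  have hJpos : (0 : ℝ) < Ideal.absNorm J.1 :=
    Nat.cast_pos.mpr (Ideal.absNorm_pos_of_nonZeroDivisors J)
  have hmem (I : (Ideal (𝓞 K))⁰) : (Ideal.absNorm I.1 ≤ s ∧ ClassGroup.mk0 I = C) ↔
      (J * I).1.IsPrincipal ∧ (Ideal.absNorm (J * I).1 : ℝ) ≤ s * Ideal.absNorm J.1 := by
    rw [← ClassGroup.mk0_eq_one_iff (J * I).2, Subtype.coe_eta, map_mul, hJ, inv_mul_eq_one,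
      Submonoid.coe_mul, map_mul, Nat.cast_mul, mul_comm s, mul_le_mul_iff_right₀ hJpos,
      and_comm, eq_comm]
  rw [← Nat.card_coe_set_eq]
  refine Nat.card_eq_of_bijective (fun I ↦ ⟨J * I.1, dvd_mul_right _ _, (hmem I.1).mp I.2⟩)
    ⟨fun I I' h ↦ Subtype.ext (mul_left_cancel (congrArg Subtype.val h)), ?_⟩
  rintro ⟨I', ⟨I, hI⟩, hI'⟩
  have hI0 : I ∈ (Ideal (𝓞 K))⁰ :=
    mem_nonZeroDivisors_of_ne_zero (right_ne_zero_of_mul (hI ▸ nonZeroDivisors.coe_ne_zero I'))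
  have hmul : J * ⟨I, hI0⟩ = I' := Subtype.ext hI.symm
  exact ⟨⟨⟨I, hI0⟩, (hmem _).mpr (hmul ▸ hI')⟩, Subtype.ext hmul⟩

open scoped Classical in
variable {K} in
theorem mem_smul_normLeOne {t : ℝ} (ht : 0 < t) {x : mixedSpace K} :
    x ∈ t • normLeOne K ↔
      x ∈ fundamentalCone K ∧ mixedEmbedding.norm x ≤ t ^ Module.finrank ℚ K := by
  rw [Set.mem_smul_set_iff_inv_smul_mem₀ ht.ne', mem_normLeOne,
    smul_mem_iff_mem (inv_ne_zero ht.ne'), mixedEmbedding.norm_smul, abs_of_pos (inv_pos.mpr ht),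
    inv_pow, inv_mul_le_iff₀ (by positivity), mul_one]

open scoped Classical in
theorem ncard_idealLattice_smul_normLeOne (J : (Ideal (𝓞 K))⁰) {t : ℝ} (ht : 0 < t) :
    {l : idealLattice K (FractionalIdeal.mk0 K J) | (l : mixedSpace K) ∈ t • normLeOne K}.ncard =
      Nat.card {a : idealSet K J //
        mixedEmbedding.norm (a : mixedSpace K) ≤ t ^ Module.finrank ℚ K} := by
  rw [← Nat.card_coe_set_eq]
  exact Nat.card_congr
    { toFun l := ⟨⟨l.1, ((mem_smul_normLeOne ht).mp l.2).1, l.1.2⟩,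
        ((mem_smul_normLeOne ht).mp l.2).2⟩
      invFun a := ⟨⟨a.1, a.1.2.2⟩, (mem_smul_normLeOne ht).mpr ⟨a.1.2.1, a.2⟩⟩ }

theorem ncard_class_mul_torsionOrder {C : ClassGroup (𝓞 K)} {J : (Ideal (𝓞 K))⁰}
    (hJ : ClassGroup.mk0 J = C⁻¹) {s t : ℝ} (ht : 0 < t)
    (hts : t ^ Module.finrank ℚ K = s * Ideal.absNorm J.1) :
    {I : (Ideal (𝓞 K))⁰ | Ideal.absNorm I.1 ≤ s ∧ ClassGroup.mk0 I = C}.ncard * torsionOrder K =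
      {l : idealLattice K (FractionalIdeal.mk0 K J) |
        (l : mixedSpace K) ∈ t • normLeOne K}.ncard := by
  rw [ncard_class_eq_card_isPrincipal hJ, card_isPrincipal_dvd_norm_le,
    ncard_idealLattice_smul_normLeOne K J ht, hts]

theorem exists_isBigO_ncard_class_sub (C : ClassGroup (𝓞 K)) : ∃ c : ℝ,
    (fun s : ℝ ↦ {I : (Ideal (𝓞 K))⁰ | Ideal.absNorm I.1 ≤ s ∧ ClassGroup.mk0 I = C}.ncard -
      c * s) =O[atTop] fun s ↦ s ^ (1 - 1 / (2 * (Module.finrank ℚ K : ℝ))) := by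
  classical
  obtain ⟨J, hJ⟩ := ClassGroup.mk0_surjective C⁻¹
  have hn : (0 : ℝ) < Module.finrank ℚ K := Nat.cast_pos.mpr Module.finrank_pos
  have hJpos : (0 : ℝ) < Ideal.absNorm J.1 :=
    Nat.cast_pos.mpr (Ideal.absNorm_pos_of_nonZeroDivisors J)
  set L := idealLattice K (FractionalIdeal.mk0 K J)
  set w : ℝ := ((torsionOrder K : ℕ) : ℝ) with hw
  have hw0 : w ≠ 0 := Nat.cast_ne_zero.mpr (torsionOrder_pos K).ne'
  have hcov : ZLattice.covolume L ≠ 0 := ZLattice.covolume_ne_zero L volume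
  have hscale : Tendsto (fun s : ℝ ↦ (s * Ideal.absNorm J.1) ^ (1 / (Module.finrank ℚ K : ℝ)))
      atTop atTop :=
    (tendsto_rpow_atTop (by positivity)).comp (tendsto_id.atTop_mul_const hJpos)
  have hcount := (isBigO_ncard_smul_mul_covolume_sub L (isBounded_normLeOne K)
    (measurableSet_normLeOne K) (isBigO_volume_boundaryShell_normLeOne K)).comp_tendsto hscale
  simp only [Function.comp_def, mixedEmbedding.finrank] at hcount
  refine ⟨Ideal.absNorm J.1 * volume.real (normLeOne K) / (w * ZLattice.covolume L), ?_⟩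
  refine ((hcount.const_mul_left (w * ZLattice.covolume L)⁻¹).congr' ?_ ?_).trans
    ((isBigO_refl _ _).const_mul_left
      ((Ideal.absNorm J.1 : ℝ) ^ (1 - 1 / (2 * (Module.finrank ℚ K : ℝ)))))
  · filter_upwards [eventually_gt_atTop 0] with s hs
    have hts := Real.rpow_inv_natCast_pow (mul_pos hs hJpos).le (Module.finrank_pos (R := ℚ)
      (M := K)).ne'
    rw [← one_div] at hts
    rw [hts, ← ncard_class_mul_torsionOrder K hJ (by positivity) hts, Nat.cast_mul, ← hw]
    field_simp
  · filter_upwards [eventually_gt_atTop 0] with s hs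
    have hsJ := mul_pos hs hJpos
    rw [← Real.rpow_natCast, ← Real.rpow_mul hsJ.le, one_div_mul_cancel hn.ne', Real.sqrt_eq_rpow,
      ← Real.rpow_neg hsJ.le, ← Real.rpow_mul hsJ.le, ← Real.rpow_add hsJ, mul_comm,
      ← Real.mul_rpow hJpos.le hs.le]
    congr 1
    field_simp
    ring

/-- The number of nonzero ideals of `𝓞 K` of norm at most `s`. -/
def idealCount (s : ℝ) : ℕ := {I : (Ideal (𝓞 K))⁰ | Ideal.absNorm I.1 ≤ s}.ncard

theorem finite_setOf_absNorm_le (s : ℝ) : {I : (Ideal (𝓞 K))⁰ | Ideal.absNorm I.1 ≤ s}.Finite := by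
  refine Set.Finite.subset (Ideal.finite_setOfPred_absNorm_le₀ ⌊s⌋₊) fun I hI ↦ ?_
  exact Nat.le_floor hI

theorem idealCount_mono : Monotone (idealCount K) := fun _ t hst ↦
  Set.ncard_le_ncard (fun _ hI ↦ le_trans hI hst) (finite_setOf_absNorm_le K t)

theorem idealCount_of_lt_one {s : ℝ} (hs : s < 1) : idealCount K s = 0 := by
  rw [idealCount, Set.ncard_eq_zero (finite_setOf_absNorm_le K s), Set.eq_empty_iff_forall_notMem]
  intro I hI
  have : (1 : ℝ) ≤ Ideal.absNorm I.1 := Nat.one_le_cast.mpr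
    (Ideal.absNorm_pos_of_nonZeroDivisors I)
  exact absurd (this.trans hI) hs.not_ge

theorem idealCount_eq_sum_ncard_class (s : ℝ) : idealCount K s = ∑ C : ClassGroup (𝓞 K),
    {I : (Ideal (𝓞 K))⁰ | Ideal.absNorm I.1 ≤ s ∧ ClassGroup.mk0 I = C}.ncard := by
  have hfin (C : ClassGroup (𝓞 K)) :
      {I : (Ideal (𝓞 K))⁰ | Ideal.absNorm I.1 ≤ s ∧ ClassGroup.mk0 I = C}.Finite :=
    (finite_setOf_absNorm_le K s).subset fun _ hI ↦ hI.1
  rw [idealCount, ← finsum_eq_sum_of_fintype, ← Set.ncard_iUnion_of_finite hfin]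
  · congr 1
    ext I
    simp
  · exact fun C C' hne ↦ Set.disjoint_left.mpr fun I hI hI' ↦ hne (hI.2.symm.trans hI'.2)

theorem exists_isBigO_idealCount_sub : ∃ c : ℝ, (fun s : ℝ ↦ idealCount K s - c * s) =O[atTop]
    fun s ↦ s ^ (1 - 1 / (2 * (Module.finrank ℚ K : ℝ))) := by
  choose c hc using exists_isBigO_ncard_class_sub K
  refine ⟨∑ C, c C, (IsBigO.sum fun C (_ : C ∈ Finset.univ) ↦ hc C).congr_left fun s ↦ ?_⟩
  rw [idealCount_eq_sum_ncard_class, Nat.cast_sum, Finset.sum_mul, Finset.sum_apply,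
    Finset.sum_sub_distrib]

theorem tendsto_idealCount_div :
    Tendsto (fun s : ℝ ↦ idealCount K s / s) atTop (𝓝 (kappaK K)) := by
  have hκ : kappaK K = 2 ^ InfinitePlace.nrRealPlaces K *
      (2 * Real.pi) ^ InfinitePlace.nrComplexPlaces K * regulator K * classNumber K /
        (torsionOrder K * √|discr K|) := by
    simp only [kappaK]
    ring
  rw [hκ]
  exact NumberField.Ideal.tendsto_norm_le_div_atTop₀ K

theorem isBigO_idealCount_sub : (fun s : ℝ ↦ idealCount K s - kappaK K * s) =O[atTop]
    fun s ↦ s ^ (1 - 1 / (2 * (Module.finrank ℚ K : ℝ))) := by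
  obtain ⟨c, hc⟩ := exists_isBigO_idealCount_sub K
  have hn : (0 : ℝ) < Module.finrank ℚ K := Nat.cast_pos.mpr Module.finrank_pos
  have hpow : Tendsto (fun s : ℝ ↦ s ^ (1 - 1 / (2 * (Module.finrank ℚ K : ℝ))) / s) atTop
      (𝓝 0) := by
    refine (tendsto_rpow_neg_atTop (by positivity :
      0 < 1 / (2 * (Module.finrank ℚ K : ℝ)))).congr' ?_
    filter_upwards [eventually_gt_atTop 0] with s hs
    rw [← Real.rpow_sub_one hs.ne']
    ring_nf
  have hlim : Tendsto (fun s : ℝ ↦ idealCount K s / s) atTop (𝓝 c) := by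
    have hdiff := (hc.mul (isBigO_refl (fun s : ℝ ↦ s⁻¹) atTop)).trans_tendsto
      (by simpa only [div_eq_mul_inv] using hpow)
    have hadd := hdiff.add_const c
    rw [zero_add] at hadd
    refine hadd.congr' ?_
    filter_upwards [eventually_gt_atTop 0] with s hs
    field_simp
    ring
  rwa [tendsto_nhds_unique hlim (tendsto_idealCount_div K)] at hc

theorem kappaK_pos : 0 < kappaK K := by
  have hregulator := regulator_pos K
  have htorsion : 0 < torsionOrder K := torsionOrder_pos K
  have hclass : 0 < classNumber K := Fintype.card_pos
  have hdiscr : (0 : ℝ) < |(discr K : ℝ)| := abs_pos.mpr (Int.cast_ne_zero.mpr (discr_ne_zero K))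
  unfold kappaK
  positivity

theorem exists_abs_idealCount_sub_le : ∃ C > 0, ∀ s : ℝ, 0 < s →
    |idealCount K s - kappaK K * s| ≤ C * s ^ (1 - 1 / (2 * (Module.finrank ℚ K : ℝ))) := by
  obtain ⟨B, hB, hbound⟩ := (isBigO_idealCount_sub K).exists_pos
  obtain ⟨s₀, hs₀⟩ := eventually_atTop.mp hbound.bound
  have hn : (1 : ℝ) ≤ Module.finrank ℚ K := Nat.one_le_cast.mpr Module.finrank_pos
  have hδ : 1 / (2 * (Module.finrank ℚ K : ℝ)) ≤ 1 := by
    rw [div_le_one (by positivity)]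
    linarith
  have hδ0 : 0 ≤ 1 / (2 * (Module.finrank ℚ K : ℝ)) := by positivity
  have hκ := kappaK_pos K
  refine ⟨B + kappaK K * max s₀ 1 + idealCount K (max s₀ 1), by positivity, fun s hs ↦ ?_⟩
  have hpow : 0 ≤ s ^ (1 - 1 / (2 * (Module.finrank ℚ K : ℝ))) := by positivity
  rcases lt_or_ge s 1 with hs1 | hs1
  · have hle : s ≤ s ^ (1 - 1 / (2 * (Module.finrank ℚ K : ℝ))) :=
      Real.self_le_rpow_of_le_one hs.le hs1.le (by linarith)
    rw [idealCount_of_lt_one K hs1, Nat.cast_zero, zero_sub, abs_neg, abs_of_pos (by positivity)]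
    have hκ' : kappaK K ≤ kappaK K * max s₀ 1 := le_mul_of_one_le_right hκ.le (le_max_right _ _)
    gcongr
    linarith [Nat.cast_nonneg (α := ℝ) (idealCount K (max s₀ 1))]
  rcases le_total s (max s₀ 1) with hs2 | hs2
  · refine le_trans ?_ (le_mul_of_one_le_right (by positivity)
      (Real.one_le_rpow hs1 (by linarith)))
    have hcount : (idealCount K s : ℝ) ≤ idealCount K (max s₀ 1) :=
      Nat.cast_le.mpr (idealCount_mono K hs2)
    have hlin : kappaK K * s ≤ kappaK K * max s₀ 1 := by gcongr
    rw [abs_le]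
    constructor <;> linarith [mul_pos hκ hs, Nat.cast_nonneg (α := ℝ) (idealCount K s)]
  · have h := hs₀ s ((le_max_left _ _).trans hs2)
    rw [Real.norm_of_nonneg hpow] at h
    refine h.trans ?_
    gcongr
    nlinarith [Nat.cast_nonneg (α := ℝ) (idealCount K (max s₀ 1)), le_max_right s₀ 1]

end IdealCount

/-! ## Partial summation and the dilogarithm -/

section PartialSummation

variable {ι : Type*} {F : Finset ι} {w r : ι → ℝ} {g : ℝ → ℝ} {a b : ℝ}

theorem hasDerivWithinAt_sum_mul_min_sub {g' t : ℝ} (hg : HasDerivAt g g' t) :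
    HasDerivWithinAt (fun u ↦ ∑ i ∈ F, w i * (g (min (r i) u) - g u))
      (-(∑ i ∈ F with r i ≤ t, w i) * g') (Set.Ici t) t := by
  have hderiv : -(∑ i ∈ F with r i ≤ t, w i) * g' =
      ∑ i ∈ F, if r i ≤ t then w i * (0 - g') else 0 := by
    rw [← Finset.sum_filter, ← Finset.sum_mul]
    ring
  rw [hderiv]
  refine HasDerivWithinAt.fun_sum fun i _ ↦ ?_
  split_ifs with hi
  · refine (((hasDerivAt_const t (g (r i))).sub hg).const_mul (w i)).hasDerivWithinAt.congr
      (fun u hu ↦ ?_) ?_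
    · rw [min_eq_left (hi.trans hu), Pi.sub_apply]
    · rw [min_eq_left hi, Pi.sub_apply]
  · rw [not_le] at hi
    refine (hasDerivWithinAt_const t (Set.Ici t) (0 : ℝ)).congr_of_eventuallyEq ?_ ?_
    · filter_upwards [nhdsWithin_le_nhds (Iio_mem_nhds hi)] with u hu
      rw [min_eq_right (Set.mem_Iio.mp hu).le, sub_self, mul_zero]
    · rw [min_eq_right hi.le, sub_self, mul_zero]

theorem continuousOn_sum_mul_min_sub (hg : ContinuousOn g (Set.Icc a b))
    (hr : ∀ i ∈ F, a ≤ r i) :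
    ContinuousOn (fun u ↦ ∑ i ∈ F, w i * (g (min (r i) u) - g u)) (Set.Icc a b) := by
  refine continuousOn_finsetSum _ fun i hi ↦ continuousOn_const.mul (ContinuousOn.sub ?_ hg)
  exact hg.comp (by fun_prop) fun t ht ↦ ⟨le_min (hr i hi) ht.1, (min_le_right _ _).trans ht.2⟩

/-- Partial summation against a main term `M`. Here `Φ` is a primitive of `M' * g`, and `Ψ'`
bounds the integrand of the error term. -/
theorem abs_sum_mul_sub_le_of_hasDerivAt {M M' g' Φ Ψ Ψ' : ℝ → ℝ} (hab : a ≤ b)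
    (hr : ∀ i ∈ F, r i ∈ Set.Icc a b)
    (hM : ∀ t ∈ Set.Icc a b, HasDerivAt M (M' t) t)
    (hg : ∀ t ∈ Set.Icc a b, HasDerivAt g (g' t) t)
    (hΦ : ∀ t ∈ Set.Icc a b, HasDerivAt Φ (M' t * g t) t)
    (hΨ : ∀ t ∈ Set.Icc a b, HasDerivAt Ψ (Ψ' t) t)
    (hbound : ∀ t ∈ Set.Ico a b, |(∑ i ∈ F with r i ≤ t, w i - M t) * g' t| ≤ Ψ' t) :
    |∑ i ∈ F, w i * g (r i) - (∑ i ∈ F, w i) * g b + M b * g b - Φ b - (M a * g a - Φ a)|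
      ≤ Ψ b - Ψ a := by
  set H : ℝ → ℝ := fun t ↦ ∑ i ∈ F, w i * (g (min (r i) t) - g t) + M t * g t - Φ t with hH
  have hHa : H a = M a * g a - Φ a := by
    have hzero : ∑ i ∈ F, w i * (g (min (r i) a) - g a) = 0 :=
      Finset.sum_eq_zero fun i hi ↦ by rw [min_eq_right (hr i hi).1, sub_self, mul_zero]
    simp only [hH, hzero, zero_add]
  have hHb : H b = ∑ i ∈ F, w i * g (r i) - (∑ i ∈ F, w i) * g b + M b * g b - Φ b := by
    have hsum : ∑ i ∈ F, w i * (g (min (r i) b) - g b) =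
        ∑ i ∈ F, w i * g (r i) - (∑ i ∈ F, w i) * g b := by
      rw [Finset.sum_mul, ← Finset.sum_sub_distrib]
      exact Finset.sum_congr rfl fun i hi ↦ by rw [min_eq_left (hr i hi).2, mul_sub]
    simp only [hH, hsum]
  have hgc : ContinuousOn g (Set.Icc a b) := HasDerivAt.continuousOn hg
  have hcont : ContinuousOn (fun t ↦ H t - H a) (Set.Icc a b) :=
    (((continuousOn_sum_mul_min_sub hgc fun i hi ↦ (hr i hi).1).add
      ((HasDerivAt.continuousOn hM).mul hgc)).sub (HasDerivAt.continuousOn hΦ)).sub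
        continuousOn_const
  have hderiv (t : ℝ) (ht : t ∈ Set.Ico a b) : HasDerivWithinAt (fun t ↦ H t - H a)
      (-((∑ i ∈ F with r i ≤ t, w i - M t) * g' t)) (Set.Ici t) t := by
    have ht' := Set.Ico_subset_Icc_self ht
    refine ((((hasDerivWithinAt_sum_mul_min_sub (hg t ht')).add
      ((hM t ht').mul (hg t ht')).hasDerivWithinAt).sub
        (hΦ t ht').hasDerivWithinAt).sub_const (H a)).congr_deriv ?_
    ring
  rw [← hHb, ← hHa]
  exact image_norm_le_of_norm_deriv_right_le_deriv_boundary' hcont hderiv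
    (B := fun t ↦ Ψ t - Ψ a) (B' := Ψ') (by simp)
    ((HasDerivAt.continuousOn hΨ).sub continuousOn_const)
    (fun t ht ↦ ((hΨ t (Set.Ico_subset_Icc_self ht)).sub_const _).hasDerivWithinAt)
    (fun t ht ↦ by rw [norm_neg]; exact hbound t ht) ⟨hab, le_rfl⟩

end PartialSummation

section Dilogarithm

variable {x : ℝ}

/-- The dilogarithm on `[0, 1]`, as a power series. -/
def dilog (x : ℝ) : ℝ := ∑' n : ℕ, x ^ (n + 1) / ((n : ℝ) + 1) ^ 2

theorem summable_one_div_add_one_sq : Summable fun n : ℕ ↦ 1 / ((n : ℝ) + 1) ^ 2 := by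
  simpa using (summable_nat_add_iff 1).mpr (Real.summable_one_div_nat_pow.mpr one_lt_two)

theorem dilog_zero : dilog 0 = 0 := by simp [dilog]

theorem dilog_one : dilog 1 = Real.pi ^ 2 / 6 := by
  simpa [dilog] using ((hasSum_nat_add_iff' 1).mpr hasSum_zeta_two).tsum_eq

theorem continuousOn_dilog : ContinuousOn dilog (Set.Icc 0 1) := by
  refine continuousOn_tsum (fun n ↦ by fun_prop) summable_one_div_add_one_sq fun n x hx ↦ ?_
  rw [Real.norm_of_nonneg (div_nonneg (pow_nonneg hx.1 _) (by positivity))]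
  gcongr
  exact pow_le_one₀ hx.1 hx.2

theorem hasDerivAt_dilog (h0 : 0 < x) (h1 : x < 1) :
    HasDerivAt dilog (-Real.log (1 - x) / x) x := by
  obtain ⟨y, hxy, hy⟩ := exists_between h1
  have hy0 : 0 < y := h0.trans hxy
  have hterm (n : ℕ) (z : ℝ) :
      HasDerivAt (fun x ↦ x ^ (n + 1) / ((n : ℝ) + 1) ^ 2) (z ^ n / ((n : ℝ) + 1)) z := by
    refine ((hasDerivAt_pow (n + 1) z).div_const (((n : ℝ) + 1) ^ 2)).congr_deriv ?_
    push_cast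
    field_simp
  have hbound (n : ℕ) (z : ℝ) (hz : z ∈ Set.Ioo (-y) y) : ‖z ^ n / ((n : ℝ) + 1)‖ ≤ y ^ n := by
    rw [norm_div, norm_pow, Real.norm_of_nonneg (by positivity : (0 : ℝ) ≤ (n : ℝ) + 1)]
    refine (div_le_self (by positivity) (by linarith [Nat.cast_nonneg (α := ℝ) n])).trans ?_
    gcongr
    exact (abs_lt.mpr hz).le
  refine (hasDerivAt_tsum_of_isPreconnected (summable_geometric_of_lt_one hy0.le hy) isOpen_Ioo
    isPreconnected_Ioo (fun n z _ ↦ hterm n z) hbound (y₀ := 0) ⟨by linarith, hy0⟩ (by simp)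
    ⟨by linarith, hxy⟩).congr_deriv ?_
  rw [← ((Real.hasSum_pow_div_log_of_abs_lt_one
    (by rwa [abs_of_pos h0] : |x| < 1)).div_const x).tsum_eq]
  refine tsum_congr fun n ↦ ?_
  field_simp
  ring

theorem dilog_nonneg (h0 : 0 ≤ x) : 0 ≤ dilog x := tsum_nonneg fun n ↦ by positivity

theorem dilog_le (h0 : 0 ≤ x) (h1 : x ≤ 1) : dilog x ≤ Real.pi ^ 2 / 6 * x := by
  have hterm (n : ℕ) : x ^ (n + 1) / ((n : ℝ) + 1) ^ 2 ≤ 1 / ((n : ℝ) + 1) ^ 2 * x := by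
    rw [one_div_mul_eq_div]
    gcongr
    exact pow_le_of_le_one h0 h1 n.succ_ne_zero
  have hsummable := summable_one_div_add_one_sq.mul_right x
  rw [← dilog_one, dilog, dilog, ← tsum_mul_right]
  simp only [one_pow]
  exact (hsummable.of_nonneg_of_le (fun n ↦ by positivity) hterm).tsum_le_tsum hterm hsummable

theorem abs_log_one_sub_le (h0 : 0 ≤ x) (h1 : x ≤ 1 / 2) : |Real.log (1 - x)| ≤ 2 * x := by
  have hinv : (1 - x)⁻¹ ≤ 1 + 2 * x := by
    rw [inv_le_iff_one_le_mul₀ (by linarith)]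
    nlinarith
  rw [abs_of_nonpos (Real.log_nonpos (by linarith) (by linarith))]
  linarith [Real.one_sub_inv_le_log_of_pos (by linarith : 0 < 1 - x)]

theorem tendsto_log_mul_log_one_sub :
    Tendsto (fun x ↦ Real.log x * Real.log (1 - x)) (𝓝[>] 0) (𝓝 0) := by
  have hlog : Tendsto (fun x : ℝ ↦ Real.log x * x) (𝓝[>] 0) (𝓝 0) := by
    simpa using tendsto_log_mul_rpow_nhdsGT_zero (r := 1) one_pos
  refine squeeze_zero_norm' (a := fun x ↦ 2 * ‖Real.log x * x‖) ?_
    (by simpa using hlog.norm.const_mul 2)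
  filter_upwards [Ioo_mem_nhdsGT (one_half_pos (α := ℝ))] with x hx
  have hle := mul_le_mul_of_nonneg_left (abs_log_one_sub_le hx.1.le hx.2.le)
    (norm_nonneg (Real.log x))
  rw [norm_mul, norm_mul, Real.norm_of_nonneg hx.1.le]
  exact hle.trans_eq (by ring)

theorem hasDerivAt_dilog_add_dilog_one_sub (hx : x ∈ Set.Ioo (0 : ℝ) 1) :
    HasDerivAt (fun x ↦ dilog x + dilog (1 - x) + Real.log x * Real.log (1 - x)) 0 x := by
  have hx0 : x ≠ 0 := hx.1.ne'
  have hx1 : 1 - x ≠ 0 := (sub_pos.mpr hx.2).ne'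
  have hreflect := (hasDerivAt_dilog (sub_pos.mpr hx.2) (sub_lt_self 1 hx.1)).comp_const_sub 1 x
  have hlog := (Real.hasDerivAt_log hx0).mul ((Real.hasDerivAt_log hx1).comp_const_sub 1 x)
  refine (((hasDerivAt_dilog hx.1 hx.2).add hreflect).add hlog).congr_deriv ?_
  rw [sub_sub_cancel]
  field_simp
  ring

/-- Euler's reflection formula at its fixed point. -/
theorem two_mul_dilog_half_add_log_two_sq :
    2 * dilog (1 / 2) + Real.log 2 ^ 2 = Real.pi ^ 2 / 6 := by
  set f : ℝ → ℝ := fun x ↦ dilog x + dilog (1 - x) + Real.log x * Real.log (1 - x) with hf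
  have hconst (x : ℝ) (hx : x ∈ Set.Ioo (0 : ℝ) 1) : f x = f (1 / 2) :=
    isOpen_Ioo.is_const_of_deriv_eq_zero isPreconnected_Ioo
      (fun y hy ↦ (hasDerivAt_dilog_add_dilog_one_sub hy).differentiableAt.differentiableWithinAt)
      (fun y hy ↦ (hasDerivAt_dilog_add_dilog_one_sub hy).deriv) hx ⟨by norm_num, by norm_num⟩
  have hIcc : Set.Icc (0 : ℝ) 1 ∈ 𝓝[>] 0 := Icc_mem_nhdsGT zero_lt_one
  have hdilog : Tendsto dilog (𝓝[>] 0) (𝓝 (dilog 0)) :=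
    (continuousOn_dilog 0 (by simp)).mono_left (nhdsWithin_le_of_mem hIcc)
  have hdilog_sub : Tendsto (fun x ↦ dilog (1 - x)) (𝓝[>] 0) (𝓝 (dilog 1)) := by
    refine (continuousOn_dilog 1 (by simp)).tendsto.comp (tendsto_nhdsWithin_iff.mpr ⟨?_, ?_⟩)
    · simpa using ((continuous_sub_left (1 : ℝ)).tendsto 0).mono_left
        (nhdsWithin_le_nhds (s := Set.Ioi 0))
    · filter_upwards [hIcc] with x hx
      exact ⟨sub_nonneg.mpr hx.2, sub_le_self 1 hx.1⟩
  have hlim : Tendsto f (𝓝[>] 0) (𝓝 (f (1 / 2))) := by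
    refine tendsto_const_nhds.congr' ?_
    filter_upwards [Ioo_mem_nhdsGT (zero_lt_one (α := ℝ))] with x hx
    exact (hconst x hx).symm
  have heq := tendsto_nhds_unique hlim ((hdilog.add hdilog_sub).add tendsto_log_mul_log_one_sub)
  have hhalf : (1 : ℝ) - 2⁻¹ = 2⁻¹ := by norm_num
  simp only [hf, one_div, hhalf, dilog_zero, dilog_one, Real.log_inv] at heq
  rw [one_div]
  linarith

end Dilogarithm

/-! ## Beurling prime systems -/

section ExponentialShells

variable {ι : Type*} {F : Finset ι} {w r : ι → ℝ} {b : ℝ}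

theorem sum_mul_exp_neg_le_of_shell {δ : ℝ} (hδ : 0 < δ) (hw : ∀ i ∈ F, 0 ≤ w i)
    (hr : ∀ i ∈ F, 0 ≤ r i) (hshell : ∀ k : ℕ, ∑ i ∈ F with ⌊r i⌋₊ = k, w i ≤ b) :
    ∑ i ∈ F, w i * Real.exp (-δ * r i) ≤ b / (1 - Real.exp (-δ)) := by
  have hb : 0 ≤ b := (Finset.sum_nonneg fun i hi ↦ hw i (Finset.mem_filter.mp hi).1).trans
    (hshell 0)
  have hexp : Real.exp (-δ) < 1 := Real.exp_lt_one_iff.mpr (neg_lt_zero.mpr hδ)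
  have hshell' (k : ℕ) :
      ∑ i ∈ F with ⌊r i⌋₊ = k, w i * Real.exp (-δ * r i) ≤ b * Real.exp (-δ) ^ k := by
    refine le_trans ?_ (mul_le_mul_of_nonneg_right (hshell k) (by positivity))
    rw [Finset.sum_mul]
    refine Finset.sum_le_sum fun i hi ↦ ?_
    obtain ⟨hiF, rfl⟩ := Finset.mem_filter.mp hi
    have hfloor := Nat.floor_le (hr i hiF)
    rw [← Real.exp_nat_mul]
    refine mul_le_mul_of_nonneg_left (Real.exp_le_exp.mpr ?_) (hw i hiF)
    nlinarith
  calc ∑ i ∈ F, w i * Real.exp (-δ * r i)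
      = ∑ k ∈ F.image (⌊r ·⌋₊), ∑ i ∈ F with ⌊r i⌋₊ = k, w i * Real.exp (-δ * r i) :=
        (Finset.sum_fiberwise_of_maps_to (fun i hi ↦ Finset.mem_image_of_mem _ hi) _).symm
    _ ≤ ∑ k ∈ F.image (⌊r ·⌋₊), b * Real.exp (-δ) ^ k := Finset.sum_le_sum fun k _ ↦ hshell' k
    _ ≤ b * (1 - Real.exp (-δ))⁻¹ := by
        rw [← Finset.mul_sum, ← tsum_geometric_of_lt_one (Real.exp_nonneg _) hexp]
        gcongr
        exact (summable_geometric_of_lt_one (Real.exp_nonneg _) hexp).sum_le_tsum _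
          fun _ _ ↦ by positivity
    _ = b / (1 - Real.exp (-δ)) := (div_eq_mul_inv _ _).symm

theorem sum_shell_mul_exp_neg_le {t : ℝ} (hw : ∀ i ∈ F, 0 ≤ w i)
    (hcum : ∀ t, ∑ i ∈ F with r i ≤ t, w i ≤ b * Real.exp t) :
    ∑ i ∈ F with t ≤ r i ∧ r i ≤ t + 1, w i * Real.exp (-r i) ≤ b * Real.exp 1 := by
  calc ∑ i ∈ F with t ≤ r i ∧ r i ≤ t + 1, w i * Real.exp (-r i)
      ≤ ∑ i ∈ F with t ≤ r i ∧ r i ≤ t + 1, w i * Real.exp (-t) := by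
        refine Finset.sum_le_sum fun i hi ↦ ?_
        obtain ⟨hiF, ht, -⟩ := Finset.mem_filter.mp hi
        exact mul_le_mul_of_nonneg_left (Real.exp_le_exp.mpr (neg_le_neg ht)) (hw i hiF)
    _ ≤ (∑ i ∈ F with r i ≤ t + 1, w i) * Real.exp (-t) := by
        rw [← Finset.sum_mul]
        refine mul_le_mul_of_nonneg_right (Finset.sum_le_sum_of_subset_of_nonneg
          (Finset.monotone_filter_right _ fun i _ h ↦ h.2)
          fun i hi _ ↦ hw i (Finset.mem_filter.mp hi).1) (Real.exp_nonneg _)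
    _ ≤ b * Real.exp (t + 1) * Real.exp (-t) := by
        gcongr
        exact hcum _
    _ = b * Real.exp 1 := by
        rw [mul_assoc, ← Real.exp_add]
        ring_nf

theorem sum_mul_exp_neg_one_add_le {τ : ℝ} (hτ : 0 < τ) (hw : ∀ i ∈ F, 0 ≤ w i)
    (hr : ∀ i ∈ F, 0 ≤ r i) (hcum : ∀ t, ∑ i ∈ F with r i ≤ t, w i ≤ b * Real.exp t) :
    ∑ i ∈ F, w i * Real.exp (-(1 + τ) * r i) ≤ b * Real.exp 1 / (1 - Real.exp (-τ)) := by
  have hexp (i : ι) : w i * Real.exp (-(1 + τ) * r i) =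
      w i * Real.exp (-r i) * Real.exp (-τ * r i) := by
    rw [mul_assoc, ← Real.exp_add]
    ring_nf
  simp_rw [hexp]
  refine sum_mul_exp_neg_le_of_shell hτ
    (fun i hi ↦ mul_nonneg (hw i hi) (Real.exp_nonneg _)) hr fun k ↦ ?_
  refine (Finset.sum_le_sum_of_subset_of_nonneg (fun i hi ↦ ?_) fun i hi _ ↦
    mul_nonneg (hw i (Finset.mem_filter.mp hi).1) (Real.exp_nonneg _)).trans
    (sum_shell_mul_exp_neg_le (t := k) hw hcum)
  obtain ⟨hiF, rfl⟩ := Finset.mem_filter.mp hi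
  exact Finset.mem_filter.mpr
    ⟨hiF, Nat.floor_le (hr i hiF), (Nat.lt_floor_add_one _).le⟩

theorem sum_mul_exp_one_sub_mul_le {δ s : ℝ} (hδ : 0 < δ) (hw : ∀ i ∈ F, 0 ≤ w i)
    (hr : ∀ i ∈ F, r i ≤ s) (hcum : ∀ t, ∑ i ∈ F with r i ≤ t, w i ≤ b * Real.exp t) :
    ∑ i ∈ F, w i * Real.exp ((1 - δ) * (s - r i)) ≤
      b * Real.exp 1 / (1 - Real.exp (-δ)) * Real.exp s := by
  have hexp (i : ι) : w i * Real.exp ((1 - δ) * (s - r i)) =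
      w i * Real.exp (-r i) * Real.exp (-δ * (s - r i)) * Real.exp s := by
    rw [mul_assoc, mul_assoc, ← Real.exp_add, ← Real.exp_add]
    ring_nf
  simp_rw [hexp, ← Finset.sum_mul]
  refine mul_le_mul_of_nonneg_right (sum_mul_exp_neg_le_of_shell hδ
    (fun i hi ↦ mul_nonneg (hw i hi) (Real.exp_nonneg _))
    (fun i hi ↦ sub_nonneg.mpr (hr i hi)) fun k ↦ ?_) (Real.exp_nonneg _)
  refine (Finset.sum_le_sum_of_subset_of_nonneg (fun i hi ↦ ?_) fun i hi _ ↦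
    mul_nonneg (hw i (Finset.mem_filter.mp hi).1) (Real.exp_nonneg _)).trans
    (sum_shell_mul_exp_neg_le (t := s - k - 1) hw hcum)
  obtain ⟨hiF, rfl⟩ := Finset.mem_filter.mp hi
  have hlow := Nat.floor_le (sub_nonneg.mpr (hr i hiF))
  have hupp := Nat.lt_floor_add_one (s - r i)
  exact Finset.mem_filter.mpr ⟨hiF, by linarith, by linarith⟩

end ExponentialShells

/-- A system of Beurling generalised primes indexed by `P`. The generalised integers are the
exponent vectors `P →₀ ℕ`, and norms are recorded through their logarithms: those of the primes
by `logNorm`, those of the integers by `Finsupp.weight logNorm`. The number of integers of norm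
at most `x` is `κ x + O(x ^ (1 - δ))`, and the Chebyshev function of the primes is `O(x)`. -/
structure BeurlingPrimes (P : Type*) where
  logNorm : P → ℝ
  log_two_le_logNorm : ∀ p, Real.log 2 ≤ logNorm p
  finite_setOf_weight_le : ∀ s : ℝ, {f : P →₀ ℕ | Finsupp.weight logNorm f ≤ s}.Finite
  κ : ℝ
  κ_pos : 0 < κ
  δ : ℝ
  δ_pos : 0 < δ
  C : ℝ
  abs_ncard_sub_le : ∀ s : ℝ,
    |{f : P →₀ ℕ | Finsupp.weight logNorm f ≤ s}.ncard - κ * Real.exp s| ≤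
      C * Real.exp ((1 - δ) * s)
  B : ℝ
  sum_logNorm_le : ∀ (F : Finset P) (s : ℝ), (∀ p ∈ F, logNorm p ≤ s) →
    ∑ p ∈ F, logNorm p ≤ B * Real.exp s

namespace BeurlingPrimes

variable {P : Type*} (S : BeurlingPrimes P) {s t : ℝ} {f : P →₀ ℕ} {p : P}

/-- The logarithm of the norm of a generalised integer. -/
abbrev height : (P →₀ ℕ) →+ ℝ := Finsupp.weight S.logNorm

/-- The reciprocal of the norm of a generalised prime. -/
def invNorm (p : P) : ℝ := Real.exp (-S.logNorm p)

theorem invNorm_pos (p : P) : 0 < S.invNorm p := Real.exp_pos _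

theorem half_lt_logNorm (p : P) : 1 / 2 < S.logNorm p := by
  linarith [S.log_two_le_logNorm p, Real.log_two_gt_d9]

theorem logNorm_pos (p : P) : 0 < S.logNorm p := by
  linarith [S.half_lt_logNorm p]

theorem height_single (p : P) (k : ℕ) : S.height (Finsupp.single p k) = k * S.logNorm p := by
  rw [height, Finsupp.weight_single, nsmul_eq_mul]

theorem mul_logNorm_nonneg (k : ℕ) (p : P) : 0 ≤ k • S.logNorm p :=
  nsmul_nonneg (S.logNorm_pos p).le k

theorem height_nonneg (f : P →₀ ℕ) : 0 ≤ S.height f :=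
  Finset.sum_nonneg fun p _ ↦ S.mul_logNorm_nonneg (f p) p

theorem apply_mul_logNorm_le_height (f : P →₀ ℕ) (p : P) : f p * S.logNorm p ≤ S.height f := by
  by_cases hp : p ∈ f.support
  · rw [← nsmul_eq_mul]
    exact Finset.single_le_sum (fun q _ ↦ S.mul_logNorm_nonneg (f q) q) hp
  · rw [Finsupp.notMem_support_iff.mp hp, Nat.cast_zero, zero_mul]
    exact S.height_nonneg f

/-- The generalised integers whose norm is at most `exp s`. -/
def elemsLE (s : ℝ) : Finset (P →₀ ℕ) := (S.finite_setOf_weight_le s).toFinset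

variable {S} in
theorem mem_elemsLE : f ∈ S.elemsLE s ↔ S.height f ≤ s := by
  simp [elemsLE]

/-- The number of generalised integers whose norm is at most `exp s`. -/
def count (s : ℝ) : ℝ := (S.elemsLE s).card

theorem count_nonneg (s : ℝ) : 0 ≤ S.count s := Nat.cast_nonneg _

theorem abs_count_sub_le (s : ℝ) :
    |S.count s - S.κ * Real.exp s| ≤ S.C * Real.exp ((1 - S.δ) * s) := by
  rw [count, elemsLE, ← Set.ncard_eq_toFinset_card _ (S.finite_setOf_weight_le s)]
  exact S.abs_ncard_sub_le s

theorem count_of_neg (hs : s < 0) : S.count s = 0 := by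
  rw [count, Nat.cast_eq_zero, Finset.card_eq_zero, Finset.eq_empty_iff_forall_notMem]
  exact fun f hf ↦ absurd ((S.height_nonneg f).trans (mem_elemsLE.mp hf)) hs.not_ge

theorem C_nonneg : 0 ≤ S.C := by
  simpa using (abs_nonneg _).trans (S.abs_count_sub_le 0)

theorem κ_add_C_pos : 0 < S.κ + S.C := add_pos_of_pos_of_nonneg S.κ_pos S.C_nonneg

theorem B_nonneg : 0 ≤ S.B := by
  simpa using S.sum_logNorm_le ∅ 0 (by simp)

theorem count_le (s : ℝ) : S.count s ≤ (S.κ + S.C) * Real.exp s := by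
  rcases lt_or_ge s 0 with hs | hs
  · rw [S.count_of_neg hs]
    exact (mul_pos S.κ_add_C_pos (Real.exp_pos _)).le
  · have hexp : Real.exp ((1 - S.δ) * s) ≤ Real.exp s := by
      rw [Real.exp_le_exp]
      nlinarith [S.δ_pos]
    linarith [(abs_le.mp (S.abs_count_sub_le s)).2, mul_le_mul_of_nonneg_left hexp S.C_nonneg]

theorem single_one_mem_elemsLE : Finsupp.single p 1 ∈ S.elemsLE s ↔ S.logNorm p ≤ s := by
  rw [mem_elemsLE, height_single, Nat.cast_one, one_mul]

theorem finite_setOf_logNorm_le (s : ℝ) : {p | S.logNorm p ≤ s}.Finite := by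
  refine ((S.elemsLE s).finite_toSet.preimage (f := fun p ↦ Finsupp.single p 1)
    (Finsupp.single_left_injective one_ne_zero).injOn).subset fun p hp ↦ ?_
  exact S.single_one_mem_elemsLE.mpr hp

/-- The generalised primes whose norm is at most `exp s`. -/
def primesLE (s : ℝ) : Finset P := (S.finite_setOf_logNorm_le s).toFinset

variable {S} in
theorem mem_primesLE : p ∈ S.primesLE s ↔ S.logNorm p ≤ s := by
  simp [primesLE]

theorem filter_primesLE (hst : s ≤ t) : {p ∈ S.primesLE t | S.logNorm p ≤ s} = S.primesLE s := by
  ext p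
  simp only [Finset.mem_filter, mem_primesLE, and_iff_right_iff_imp]
  exact fun hp ↦ hp.trans hst

theorem card_primesLE_le_count (s : ℝ) : (S.primesLE s).card ≤ S.count s := by
  refine Nat.cast_le.mpr (Finset.card_le_card_of_injOn (fun p ↦ Finsupp.single p 1)
    (fun p hp ↦ ?_) (Finsupp.single_left_injective one_ne_zero).injOn)
  exact S.single_one_mem_elemsLE.mpr (mem_primesLE.mp hp)

theorem support_subset_primesLE (hf : f ∈ S.elemsLE s) : f.support ⊆ S.primesLE s := by
  intro p hp
  have hfp : (1 : ℝ) ≤ f p :=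
    Nat.one_le_cast.mpr (Nat.one_le_iff_ne_zero.mpr (Finsupp.mem_support_iff.mp hp))
  rw [mem_primesLE]
  rw [mem_elemsLE] at hf
  nlinarith [S.apply_mul_logNorm_le_height f p, S.logNorm_pos p]

theorem summable_exp_neg_one_add {τ : ℝ} (hτ : 0 < τ) :
    Summable fun p ↦ Real.exp (-(1 + τ) * S.logNorm p) := by
  refine summable_of_sum_le (c := (S.κ + S.C) * Real.exp 1 / (1 - Real.exp (-τ)))
    (fun p ↦ Real.exp_nonneg _) fun F ↦ ?_
  have hcum (t : ℝ) : ∑ p ∈ F with S.logNorm p ≤ t, (1 : ℝ) ≤ (S.κ + S.C) * Real.exp t := by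
    refine le_trans ?_ ((S.card_primesLE_le_count t).trans (S.count_le t))
    rw [Finset.sum_const, nsmul_one]
    refine Nat.cast_le.mpr (Finset.card_le_card fun p hp ↦ ?_)
    exact mem_primesLE.mpr (Finset.mem_filter.mp hp).2
  simpa only [one_mul] using sum_mul_exp_neg_one_add_le hτ (fun _ _ ↦ zero_le_one)
    (fun p (_ : p ∈ F) ↦ (S.logNorm_pos p).le) hcum

end BeurlingPrimes

/-! ## Mertens' theorems -/

namespace BeurlingPrimes

variable {P : Type*} (S : BeurlingPrimes P) {s : ℝ}

theorem le_two_mul_exp_half (t : ℝ) : t ≤ 2 * Real.exp (t / 2) := by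
  linarith [Real.add_one_le_exp (t / 2)]

theorem sum_sub_height_le (s : ℝ) : ∑ f ∈ S.elemsLE s, (s - S.height f) ≤
    2 * ((S.κ + S.C) * Real.exp 1 / (1 - Real.exp (-(1 / 2)))) * Real.exp s := by
  have hcum (t : ℝ) : ∑ f ∈ S.elemsLE s with S.height f ≤ t, (1 : ℝ) ≤
      (S.κ + S.C) * Real.exp t := by
    refine le_trans ?_ (S.count_le t)
    rw [Finset.sum_const, nsmul_one]
    refine Nat.cast_le.mpr (Finset.card_le_card fun f hf ↦ ?_)
    exact mem_elemsLE.mpr (Finset.mem_filter.mp hf).2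
  calc ∑ f ∈ S.elemsLE s, (s - S.height f)
      ≤ ∑ f ∈ S.elemsLE s, 2 * (1 * Real.exp ((1 - 1 / 2) * (s - S.height f))) := by
        refine Finset.sum_le_sum fun f _ ↦ (le_two_mul_exp_half _).trans_eq ?_
        ring_nf
    _ ≤ 2 * ((S.κ + S.C) * Real.exp 1 / (1 - Real.exp (-(1 / 2))) * Real.exp s) := by
        rw [← Finset.mul_sum]
        gcongr
        exact sum_mul_exp_one_sub_mul_le one_half_pos (fun _ _ ↦ zero_le_one)
          (fun f hf ↦ mem_elemsLE.mp hf) hcum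
    _ = _ := (mul_assoc _ _ _).symm

theorem mul_exp_one_sub_mul_le (s : ℝ) {δ : ℝ} (hδ : 0 < δ) :
    s * Real.exp ((1 - δ) * s) ≤ Real.exp s / δ := by
  rw [le_div_iff₀ hδ]
  calc s * Real.exp ((1 - δ) * s) * δ = δ * s * Real.exp ((1 - δ) * s) := by ring
    _ ≤ Real.exp (δ * s) * Real.exp ((1 - δ) * s) := by
        gcongr
        linarith [Real.add_one_le_exp (δ * s)]
    _ = Real.exp s := by
        rw [← Real.exp_add]
        ring_nf

theorem exists_abs_sum_height_sub_le : ∃ C : ℝ, ∀ s : ℝ, 0 ≤ s →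
    |∑ f ∈ S.elemsLE s, S.height f - S.κ * Real.exp s * s| ≤ C * Real.exp s := by
  refine ⟨S.C / S.δ + 2 * ((S.κ + S.C) * Real.exp 1 / (1 - Real.exp (-(1 / 2)))), fun s hs ↦ ?_⟩
  have hsum : ∑ f ∈ S.elemsLE s, S.height f =
      S.count s * s - ∑ f ∈ S.elemsLE s, (s - S.height f) := by
    rw [Finset.sum_sub_distrib, Finset.sum_const, nsmul_eq_mul, count]
    ring
  have hdefect : 0 ≤ ∑ f ∈ S.elemsLE s, (s - S.height f) :=
    Finset.sum_nonneg fun f hf ↦ sub_nonneg.mpr (mem_elemsLE.mp hf)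
  have hcount : |S.count s * s - S.κ * Real.exp s * s| ≤ S.C / S.δ * Real.exp s :=
    calc |S.count s * s - S.κ * Real.exp s * s| = |S.count s - S.κ * Real.exp s| * s := by
          rw [← sub_mul, abs_mul, abs_of_nonneg hs]
      _ ≤ S.C * Real.exp ((1 - S.δ) * s) * s := by
          gcongr
          exact S.abs_count_sub_le s
      _ = S.C * (s * Real.exp ((1 - S.δ) * s)) := by ring
      _ ≤ S.C * (Real.exp s / S.δ) := by
          have := S.C_nonneg
          gcongr
          exact mul_exp_one_sub_mul_le s S.δ_pos
      _ = S.C / S.δ * Real.exp s := by ring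
  rw [hsum, add_mul]
  calc _ = |(S.count s * s - S.κ * Real.exp s * s) - ∑ f ∈ S.elemsLE s, (s - S.height f)| := by
        ring_nf
    _ ≤ _ := abs_sub _ _
    _ ≤ _ := add_le_add hcount ((abs_of_nonneg hdefect).trans_le (S.sum_sub_height_le s))

theorem card_filter_le_apply (s : ℝ) (p : P) (k : ℕ) :
    ({f ∈ S.elemsLE s | k ≤ f p}.card : ℝ) = S.count (s - k * S.logNorm p) := by
  refine congr_arg _ (Finset.card_bij' (fun f _ ↦ f - Finsupp.single p k)
    (fun f _ ↦ f + Finsupp.single p k) (fun f hf ↦ ?_) (fun f hf ↦ ?_) (fun f hf ↦ ?_)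
    fun f _ ↦ add_tsub_cancel_right _ _)
  · obtain ⟨hfs, hfp⟩ := Finset.mem_filter.mp hf
    have hadd := congr_arg S.height (tsub_add_cancel_of_le (Finsupp.single_le_iff.mpr hfp))
    rw [map_add, height_single] at hadd
    rw [mem_elemsLE] at hfs ⊢
    linarith
  · rw [mem_elemsLE] at hf
    rw [Finset.mem_filter, mem_elemsLE, map_add, height_single]
    exact ⟨by linarith, by simp⟩
  · exact tsub_add_cancel_of_le (Finsupp.single_le_iff.mpr (Finset.mem_filter.mp hf).2)

theorem exists_sum_apply_eq (s : ℝ) (p : P) : ∃ n : ℕ, ∑ f ∈ S.elemsLE s, (f p : ℝ) =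
    ∑ k ∈ Finset.range (n + 1), S.count (s - (k + 1 : ℕ) * S.logNorm p) := by
  obtain ⟨n, hn⟩ := exists_nat_ge (2 * s)
  refine ⟨n, ?_⟩
  simp_rw [← card_filter_le_apply, Finset.card_filter]
  push_cast
  rw [Finset.sum_comm]
  refine Finset.sum_congr rfl fun f hf ↦ ?_
  have hfp : f p ≤ n := by
    have hle := (S.apply_mul_logNorm_le_height f p).trans (mem_elemsLE.mp hf)
    rw [← Nat.cast_le (α := ℝ)]
    nlinarith [S.half_lt_logNorm p, Nat.cast_nonneg (α := ℝ) (f p)]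
  have hrange : {k ∈ Finset.range (n + 1) | k + 1 ≤ f p} = Finset.range (f p) := by
    ext k
    simp only [Finset.mem_filter, Finset.mem_range]
    lia
  rw [← Finset.sum_filter, hrange, Finset.sum_const, Finset.card_range, nsmul_one]

theorem sum_count_sub_le (s : ℝ) (p : P) (n : ℕ) :
    ∑ k ∈ Finset.range n, S.count (s - (k + 1 + 1 : ℕ) * S.logNorm p) ≤
      (S.κ + S.C) / (1 - Real.exp (-(1 / 2))) * Real.exp (s - 2 * S.logNorm p) := by
  have hκC := S.κ_add_C_pos
  have hlt : Real.exp (-(1 / 2)) < 1 := Real.exp_lt_one_iff.mpr (by norm_num)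
  calc ∑ k ∈ Finset.range n, S.count (s - (k + 1 + 1 : ℕ) * S.logNorm p)
      ≤ ∑ k ∈ Finset.range n,
          (S.κ + S.C) * Real.exp (s - 2 * S.logNorm p) * Real.exp (-(1 / 2)) ^ k := by
        refine Finset.sum_le_sum fun k _ ↦ (S.count_le _).trans ?_
        rw [mul_assoc, ← Real.exp_nat_mul, ← Real.exp_add]
        gcongr
        push_cast
        nlinarith [S.half_lt_logNorm p, Nat.cast_nonneg (α := ℝ) k]
    _ ≤ (S.κ + S.C) * Real.exp (s - 2 * S.logNorm p) * (1 - Real.exp (-(1 / 2)))⁻¹ := by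
        rw [← Finset.mul_sum, ← tsum_geometric_of_lt_one (Real.exp_nonneg _) hlt]
        gcongr
        exact (summable_geometric_of_lt_one (Real.exp_nonneg _) hlt).sum_le_tsum _
          fun _ _ ↦ by positivity
    _ = _ := by ring

theorem abs_sum_apply_sub_le (s : ℝ) (p : P) :
    |∑ f ∈ S.elemsLE s, (f p : ℝ) - S.κ * Real.exp (s - S.logNorm p)| ≤
      S.C * Real.exp ((1 - S.δ) * (s - S.logNorm p)) +
        (S.κ + S.C) / (1 - Real.exp (-(1 / 2))) * Real.exp (s - 2 * S.logNorm p) := by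
  obtain ⟨n, hn⟩ := S.exists_sum_apply_eq s p
  have htail : 0 ≤ ∑ k ∈ Finset.range n, S.count (s - (k + 1 + 1 : ℕ) * S.logNorm p) :=
    Finset.sum_nonneg fun _ _ ↦ S.count_nonneg _
  rw [hn, Finset.sum_range_succ', zero_add, Nat.cast_one, one_mul, add_sub_assoc]
  refine (abs_add_le _ _).trans ?_
  rw [abs_of_nonneg htail, add_comm]
  exact add_le_add (S.abs_count_sub_le _) (S.sum_count_sub_le s p n)

theorem sum_height (s : ℝ) : ∑ f ∈ S.elemsLE s, S.height f =
    ∑ p ∈ S.primesLE s, S.logNorm p * ∑ f ∈ S.elemsLE s, (f p : ℝ) := by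
  simp_rw [Finset.mul_sum]
  rw [Finset.sum_comm]
  refine Finset.sum_congr rfl fun f hf ↦ ?_
  rw [height, Finsupp.weight_apply,
    Finsupp.sum_of_support_subset f (S.support_subset_primesLE hf) _ (by simp)]
  exact Finset.sum_congr rfl fun p _ ↦ by rw [nsmul_eq_mul, mul_comm]

/-- The sum of `ρ p` over the generalised primes `p` of norm at most `exp s`. -/
def primeSum (ρ : P → ℝ) (s : ℝ) : ℝ := ∑ p ∈ S.primesLE s, ρ p

theorem sum_logNorm_mul_exp_le (s : ℝ) :
    ∑ p ∈ S.primesLE s, S.logNorm p * Real.exp ((1 - S.δ) * (s - S.logNorm p)) ≤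
      S.B * Real.exp 1 / (1 - Real.exp (-S.δ)) * Real.exp s :=
  sum_mul_exp_one_sub_mul_le S.δ_pos (fun p _ ↦ (S.logNorm_pos p).le)
    (fun _ hp ↦ mem_primesLE.mp hp)
    fun t ↦ S.sum_logNorm_le _ t fun _ hp ↦ (Finset.mem_filter.mp hp).2

theorem logNorm_mul_exp_sub_two_mul_le (s : ℝ) (p : P) :
    S.logNorm p * Real.exp (s - 2 * S.logNorm p) ≤
      2 * Real.exp s * Real.exp (-(1 + 1 / 2) * S.logNorm p) :=
  calc S.logNorm p * Real.exp (s - 2 * S.logNorm p)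
      ≤ 2 * Real.exp (S.logNorm p / 2) * Real.exp (s - 2 * S.logNorm p) := by
        gcongr
        exact le_two_mul_exp_half _
    _ = 2 * Real.exp s * Real.exp (-(1 + 1 / 2) * S.logNorm p) := by
        rw [mul_assoc, mul_assoc, ← Real.exp_add, ← Real.exp_add]
        ring_nf

theorem exists_abs_sum_height_sub_primeSum_le : ∃ C : ℝ, ∀ s : ℝ,
    |∑ f ∈ S.elemsLE s, S.height f -
      S.κ * Real.exp s * S.primeSum (fun p ↦ S.logNorm p * S.invNorm p) s| ≤ C * Real.exp s := by
  have hlt : Real.exp (-(1 / 2)) < 1 := Real.exp_lt_one_iff.mpr (by norm_num)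
  set A := (S.κ + S.C) / (1 - Real.exp (-(1 / 2))) with hA
  have hA0 : 0 ≤ A := div_nonneg S.κ_add_C_pos.le (by linarith)
  have hterm (s : ℝ) (p : P) : |S.logNorm p * ∑ f ∈ S.elemsLE s, (f p : ℝ) -
      S.κ * Real.exp s * (S.logNorm p * S.invNorm p)| ≤
      S.C * (S.logNorm p * Real.exp ((1 - S.δ) * (s - S.logNorm p))) +
        A * (2 * Real.exp s * Real.exp (-(1 + 1 / 2) * S.logNorm p)) := by
    have hexp : S.κ * Real.exp s * (S.logNorm p * S.invNorm p) =
        S.logNorm p * (S.κ * Real.exp (s - S.logNorm p)) := by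
      rw [sub_eq_add_neg, Real.exp_add, invNorm]
      ring
    rw [hexp, ← mul_sub, abs_mul, abs_of_pos (S.logNorm_pos p)]
    refine (mul_le_mul_of_nonneg_left (S.abs_sum_apply_sub_le s p) (S.logNorm_pos p).le).trans ?_
    rw [← hA]
    linarith [mul_le_mul_of_nonneg_left (S.logNorm_mul_exp_sub_two_mul_le s p) hA0]
  refine ⟨S.C * (S.B * Real.exp 1 / (1 - Real.exp (-S.δ))) +
    A * (2 * ∑' p, Real.exp (-(1 + 1 / 2) * S.logNorm p)), fun s ↦ ?_⟩
  rw [S.sum_height, primeSum, Finset.mul_sum, ← Finset.sum_sub_distrib]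
  refine (Finset.abs_sum_le_sum_abs _ _).trans
    ((Finset.sum_le_sum fun p _ ↦ hterm s p).trans ?_)
  rw [Finset.sum_add_distrib, ← Finset.mul_sum, ← Finset.mul_sum, ← Finset.mul_sum]
  have hshell := mul_le_mul_of_nonneg_left (S.sum_logNorm_mul_exp_le s) S.C_nonneg
  have htail := mul_le_mul_of_nonneg_left ((S.summable_exp_neg_one_add one_half_pos).sum_le_tsum
    (S.primesLE s) fun _ _ ↦ Real.exp_nonneg _) (mul_nonneg hA0 (Real.exp_nonneg s))
  linarith

theorem exists_abs_primeSum_logNorm_mul_invNorm_sub_le : ∃ C > 0, ∀ s : ℝ, 0 ≤ s →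
    |S.primeSum (fun p ↦ S.logNorm p * S.invNorm p) s - s| ≤ C := by
  obtain ⟨C₁, hC₁⟩ := S.exists_abs_sum_height_sub_le
  obtain ⟨C₂, hC₂⟩ := S.exists_abs_sum_height_sub_primeSum_le
  have hκ := S.κ_pos
  refine ⟨(|C₁| + |C₂| + 1) / S.κ, by positivity, fun s hs ↦ ?_⟩
  set V := S.primeSum (fun p ↦ S.logNorm p * S.invNorm p) s
  set T := ∑ f ∈ S.elemsLE s, S.height f
  have hbound : S.κ * Real.exp s * |V - s| ≤ (C₂ + C₁) * Real.exp s :=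
    calc S.κ * Real.exp s * |V - s| = |S.κ * Real.exp s * V - S.κ * Real.exp s * s| := by
          rw [← mul_sub, abs_mul, abs_of_pos (mul_pos hκ (Real.exp_pos s))]
      _ ≤ |T - S.κ * Real.exp s * V| + |T - S.κ * Real.exp s * s| := by
          rw [abs_sub_comm T]
          exact abs_sub_le _ _ _
      _ ≤ (C₂ + C₁) * Real.exp s := by linarith [hC₁ s hs, hC₂ s]
  rw [le_div_iff₀ hκ]
  refine le_of_mul_le_mul_right ?_ (Real.exp_pos s)
  nlinarith [le_abs_self C₁, le_abs_self C₂, Real.exp_pos s]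

variable {ρ : P → ℝ} {M t : ℝ}

theorem primeSum_sub (ρ : P → ℝ) (hst : s ≤ t) :
    S.primeSum ρ t - S.primeSum ρ s = ∑ p ∈ S.primesLE t with s < S.logNorm p, ρ p := by
  rw [primeSum, primeSum, ← Finset.sum_filter_add_sum_filter_not _ (S.logNorm · ≤ s),
    S.filter_primesLE hst]
  simp only [not_le, add_sub_cancel_left]

theorem sum_filter_logNorm_le (ρ : P → ℝ) {u : ℝ} (hsu : s ≤ u) (hut : u ≤ t) :
    ∑ p ∈ {p ∈ S.primesLE t | s < S.logNorm p} with S.logNorm p ≤ u, ρ p =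
      S.primeSum ρ u - S.primeSum ρ s := by
  rw [S.primeSum_sub ρ hsu, ← S.filter_primesLE hut, Finset.filter_comm]

/-- `ρ` satisfies Mertens' second theorem, in the form
`∑_{log N p ≤ s} ρ p = log s + M + O(1 / s)`. The range starts at `1 / 2` because all primes
have `logNorm p > 1 / 2`. -/
def HasMertensConstant (ρ : P → ℝ) (M : ℝ) : Prop :=
  ∃ C > 0, ∀ s : ℝ, 1 / 2 ≤ s → |S.primeSum ρ s - (Real.log s + M)| ≤ C / s

theorem abs_primeSum_invNorm_sub_log_sub_le {C : ℝ} (hC : 0 < C)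
    (hV : ∀ s, 0 ≤ s → |S.primeSum (fun p ↦ S.logNorm p * S.invNorm p) s - s| ≤ C)
    (hs : 0 < s) (hst : s ≤ t) :
    |(S.primeSum S.invNorm t - Real.log t) - (S.primeSum S.invNorm s - Real.log s)|
      ≤ 4 * C / s := by
  set V := S.primeSum fun p ↦ S.logNorm p * S.invNorm p
  have hincr (u : ℝ) (hu : s ≤ u) : |V u - V s - (u - s)| ≤ 2 * C :=
    calc |V u - V s - (u - s)| = |(V u - u) - (V s - s)| := by ring_nf
      _ ≤ |V u - u| + |V s - s| := abs_sub _ _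
      _ ≤ 2 * C := by linarith [hV u (hs.le.trans hu), hV s hs.le]
  have habel := abs_sum_mul_sub_le_of_hasDerivAt
    (F := {p ∈ S.primesLE t | s < S.logNorm p}) (w := fun p ↦ S.logNorm p * S.invNorm p)
    (r := S.logNorm) (M := fun u ↦ u - s) (M' := fun _ ↦ 1) (g := fun u ↦ u⁻¹)
    (g' := fun u ↦ -(u ^ 2)⁻¹) (Φ := Real.log) (Ψ := fun u ↦ -(2 * C) * u⁻¹)
    (Ψ' := fun u ↦ -(2 * C) * -(u ^ 2)⁻¹) hst
    (fun p hp ↦ ⟨(Finset.mem_filter.mp hp).2.le, mem_primesLE.mp (Finset.mem_filter.mp hp).1⟩)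
    (fun u _ ↦ (hasDerivAt_id u).sub_const s)
    (fun u hu ↦ hasDerivAt_inv (hs.trans_le hu.1).ne')
    (fun u hu ↦ by simpa using Real.hasDerivAt_log (hs.trans_le hu.1).ne')
    (fun u hu ↦ (hasDerivAt_inv (hs.trans_le hu.1).ne').const_mul _)
    (fun u hu ↦ by
      rw [S.sum_filter_logNorm_le _ hu.1 hu.2.le, abs_mul, abs_neg,
        abs_of_nonneg (by positivity : 0 ≤ (u ^ 2)⁻¹), neg_mul_neg]
      gcongr
      exact hincr u hu.1)
  have hW : ∑ p ∈ S.primesLE t with s < S.logNorm p,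
      S.logNorm p * S.invNorm p * (S.logNorm p)⁻¹ =
        S.primeSum S.invNorm t - S.primeSum S.invNorm s := by
    rw [S.primeSum_sub _ hst]
    refine Finset.sum_congr rfl fun p _ ↦ ?_
    rw [mul_comm (S.logNorm p), mul_inv_cancel_right₀ (S.logNorm_pos p).ne']
  rw [hW, ← S.primeSum_sub _ hst] at habel
  have hboundary : |(V t - V s - (t - s)) * t⁻¹| ≤ 2 * C * t⁻¹ := by
    have htpos : 0 < t := hs.trans_le hst
    rw [abs_mul, abs_of_pos (inv_pos.mpr htpos)]
    gcongr
    exact hincr t hst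
  have hinv := mul_le_mul_of_nonneg_left (inv_anti₀ hs hst) hC.le
  have hspos := mul_pos hC (inv_pos.mpr hs)
  rw [div_eq_mul_inv]
  rw [abs_le] at habel hboundary ⊢
  constructor <;> linarith [habel.1, habel.2, hboundary.1, hboundary.2]

theorem hasMertensConstant_invNorm {A : ℝ}
    (hA : Tendsto (fun s ↦ S.primeSum S.invNorm s - Real.log s) atTop (𝓝 A)) :
    S.HasMertensConstant S.invNorm A := by
  obtain ⟨C, hC, hV⟩ := S.exists_abs_primeSum_logNorm_mul_invNorm_sub_le
  refine ⟨4 * C, by positivity, fun s hs ↦ ?_⟩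
  have hlim := le_of_tendsto (hA.sub_const (S.primeSum S.invNorm s - Real.log s)).abs
    (eventually_atTop.mpr ⟨s, fun t hst ↦
      S.abs_primeSum_invNorm_sub_log_sub_le hC hV (by linarith) hst⟩)
  rwa [← sub_sub, abs_sub_comm]

variable {S} in
theorem HasMertensConstant.exists_primeSum_le (hρ : S.HasMertensConstant ρ M) :
    ∃ D > 0, ∀ s : ℝ, 2 ≤ s → S.primeSum ρ (s / 2) ≤ D * Real.log s := by
  obtain ⟨C, hC, hmertens⟩ := hρ
  refine ⟨1 + 2 * |M| + 2 * C, by positivity, fun s hs ↦ ?_⟩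
  have hlog : 1 / 2 ≤ Real.log s := by
    linarith [Real.log_two_gt_d9, Real.log_le_log two_pos hs]
  have herr : C / (s / 2) ≤ C := div_le_self hC.le (by linarith)
  have hhalf : Real.log (s / 2) ≤ Real.log s := Real.log_le_log (by linarith) (by linarith)
  have hM := mul_le_mul_of_nonneg_left hlog (abs_nonneg M)
  nlinarith [(abs_le.mp (hmertens (s / 2) (by linarith))).2, le_abs_self M]

/-- The ordered pairs of generalised primes whose product has norm at most `exp s`. -/
def pairsLE (s : ℝ) : Finset (P × P) :=
  {x ∈ S.primesLE s ×ˢ S.primesLE s | S.logNorm x.1 + S.logNorm x.2 ≤ s}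

variable {S} in
theorem mem_pairsLE {x : P × P} : x ∈ S.pairsLE s ↔ S.logNorm x.1 + S.logNorm x.2 ≤ s := by
  simp only [pairsLE, Finset.mem_filter, Finset.mem_product, mem_primesLE,
    and_iff_right_iff_imp]
  intro hx
  constructor <;> linarith [S.logNorm_pos x.1, S.logNorm_pos x.2]

theorem sum_filter_pairsLE (F : P → P → ℝ) (s : ℝ) :
    ∑ x ∈ S.pairsLE s with S.logNorm x.1 ≤ s / 2, F x.1 x.2 =
      ∑ p ∈ S.primesLE (s / 2), ∑ q ∈ S.primesLE (s - S.logNorm p), F p q := by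
  refine Finset.sum_finset_product' _ _ _ fun x ↦ ?_
  rw [Finset.mem_filter, mem_pairsLE, mem_primesLE, mem_primesLE, le_sub_iff_add_le', and_comm]

/-- Dirichlet's hyperbola method: in every pair at least one of the two primes is at most
`exp (s / 2)`. -/
theorem sum_pairsLE_of_symm {F : P → P → ℝ} (hF : ∀ p q, F p q = F q p) (s : ℝ) :
    ∑ x ∈ S.pairsLE s, F x.1 x.2 =
      2 * ∑ p ∈ S.primesLE (s / 2), ∑ q ∈ S.primesLE (s - S.logNorm p), F p q -
        ∑ p ∈ S.primesLE (s / 2), ∑ q ∈ S.primesLE (s / 2), F p q := by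
  classical
  set L := {x ∈ S.pairsLE s | S.logNorm x.1 ≤ s / 2} with hL
  set R := {x ∈ S.pairsLE s | S.logNorm x.2 ≤ s / 2} with hR
  have hunion : L ∪ R = S.pairsLE s := by
    rw [hL, hR, ← Finset.filter_or, Finset.filter_eq_self]
    intro x hx
    rw [mem_pairsLE] at hx
    by_contra! hlt
    linarith
  have hinter : L ∩ R = S.primesLE (s / 2) ×ˢ S.primesLE (s / 2) := by
    ext x
    simp only [hL, hR, Finset.mem_inter, Finset.mem_filter, mem_pairsLE, Finset.mem_product,
      mem_primesLE]
    exact ⟨fun hx ↦ ⟨hx.1.2, hx.2.2⟩, fun hx ↦ ⟨⟨by linarith, hx.1⟩, by linarith, hx.2⟩⟩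
  have hswap : ∑ x ∈ R, F x.1 x.2 = ∑ x ∈ L, F x.1 x.2 :=
    Finset.sum_equiv (Equiv.prodComm P P)
      (fun x ↦ by simp [hL, hR, mem_pairsLE, add_comm]) fun x _ ↦ hF _ _
  have hincl := Finset.sum_union_inter (s₁ := L) (s₂ := R) (f := fun x ↦ F x.1 x.2)
  rw [hunion, hinter, hswap, Finset.sum_product, S.sum_filter_pairsLE F] at hincl
  linarith

theorem sum_pairsLE_le_of_symm {F : P → P → ℝ} (hF : ∀ p q, F p q = F q p)
    (hF0 : ∀ p q, 0 ≤ F p q) (s : ℝ) : ∑ x ∈ S.pairsLE s, F x.1 x.2 ≤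
      2 * ∑ p ∈ S.primesLE (s / 2), ∑ q ∈ S.primesLE (s - S.logNorm p), F p q := by
  rw [S.sum_pairsLE_of_symm hF]
  exact sub_le_self _ (Finset.sum_nonneg fun p _ ↦ Finset.sum_nonneg fun q _ ↦ hF0 p q)

/-! ## Sums over pairs of primes -/

variable {S} {C : ℝ}

theorem half_lt_log (hs : 2 ≤ s) : 1 / 2 < Real.log s := by
  linarith [Real.log_two_gt_d9, Real.log_le_log two_pos hs]

theorem one_div_le_two_mul_log_div (hs : 2 ≤ s) : 1 / s ≤ 2 * (Real.log s / s) := by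
  rw [← mul_div_assoc]
  gcongr
  linarith [half_lt_log hs]

theorem hasDerivAt_log_one_sub_div (hs : s ≠ 0) {u : ℝ} (hu : u ≠ s) :
    HasDerivAt (fun u ↦ Real.log (1 - u / s)) (-(s - u)⁻¹) u := by
  have hsub : s - u ≠ 0 := sub_ne_zero_of_ne hu.symm
  have hne : 1 - u / s ≠ 0 := by
    rw [one_sub_div hs]
    exact div_ne_zero hsub hs
  refine ((((hasDerivAt_id' u).div_const s).const_sub 1).log hne).congr_deriv ?_
  field_simp

theorem hasDerivAt_neg_dilog_div (hs : 0 < s) {u : ℝ} (hu0 : 0 < u) (hus : u < s) :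
    HasDerivAt (fun u ↦ -dilog (u / s)) (u⁻¹ * Real.log (1 - u / s)) u := by
  refine ((hasDerivAt_dilog (div_pos hu0 hs) ((div_lt_one hs).mpr hus)).comp u
    ((hasDerivAt_id' u).div_const s)).neg.congr_deriv ?_
  field_simp

/-- The primitive of `log (1 - u / s) / u` is `-dilog (u / s)`. -/
theorem abs_sum_mul_log_one_sub_add_dilog_sub_le
    (hmertens : ∀ s : ℝ, 1 / 2 ≤ s → |S.primeSum ρ s - (Real.log s + M)| ≤ C / s) (hs : 2 ≤ s) :
    |(∑ p ∈ S.primesLE (s / 2), ρ p * Real.log (1 - S.logNorm p / s) + dilog (1 / 2)) -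
      ((S.primeSum ρ (s / 2) - (Real.log (s / 2) + M)) * Real.log (1 / 2) +
        (Real.log (1 / 2) + M) * Real.log (1 - 1 / 2 / s) + dilog (1 / 2 / s))|
      ≤ 2 * C * (Real.log s / s) := by
  have hs0 : 0 < s := by linarith
  have habel := abs_sum_mul_sub_le_of_hasDerivAt (F := S.primesLE (s / 2)) (w := ρ)
    (r := S.logNorm) (a := 1 / 2) (b := s / 2) (M := fun u ↦ Real.log u + M) (M' := fun u ↦ u⁻¹)
    (g := fun u ↦ Real.log (1 - u / s)) (g' := fun u ↦ -(s - u)⁻¹)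
    (Φ := fun u ↦ -dilog (u / s)) (Ψ := fun u ↦ 2 * C / s * Real.log u)
    (Ψ' := fun u ↦ 2 * C / s * u⁻¹) (by linarith)
    (fun p hp ↦ ⟨(S.half_lt_logNorm p).le, mem_primesLE.mp hp⟩)
    (fun u hu ↦ (Real.hasDerivAt_log (by linarith [hu.1])).add_const M)
    (fun u hu ↦ hasDerivAt_log_one_sub_div hs0.ne' (by linarith [hu.2]))
    (fun u hu ↦ hasDerivAt_neg_dilog_div hs0 (by linarith [hu.1]) (by linarith [hu.2]))
    (fun u hu ↦ (Real.hasDerivAt_log (by linarith [hu.1])).const_mul _)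
    (fun u hu ↦ by
      have hsu : 0 < s - u := by linarith [hu.2]
      have hinv : (s - u)⁻¹ ≤ 2 / s := by
        rw [inv_le_comm₀ hsu (by positivity), inv_div]
        linarith [hu.2]
      rw [S.filter_primesLE hu.2.le, abs_mul, abs_neg, abs_of_pos (inv_pos.mpr hsu)]
      calc _ ≤ C / u * (2 / s) := mul_le_mul (hmertens u hu.1) hinv (inv_pos.mpr hsu).le
            ((abs_nonneg _).trans (hmertens u hu.1))
        _ = 2 * C / s * u⁻¹ := by ring)
  have hhalf : s / 2 / s = 1 / 2 := by field_simp
  have hlog : 2 * C / s * Real.log (s / 2) - 2 * C / s * Real.log (1 / 2) =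
      2 * C * (Real.log s / s) := by
    rw [Real.log_div hs0.ne' two_ne_zero, one_div, Real.log_inv]
    ring
  simp only [hhalf, (by norm_num : (1 : ℝ) - 1 / 2 = 1 / 2)] at habel
  rw [hlog] at habel
  refine le_of_eq_of_le (congr_arg _ ?_) habel
  rw [primeSum]
  ring

theorem dilog_half_div_le (hs : 2 ≤ s) : dilog (1 / 2 / s) ≤ 1 / s := by
  have hle := dilog_le (x := 1 / 2 / s) (by positivity) (by rw [div_le_one] <;> linarith)
  have hpi : Real.pi ^ 2 / 6 ≤ 2 := by nlinarith [Real.pi_lt_d2, Real.pi_pos]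
  have hpos : 0 < 1 / 2 / s := by positivity
  calc dilog (1 / 2 / s) ≤ 2 * (1 / 2 / s) := by nlinarith
    _ = 1 / s := by ring

theorem HasMertensConstant.exists_abs_sum_mul_log_one_sub_le (hρ : S.HasMertensConstant ρ M) :
    ∃ D > 0, ∀ s : ℝ, 2 ≤ s →
      |∑ p ∈ S.primesLE (s / 2), ρ p * Real.log (1 - S.logNorm p / s) + dilog (1 / 2)| ≤
        D * (Real.log s / s) := by
  obtain ⟨C, hC, hmertens⟩ := hρ
  set m := |Real.log (1 / 2) + M|
  refine ⟨6 * C + 2 * m + 2, by positivity, fun s hs ↦ ?_⟩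
  have hs0 : 0 < s := by linarith
  have hupper : |(S.primeSum ρ (s / 2) - (Real.log (s / 2) + M)) * Real.log (1 / 2)| ≤
      2 * C * (1 / s) := by
    rw [abs_mul, one_div 2, Real.log_inv, abs_neg, abs_of_pos (Real.log_pos one_lt_two)]
    calc _ ≤ C / (s / 2) * 1 := by
          gcongr
          · exact hmertens _ (by linarith)
          · linarith [Real.log_two_lt_d9]
      _ = 2 * C * (1 / s) := by ring
  have hlower : |(Real.log (1 / 2) + M) * Real.log (1 - 1 / 2 / s)| ≤ m * (1 / s) := by
    rw [abs_mul]
    gcongr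
    refine (abs_log_one_sub_le (by positivity) ?_).trans_eq (by ring)
    rw [div_le_iff₀ hs0]
    linarith
  have hdilog : |dilog (1 / 2 / s)| ≤ 1 / s := by
    rw [abs_of_nonneg (dilog_nonneg (by positivity))]
    exact dilog_half_div_le hs
  have hmain := abs_sum_mul_log_one_sub_add_dilog_sub_le hmertens hs
  have hboundary := (abs_add_three _ _ _).trans (add_le_add_three hupper hlower hdilog)
  have hinv := mul_le_mul_of_nonneg_left (one_div_le_two_mul_log_div hs)
    (by positivity : 0 ≤ 2 * C + m + 1)
  rw [abs_le] at hmain hboundary ⊢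
  constructor <;> linarith [hmain.1, hmain.2, hboundary.1, hboundary.2]

variable (S) in
/-- The sum of `ρ p * ρ q` over the ordered pairs `(p, q)` of generalised primes with `p q` of
norm at most `exp s`. -/
def primePairSum (ρ : P → ℝ) (s : ℝ) : ℝ := ∑ x ∈ S.pairsLE s, ρ x.1 * ρ x.2

theorem primePairSum_eq (ρ : P → ℝ) (s : ℝ) : S.primePairSum ρ s =
    2 * ∑ p ∈ S.primesLE (s / 2), ρ p * S.primeSum ρ (s - S.logNorm p) -
      S.primeSum ρ (s / 2) ^ 2 := by
  rw [primePairSum, S.sum_pairsLE_of_symm (F := fun p q ↦ ρ p * ρ q) fun p q ↦ mul_comm _ _, sq,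
    primeSum, Finset.sum_mul_sum]
  simp_rw [primeSum, Finset.mul_sum]

theorem abs_sum_mul_primeSum_sub_le (hρ0 : ∀ p, 0 ≤ ρ p) (hC : 0 < C)
    (hmertens : ∀ s : ℝ, 1 / 2 ≤ s → |S.primeSum ρ s - (Real.log s + M)| ≤ C / s) (hs : 2 ≤ s) :
    |∑ p ∈ S.primesLE (s / 2), ρ p * S.primeSum ρ (s - S.logNorm p) -
      (S.primeSum ρ (s / 2) * (Real.log s + M) +
        ∑ p ∈ S.primesLE (s / 2), ρ p * Real.log (1 - S.logNorm p / s))| ≤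
      S.primeSum ρ (s / 2) * (C / (s / 2)) := by
  have hs0 : 0 < s := by linarith
  simp only [primeSum, Finset.sum_mul]
  rw [← Finset.sum_add_distrib, ← Finset.sum_sub_distrib]
  refine (Finset.abs_sum_le_sum_abs _ _).trans (Finset.sum_le_sum fun p hp ↦ ?_)
  have hp' := mem_primesLE.mp hp
  have hlog : Real.log (s - S.logNorm p) = Real.log s + Real.log (1 - S.logNorm p / s) := by
    have hle : S.logNorm p / s ≤ 1 / 2 := by
      rw [div_le_iff₀ hs0]
      linarith
    rw [← Real.log_mul hs0.ne' (by linarith), mul_sub, mul_one, mul_div_cancel₀ _ hs0.ne']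
  calc _ = ρ p * |S.primeSum ρ (s - S.logNorm p) - (Real.log (s - S.logNorm p) + M)| := by
        rw [hlog, ← abs_of_nonneg (hρ0 p), ← abs_mul, abs_of_nonneg (hρ0 p), primeSum]
        ring_nf
    _ ≤ ρ p * (C / (s - S.logNorm p)) :=
        mul_le_mul_of_nonneg_left (hmertens _ (by linarith)) (hρ0 p)
    _ ≤ ρ p * (C / (s / 2)) := by
        refine mul_le_mul_of_nonneg_left ?_ (hρ0 p)
        gcongr
        linarith

theorem HasMertensConstant.exists_abs_primePairSum_sub_le (hρ : S.HasMertensConstant ρ M)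
    (hρ0 : ∀ p, 0 ≤ ρ p) : ∃ D > 0, ∀ s : ℝ, 2 ≤ s →
      |S.primePairSum ρ s - ((Real.log s + M) ^ 2 - Real.pi ^ 2 / 6)| ≤
        D * (Real.log s / s) := by
  obtain ⟨D₁, hD₁, hlogsum⟩ := hρ.exists_abs_sum_mul_log_one_sub_le
  obtain ⟨D₂, hD₂, hprimeSum⟩ := hρ.exists_primeSum_le
  obtain ⟨C, hC, hmertens⟩ := hρ
  refine ⟨8 * C + 4 * C ^ 2 + 2 * D₁ + 4 * C * D₂, by positivity, fun s hs ↦ ?_⟩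
  set e₁ := S.primeSum ρ (s / 2) - (Real.log (s / 2) + M) with he₁
  set e₂ := ∑ p ∈ S.primesLE (s / 2), ρ p * Real.log (1 - S.logNorm p / s) + dilog (1 / 2)
    with he₂
  set e₃ := ∑ p ∈ S.primesLE (s / 2), ρ p * S.primeSum ρ (s - S.logNorm p) -
    (S.primeSum ρ (s / 2) * (Real.log s + M) +
      ∑ p ∈ S.primesLE (s / 2), ρ p * Real.log (1 - S.logNorm p / s)) with he₃
  have hsplit : S.primePairSum ρ s - ((Real.log s + M) ^ 2 - Real.pi ^ 2 / 6) =
      2 * Real.log 2 * e₁ - e₁ ^ 2 + 2 * e₂ + 2 * e₃ := by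
    rw [primePairSum_eq, ← two_mul_dilog_half_add_log_two_sq, he₃, he₂, he₁,
      Real.log_div (by linarith) two_ne_zero]
    ring
  have hCs : C / (s / 2) ≤ 4 * C * (Real.log s / s) := by
    have := mul_le_mul_of_nonneg_left (one_div_le_two_mul_log_div hs) hC.le
    calc C / (s / 2) = 2 * (C * (1 / s)) := by ring
      _ ≤ _ := by linarith
  have h₁ : |e₁| ≤ C / (s / 2) := hmertens (s / 2) (by linarith)
  have h₁' : |2 * Real.log 2 * e₁| ≤ 8 * C * (Real.log s / s) := by
    rw [abs_mul, abs_of_pos (by linarith [Real.log_pos one_lt_two])]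
    nlinarith [Real.log_two_lt_d9, abs_nonneg e₁]
  have h₁sq : |e₁ ^ 2| ≤ 4 * C ^ 2 * (Real.log s / s) := by
    rw [abs_pow, sq]
    calc |e₁| * |e₁| ≤ C * (4 * C * (Real.log s / s)) := by
          gcongr
          · exact h₁.trans (div_le_self hC.le (by linarith))
          · exact h₁.trans hCs
      _ = _ := by ring
  have h₃ : |e₃| ≤ 2 * C * D₂ * (Real.log s / s) :=
    calc |e₃| ≤ S.primeSum ρ (s / 2) * (C / (s / 2)) :=
          abs_sum_mul_primeSum_sub_le hρ0 hC hmertens hs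
      _ ≤ D₂ * Real.log s * (C / (s / 2)) := by
          gcongr
          exact hprimeSum s hs
      _ = 2 * C * D₂ * (Real.log s / s) := by field_simp
  have h₂ := hlogsum s hs
  rw [hsplit]
  rw [abs_le] at h₁' h₁sq h₂ h₃ ⊢
  constructor <;> linarith [h₁'.1, h₁'.2, h₁sq.1, h₁sq.2, h₂.1, h₂.2, h₃.1, h₃.2]

end BeurlingPrimes

section PolynomialShells

variable {ι : Type*} {F : Finset ι} {w r : ι → ℝ}

theorem one_add_mul_exp_neg_le {a x : ℝ} (ha : 0 < a) (hx : 0 ≤ x) :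
    (1 + x) * Real.exp (-a * x) ≤ 1 + 1 / a := by
  have hone : Real.exp (-a * x) ≤ 1 := Real.exp_le_one_iff.mpr (by nlinarith)
  have hlin : a * x * Real.exp (-(a * x)) ≤ 1 := by
    rw [Real.exp_neg, ← div_eq_mul_inv, div_le_one (Real.exp_pos _)]
    linarith [Real.add_one_le_exp (a * x)]
  have hx' : x * Real.exp (-a * x) ≤ 1 / a := by
    rw [le_div_iff₀ ha, neg_mul]
    linarith
  linarith

theorem le_one_add_mul_max_sub {s k : ℝ} (hk : 0 ≤ k) : s ≤ (1 + k) * max (s - k) 1 := by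
  rcases le_total (s - k) 1 with h | h
  · rw [max_eq_right h]
    linarith
  · rw [max_eq_left h]
    nlinarith

theorem sum_mul_exp_neg_sub_le_of_shell {d E s : ℝ} (hd : 0 < d) (hs : 0 < s)
    (hw : ∀ i ∈ F, 0 ≤ w i) (hr : ∀ i ∈ F, r i ≤ s)
    (hshell : ∀ t, ∑ i ∈ F with t - 1 ≤ r i ∧ r i ≤ t, w i ≤ E / max t 1) :
    ∑ i ∈ F, w i * Real.exp (-d * (s - r i)) ≤
      (1 + 1 / (d / 2)) * (E / s) / (1 - Real.exp (-(d / 2))) := by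
  have hE : 0 ≤ E := by
    simpa using (Finset.sum_nonneg fun i hi ↦ hw i (Finset.mem_filter.mp hi).1).trans (hshell 1)
  have hshell' (k : ℕ) : ∑ i ∈ F with ⌊s - r i⌋₊ = k, w i * Real.exp (-(d / 2) * (s - r i)) ≤
      (1 + 1 / (d / 2)) * (E / s) :=
    calc ∑ i ∈ F with ⌊s - r i⌋₊ = k, w i * Real.exp (-(d / 2) * (s - r i))
        ≤ ∑ i ∈ F with ⌊s - r i⌋₊ = k, w i * Real.exp (-(d / 2) * k) := by
          refine Finset.sum_le_sum fun i hi ↦ ?_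
          obtain ⟨hiF, rfl⟩ := Finset.mem_filter.mp hi
          refine mul_le_mul_of_nonneg_left (Real.exp_le_exp.mpr ?_) (hw i hiF)
          nlinarith [Nat.floor_le (sub_nonneg.mpr (hr i hiF))]
      _ ≤ (∑ i ∈ F with s - k - 1 ≤ r i ∧ r i ≤ s - k, w i) * Real.exp (-(d / 2) * k) := by
          rw [← Finset.sum_mul]
          refine mul_le_mul_of_nonneg_right (Finset.sum_le_sum_of_subset_of_nonneg ?_
            fun i hi _ ↦ hw i (Finset.mem_filter.mp hi).1) (Real.exp_nonneg _)
          refine Finset.monotone_filter_right _ fun i hi hk ↦ ?_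
          obtain ⟨hle, hlt⟩ := (Nat.floor_eq_iff (sub_nonneg.mpr (hr i hi))).mp hk
          constructor <;> linarith
      _ ≤ E * ((1 + k) / s) * Real.exp (-(d / 2) * k) := by
          refine mul_le_mul_of_nonneg_right ((hshell _).trans ?_) (Real.exp_nonneg _)
          rw [div_eq_mul_one_div]
          refine mul_le_mul_of_nonneg_left ?_ hE
          rw [div_le_div_iff₀ (by positivity) hs, one_mul]
          exact le_one_add_mul_max_sub k.cast_nonneg
      _ = (1 + k) * Real.exp (-(d / 2) * k) * (E / s) := by ring
      _ ≤ (1 + 1 / (d / 2)) * (E / s) := by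
          gcongr
          exact one_add_mul_exp_neg_le (half_pos hd) k.cast_nonneg
  refine le_of_eq_of_le (Finset.sum_congr rfl fun i _ ↦ ?_) (sum_mul_exp_neg_le_of_shell
    (half_pos hd) (fun i hi ↦ mul_nonneg (hw i hi) (Real.exp_nonneg _))
    (fun i hi ↦ sub_nonneg.mpr (hr i hi)) hshell')
  rw [mul_assoc, ← Real.exp_add]
  ring_nf

end PolynomialShells

namespace BeurlingPrimes

variable {P : Type*} (S : BeurlingPrimes P) {M : ℝ}

theorem sum_invNorm_shell_le (F : Finset P) (t : ℝ) :
    ∑ p ∈ F with t - 1 ≤ S.logNorm p ∧ S.logNorm p ≤ t, S.invNorm p ≤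
      3 * (S.B * Real.exp 1) / max t 1 := by
  rw [le_div_iff₀ (by positivity), Finset.sum_mul]
  have hlog := sum_shell_mul_exp_neg_le (F := F) (b := S.B) (t := t - 1)
    (fun p _ ↦ (S.logNorm_pos p).le) fun u ↦ S.sum_logNorm_le _ u fun p hp ↦
      (Finset.mem_filter.mp hp).2
  rw [sub_add_cancel] at hlog
  refine le_trans ?_ (mul_le_mul_of_nonneg_left hlog zero_le_three)
  rw [Finset.mul_sum]
  refine Finset.sum_le_sum fun p hp ↦ ?_
  have hmax : max t 1 ≤ 3 * S.logNorm p :=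
    max_le (by linarith [(Finset.mem_filter.mp hp).2.1, S.half_lt_logNorm p])
      (by linarith [S.half_lt_logNorm p])
  calc S.invNorm p * max t 1 ≤ S.invNorm p * (3 * S.logNorm p) :=
        mul_le_mul_of_nonneg_left hmax (S.invNorm_pos p).le
    _ = 3 * (S.logNorm p * Real.exp (-S.logNorm p)) := by rw [invNorm]; ring

theorem exists_sum_invNorm_mul_exp_le {d : ℝ} (hd : 0 < d) : ∃ C > 0, ∀ s : ℝ, 0 < s →
    ∑ p ∈ S.primesLE s, S.invNorm p * Real.exp (-d * (s - S.logNorm p)) ≤ C / s := by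
  have hexp : 0 < 1 - Real.exp (-(d / 2)) := by
    rw [sub_pos, Real.exp_lt_one_iff]
    linarith
  set C := (1 + 1 / (d / 2)) * (3 * (S.B * Real.exp 1)) / (1 - Real.exp (-(d / 2)))
  have hC : 0 ≤ C := by have := S.B_nonneg; positivity
  refine ⟨C + 1, by positivity, fun s hs ↦ ?_⟩
  calc ∑ p ∈ S.primesLE s, S.invNorm p * Real.exp (-d * (s - S.logNorm p))
      ≤ _ := sum_mul_exp_neg_sub_le_of_shell hd hs (fun p _ ↦ (S.invNorm_pos p).le)
        (fun p hp ↦ mem_primesLE.mp hp) (S.sum_invNorm_shell_le _)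
    _ = C / s := by ring
    _ ≤ (C + 1) / s := by gcongr; linarith

variable {S} in
theorem HasMertensConstant.exists_sum_pairsLE_exp_le (hM : S.HasMertensConstant S.invNorm M)
    {d : ℝ} (hd : 0 < d) : ∃ C > 0, ∀ s : ℝ, 2 ≤ s →
      ∑ x ∈ S.pairsLE s, S.invNorm x.1 * S.invNorm x.2 *
        Real.exp (-d * (s - (S.logNorm x.1 + S.logNorm x.2))) ≤ C * (Real.log s / s) := by
  obtain ⟨C, hC, hsingle⟩ := S.exists_sum_invNorm_mul_exp_le hd
  obtain ⟨D, hD, hprime⟩ := hM.exists_primeSum_le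
  refine ⟨4 * C * D, by positivity, fun s hs ↦ ?_⟩
  have hinner (p : P) (hp : p ∈ S.primesLE (s / 2)) :
      ∑ q ∈ S.primesLE (s - S.logNorm p), S.invNorm p * S.invNorm q *
        Real.exp (-d * (s - (S.logNorm p + S.logNorm q))) ≤ S.invNorm p * (2 * C / s) := by
    have hps : s / 2 ≤ s - S.logNorm p := by linarith [mem_primesLE.mp hp]
    simp only [mul_assoc, ← sub_sub, ← Finset.mul_sum]
    refine mul_le_mul_of_nonneg_left ((hsingle _ (by linarith)).trans ?_) (S.invNorm_pos p).le
    calc C / (s - S.logNorm p) ≤ C / (s / 2) := by gcongr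
      _ = 2 * (C / s) := by field_simp
      _ = _ := by ring
  calc _ ≤ 2 * ∑ p ∈ S.primesLE (s / 2), ∑ q ∈ S.primesLE (s - S.logNorm p), S.invNorm p *
        S.invNorm q * Real.exp (-d * (s - (S.logNorm p + S.logNorm q))) :=
        S.sum_pairsLE_le_of_symm (fun p q ↦ by ring_nf)
          (fun p q ↦ by have := S.invNorm_pos p; have := S.invNorm_pos q; positivity) s
    _ ≤ 2 * (S.primeSum S.invNorm (s / 2) * (2 * C / s)) := by
        rw [primeSum, Finset.sum_mul]
        gcongr with p hp
        exact hinner p hp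
    _ ≤ 2 * (D * Real.log s * (2 * C / s)) := by
        gcongr
        exact hprime s hs
    _ = 4 * C * D * (Real.log s / s) := by ring

end BeurlingPrimes

/-! ## Counting `h`-full elements -/

section EulerProduct

variable {P : Type*} {g : P → ℕ → ℝ} {D : P → Finset ℕ} {c : Finset P}

theorem sum_finsupp_prod (hg : ∀ p, g p 0 = 1) (D : P → Finset ℕ) (E : Finset P) :
    ∑ b ∈ E.finsupp D, b.prod g = ∏ p ∈ E, ∑ k ∈ D p, g p k := by
  classical
  rw [Finset.prod_sum, Finset.finsupp, Finset.sum_map]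
  refine Finset.sum_congr rfl fun f _ ↦ ?_
  rw [Function.Embedding.coeFn_mk, Finsupp.prod_of_support_subset _
    (Finsupp.support_indicator_subset _ _) _ fun p _ ↦ hg p, ← Finset.prod_attach]
  exact Finset.prod_congr rfl fun p _ ↦ by rw [Finsupp.indicator_of_mem p.2]

theorem forall_apply_mem_of_mem_finsupp (hD : ∀ p ∉ c, 0 ∈ D p) {E : Finset P} (hE : c ⊆ E)
    {b : P →₀ ℕ} (hb : b ∈ E.finsupp D) (p : P) : b p ∈ D p := by
  rw [Finset.mem_finsupp_iff] at hb
  by_cases hp : p ∈ E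
  · exact hb.2 p hp
  · rw [Finsupp.notMem_support_iff.mp fun h ↦ hp (hb.1 h)]
    exact hD p fun h ↦ hp (hE h)

theorem hasSum_indicator_finsupp_prod (hg : ∀ p, g p 0 = 1) (hg0 : ∀ p k, 0 ≤ g p k)
    (hD : ∀ p ∉ c, 0 ∈ D p) (hmul : Multipliable fun p ↦ ∑ k ∈ D p, g p k) :
    HasSum ({b : P →₀ ℕ | ∀ p, b p ∈ D p}.indicator fun b ↦ b.prod g)
      (∏' p, ∑ k ∈ D p, g p k) := by
  classical
  have hnonneg (b : P →₀ ℕ) : 0 ≤ b.prod g := Finset.prod_nonneg fun p _ ↦ hg0 p _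
  have hpartial {E : Finset P} (hE : c ⊆ E) :
      ∑ b ∈ E.finsupp D, {b : P →₀ ℕ | ∀ p, b p ∈ D p}.indicator (fun b ↦ b.prod g) b =
        ∏ p ∈ E, ∑ k ∈ D p, g p k := by
    rw [← sum_finsupp_prod hg]
    exact Finset.sum_congr rfl fun b hb ↦ Set.indicator_of_mem
      (s := {b : P →₀ ℕ | ∀ p, b p ∈ D p}) (forall_apply_mem_of_mem_finsupp hD hE hb) _
  have hmono {E E' : Finset P} (hE : c ⊆ E) (hEE' : E ⊆ E') :
      ∏ p ∈ E, ∑ k ∈ D p, g p k ≤ ∏ p ∈ E', ∑ k ∈ D p, g p k := by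
    refine Finset.prod_le_prod_of_subset_of_one_le hEE'
      (fun p _ ↦ Finset.sum_nonneg fun k _ ↦ hg0 p k) fun p _ hp ↦ ?_
    rw [← hg p]
    exact Finset.single_le_sum (fun k _ ↦ hg0 p k) (hD p fun h ↦ hp (hE h))
  refine hasSum_of_isLUB_of_nonneg _ (fun b ↦ Set.indicator_nonneg (fun b _ ↦ hnonneg b) b)
    ⟨?_, fun r hr ↦ ?_⟩
  · rintro - ⟨F, rfl⟩
    set E := c ∪ F.biUnion Finsupp.support
    have hE : c ⊆ E := Finset.subset_union_left
    refine le_trans ?_ (ge_of_tendsto hmul.hasProd (eventually_atTop.mpr ⟨E, fun _ ↦ hmono hE⟩))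
    beta_reduce
    rw [← hpartial hE, ← Finset.sum_filter_ne_zero F]
    refine Finset.sum_le_sum_of_subset_of_nonneg (fun b hb ↦ ?_)
      fun b _ _ ↦ Set.indicator_nonneg (fun b _ ↦ hnonneg b) b
    obtain ⟨hb, hb0⟩ := Finset.mem_filter.mp hb
    rw [Finset.mem_finsupp_iff]
    exact ⟨(Finset.subset_biUnion_of_mem Finsupp.support hb).trans Finset.subset_union_right,
      fun p _ ↦ Set.mem_of_indicator_ne_zero hb0 p⟩
  · refine le_of_tendsto hmul.hasProd (eventually_atTop.mpr ⟨c, fun E hE ↦ ?_⟩)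
    rw [← hpartial hE]
    exact hr ⟨_, rfl⟩

end EulerProduct

section FullDigits

variable {P : Type*} {h : ℕ} {c : Finset P}

/-- The exponent vectors of `h`-full elements. -/
def IsFull (h : ℕ) (f : P →₀ ℕ) : Prop := ∀ p, f p = 0 ∨ h ≤ f p

open scoped Classical in
/-- A complete residue system modulo `h` such that the exponents allowed at `p` in an `h`-full
element divisible by all primes of `c` are exactly `h * a + k` with `a : ℕ` and
`k ∈ fullDigits h c p`. -/
def fullDigits (h : ℕ) (c : Finset P) (p : P) : Finset ℕ :=
  if p ∈ c then Finset.Ico h (2 * h) else insert 0 (Finset.Ioo h (2 * h))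

theorem zero_mem_fullDigits {p : P} (hp : p ∉ c) : 0 ∈ fullDigits h c p := by
  rw [fullDigits, if_neg hp]
  exact Finset.mem_insert_self _ _

theorem eq_zero_or_le_of_mem_fullDigits {p : P} {k : ℕ} (hk : k ∈ fullDigits h c p) :
    k = 0 ∧ p ∉ c ∨ h ≤ k := by
  unfold fullDigits at hk
  split_ifs at hk <;> grind

theorem exists_sub_mul_mem_fullDigits (hh : 0 < h) {p : P} {v : ℕ} (hv : v = 0 ∨ h ≤ v)
    (hvc : p ∈ c → v ≠ 0) : ∃ a, h * a ≤ v ∧ v - h * a ∈ fullDigits h c p := by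
  have hdiv := Nat.div_add_mod v h
  by_cases hdvd : p ∉ c ∧ h ∣ v
  · refine ⟨v / h, Nat.mul_div_le v h, ?_⟩
    rw [Nat.mul_div_cancel' hdvd.2, Nat.sub_self]
    exact zero_mem_fullDigits hdvd.1
  · have hv0 : v ≠ 0 := by
      rintro rfl
      exact hdvd ⟨fun hp ↦ hvc hp rfl, dvd_zero h⟩
    obtain ⟨a, ha⟩ := Nat.exists_eq_add_of_le ((Nat.one_le_div_iff hh).mpr (hv.resolve_left hv0))
    have hmod := Nat.mod_lt v hh
    have hsplit : h * a + (h + v % h) = v := by rw [ha, mul_add] at hdiv; omega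
    refine ⟨a, by omega, ?_⟩
    rw [show v - h * a = h + v % h by omega]
    unfold fullDigits
    split_ifs with hp
    · rw [Finset.mem_Ico]
      omega
    · have hmod0 : v % h ≠ 0 := fun h0 ↦ hdvd ⟨hp, Nat.dvd_of_mod_eq_zero h0⟩
      rw [Finset.mem_insert, Finset.mem_Ioo]
      omega

theorem eq_of_mem_fullDigits_of_mod_eq {p : P} {k k' : ℕ} (hk : k ∈ fullDigits h c p)
    (hk' : k' ∈ fullDigits h c p) (hmod : k % h = k' % h) : k = k' := by
  have hmod_eq {j : ℕ} (hj : h ≤ j) (hj' : j < 2 * h) : j % h = j - h := by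
    rw [Nat.mod_eq_sub_mod hj, Nat.mod_eq_of_lt (by omega)]
  unfold fullDigits at hk hk'
  split_ifs at hk hk' <;> grind [Nat.zero_mod]

theorem exists_smul_add_of_isFull (hh : 0 < h) {f : P →₀ ℕ} (hf : IsFull h f)
    (hfc : c ⊆ f.support) :
    ∃ a b : P →₀ ℕ, h • a + b = f ∧ ∀ p, b p ∈ fullDigits h c p := by
  choose a ha_le ha_mem using fun p ↦ exists_sub_mul_mem_fullDigits hh (hf p)
    (fun hp : p ∈ c ↦ Finsupp.mem_support_iff.mp (hfc hp))
  have ha_support (p : P) (hp : a p ≠ 0) : p ∈ f.support := by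
    rw [Finsupp.mem_support_iff]
    have := Nat.mul_pos hh (Nat.pos_of_ne_zero hp)
    have := ha_le p
    omega
  refine ⟨Finsupp.onFinset f.support a ha_support,
    f - h • Finsupp.onFinset f.support a ha_support, ?_, ha_mem⟩
  exact add_tsub_cancel_of_le ha_le

theorem isFull_smul_add {a b : P →₀ ℕ} (hb : ∀ p, b p ∈ fullDigits h c p) :
    IsFull h (h • a + b) := by
  intro p
  rw [Finsupp.add_apply, Finsupp.smul_apply, smul_eq_mul]
  rcases eq_zero_or_le_of_mem_fullDigits (hb p) with ⟨hzero, -⟩ | hle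
  · rcases Nat.eq_zero_or_pos (a p) with ha | ha
    · simp [ha, hzero]
    · exact Or.inr (le_add_right (Nat.le_mul_of_pos_right h ha))
  · exact Or.inr (le_add_left hle)

theorem subset_support_smul_add (hh : 0 < h) {a b : P →₀ ℕ} (hb : ∀ p, b p ∈ fullDigits h c p) :
    c ⊆ (h • a + b).support := by
  intro p hp
  have hle := (eq_zero_or_le_of_mem_fullDigits (hb p)).resolve_left fun h0 ↦ h0.2 hp
  rw [Finsupp.mem_support_iff, Finsupp.add_apply]
  omega

theorem smul_add_fullDigits_injective (hh : 0 < h) {a b a' b' : P →₀ ℕ}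
    (hb : ∀ p, b p ∈ fullDigits h c p) (hb' : ∀ p, b' p ∈ fullDigits h c p)
    (heq : h • a + b = h • a' + b') : b = b' ∧ a = a' := by
  have heq' (p : P) : h * a p + b p = h * a' p + b' p := by simpa using DFunLike.congr_fun heq p
  have hbb' : b = b' := by
    ext p
    refine eq_of_mem_fullDigits_of_mod_eq (hb p) (hb' p) ?_
    simpa [Nat.mul_add_mod] using congrArg (· % h) (heq' p)
  refine ⟨hbb', ?_⟩
  ext p
  have := heq' p
  rw [hbb', add_left_inj] at this
  exact Nat.eq_of_mul_eq_mul_left hh this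

end FullDigits

namespace BeurlingPrimes

variable {P : Type*} (S : BeurlingPrimes P) {h : ℕ} {c : Finset P} {s : ℝ} {f : P →₀ ℕ}

open scoped Classical in
/-- The `h`-full generalised integers of norm at most `exp (h * s)` that are divisible by all
primes of `c`. -/
def fullElems (h : ℕ) (c : Finset P) (s : ℝ) : Finset (P →₀ ℕ) :=
  {f ∈ S.elemsLE (h * s) | IsFull h f ∧ c ⊆ f.support}

variable {S} in
theorem mem_fullElems :
    f ∈ S.fullElems h c s ↔ S.height f ≤ h * s ∧ IsFull h f ∧ c ⊆ f.support := by
  simp only [fullElems, Finset.mem_filter, mem_elemsLE]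

open scoped Classical in
theorem card_fullElems (hh : 0 < h) (c : Finset P) (s : ℝ) : ((S.fullElems h c s).card : ℝ) =
    ∑ b ∈ S.elemsLE (h * s) with ∀ p, b p ∈ fullDigits h c p, S.count (s - S.height b / h) := by
  have hh' : (0 : ℝ) < h := Nat.cast_pos.mpr hh
  have hheight (a b : P →₀ ℕ) : S.height (h • a + b) = h * S.height a + S.height b := by
    rw [map_add, map_nsmul, nsmul_eq_mul]
  have hle_iff (a b : P →₀ ℕ) :
      S.height a ≤ s - S.height b / h ↔ h * S.height a + S.height b ≤ h * s := by
    rw [le_sub_iff_add_le, ← mul_le_mul_iff_right₀ hh', mul_add, mul_div_cancel₀ _ hh'.ne']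
  simp only [count]
  rw [← Nat.cast_sum, ← Finset.card_sigma]
  refine congrArg Nat.cast (Finset.card_bij (fun x _ ↦ h • x.2 + x.1) ?_ ?_ ?_).symm
  · rintro ⟨b, a⟩ hx
    simp only [Finset.mem_sigma, Finset.mem_filter, mem_elemsLE, hle_iff] at hx
    rw [mem_fullElems, hheight]
    exact ⟨hx.2, isFull_smul_add hx.1.2, subset_support_smul_add hh hx.1.2⟩
  · rintro ⟨b, a⟩ hx ⟨b', a'⟩ hx' heq
    simp only [Finset.mem_sigma, Finset.mem_filter] at hx hx'
    obtain ⟨rfl, rfl⟩ := smul_add_fullDigits_injective hh hx.1.2 hx'.1.2 heq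
    rfl
  · intro f hf
    obtain ⟨hfs, hfull, hfc⟩ := mem_fullElems.mp hf
    obtain ⟨a, b, rfl, hb⟩ := exists_smul_add_of_isFull hh hfull hfc
    rw [hheight] at hfs
    refine ⟨⟨b, a⟩, ?_, rfl⟩
    simp only [Finset.mem_sigma, Finset.mem_filter, mem_elemsLE, hle_iff]
    exact ⟨⟨by linarith [mul_nonneg hh'.le (S.height_nonneg a)], hb⟩, hfs⟩

theorem hasSum_indicator_count (hh : 0 < h) (c : Finset P) (s : ℝ) :
    HasSum ({b : P →₀ ℕ | ∀ p, b p ∈ fullDigits h c p}.indicator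
      fun b ↦ S.count (s - S.height b / h)) (S.fullElems h c s).card := by
  classical
  rw [S.card_fullElems hh, Finset.sum_filter]
  convert hasSum_sum_of_ne_finset_zero (L := .unconditional _) (s := S.elemsLE (h * s))
    fun b hb ↦ ?_ using 1
  · exact Finset.sum_congr rfl fun b _ ↦ by simp [Set.indicator_apply]
  · rw [mem_elemsLE, not_le, ← lt_div_iff₀' (Nat.cast_pos.mpr hh)] at hb
    rw [Set.indicator_apply, S.count_of_neg (sub_neg.mpr hb), ite_self]

end BeurlingPrimes

section LocalFactors

variable {h : ℕ} {u : ℝ}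

/-- The local factor at a prime `p` in the Euler product of `h`-full elements modulo `h`-th powers,
as a function of `u = N p ^ (-σ)`. -/
def fullFactor (h : ℕ) (u : ℝ) : ℝ := 1 + ∑ k ∈ Finset.Ioo h (2 * h), u ^ k

/-- The density, as a function of `u = N p ^ (-1 / h)`, of the multiples of a prime `p` among
`h`-full elements. -/
def fullDensity (h : ℕ) (u : ℝ) : ℝ := u ^ h / (1 - u + u ^ h)

theorem one_le_fullFactor (hu : 0 ≤ u) : 1 ≤ fullFactor h u :=
  le_add_of_nonneg_right (Finset.sum_nonneg fun _ _ ↦ by positivity)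

theorem one_sub_add_pow_pos (hu0 : 0 < u) (hu1 : u < 1) : 0 < 1 - u + u ^ h :=
  add_pos (sub_pos.mpr hu1) (pow_pos hu0 h)

theorem fullDensity_nonneg (hu0 : 0 < u) (hu1 : u < 1) : 0 ≤ fullDensity h u :=
  div_nonneg (pow_nonneg hu0.le h) (one_sub_add_pow_pos hu0 hu1).le

theorem fullDensity_le (hu0 : 0 < u) (hu1 : u < 1) : fullDensity h u ≤ u ^ h / (1 - u) :=
  div_le_div_of_nonneg_left (pow_nonneg hu0.le h) (sub_pos.mpr hu1)
    (le_add_of_nonneg_right (pow_nonneg hu0.le h))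

theorem fullDensity_eq (hu0 : 0 < u) (hu1 : u < 1) :
    fullDensity h u = u ^ h + fullDensity h u * u - fullDensity h u * u ^ h := by
  have := div_mul_cancel₀ (u ^ h) (one_sub_add_pow_pos (h := h) hu0 hu1).ne'
  rw [← fullDensity] at this
  linarith

theorem sum_Ico_pow_eq (hh : 0 < h) (u : ℝ) :
    ∑ k ∈ Finset.Ico h (2 * h), u ^ k = fullFactor h u - 1 + u ^ h := by
  rw [fullFactor, add_sub_cancel_left, ← Finset.Ioo_insert_left (by omega : h < 2 * h),
    Finset.sum_insert Finset.left_notMem_Ioo, add_comm]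

theorem fullFactor_eq (hh : 0 < h) (hu : u < 1) :
    fullFactor h u = (1 - u ^ h) * (1 - u + u ^ h) / (1 - u) := by
  have hgeom := geom_sum_Ico_mul_neg u (by omega : h ≤ 2 * h)
  rw [sum_Ico_pow_eq hh, two_mul, pow_add] at hgeom
  rw [eq_div_iff (sub_pos.mpr hu).ne']
  linarith

theorem sum_Ico_pow_eq_fullFactor_mul_fullDensity (hh : 0 < h) (hu0 : 0 < u) (hu1 : u < 1) :
    ∑ k ∈ Finset.Ico h (2 * h), u ^ k = fullFactor h u * fullDensity h u := by
  have h1u : 1 - u ≠ 0 := (sub_pos.mpr hu1).ne'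
  have hden : 1 - u + u ^ h ≠ 0 := (one_sub_add_pow_pos hu0 hu1).ne'
  rw [sum_Ico_pow_eq hh, fullFactor_eq hh hu1, fullDensity]
  field_simp
  ring

open scoped Classical in
theorem sum_fullDigits_pow {P : Type*} (hh : 0 < h) (c : Finset P) (p : P) (hu0 : 0 < u)
    (hu1 : u < 1) : ∑ k ∈ fullDigits h c p, u ^ k =
      fullFactor h u * if p ∈ c then fullDensity h u else 1 := by
  unfold fullDigits
  split_ifs with hp
  · exact sum_Ico_pow_eq_fullFactor_mul_fullDensity hh hu0 hu1
  · rw [Finset.sum_insert (by simp), pow_zero, mul_one, fullFactor]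

end LocalFactors

namespace BeurlingPrimes

variable {P : Type*} (S : BeurlingPrimes P) {h : ℕ} {σ : ℝ}

/-- The power `N p ^ (-σ)` of the norm of a generalised prime. -/
def normPow (σ : ℝ) (p : P) : ℝ := Real.exp (-σ * S.logNorm p)

theorem normPow_pos (σ : ℝ) (p : P) : 0 < S.normPow σ p := Real.exp_pos _

theorem normPow_le (hσ : 0 < σ) (p : P) : S.normPow σ p ≤ Real.exp (-(σ / 2)) := by
  rw [normPow, Real.exp_le_exp]
  nlinarith [S.half_lt_logNorm p]

theorem exp_neg_half_lt_one (hσ : 0 < σ) : Real.exp (-(σ / 2)) < 1 :=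
  Real.exp_lt_one_iff.mpr (by linarith)

theorem normPow_lt_one (hσ : 0 < σ) (p : P) : S.normPow σ p < 1 :=
  (S.normPow_le hσ p).trans_lt (exp_neg_half_lt_one hσ)

theorem normPow_pow (σ : ℝ) (p : P) (k : ℕ) :
    S.normPow σ p ^ k = Real.exp (-(σ * k) * S.logNorm p) := by
  rw [normPow, ← Real.exp_nat_mul]
  ring_nf

theorem prod_normPow_pow (σ : ℝ) (b : P →₀ ℕ) :
    b.prod (fun p k ↦ S.normPow σ p ^ k) = Real.exp (-σ * S.height b) := by
  rw [height, Finsupp.weight_apply, Finsupp.sum, Finset.mul_sum, Real.exp_sum]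
  refine Finset.prod_congr rfl fun p _ ↦ ?_
  beta_reduce
  rw [normPow_pow, nsmul_eq_mul]
  ring_nf

theorem summable_fullFactor_sub_one (hσ : 1 < σ * (h + 1)) :
    Summable fun p ↦ fullFactor h (S.normPow σ p) - 1 := by
  have hσ0 : 0 < σ := pos_of_mul_pos_left (zero_lt_one.trans hσ) (by positivity)
  refine Summable.of_nonneg_of_le (fun p ↦ sub_nonneg.mpr (one_le_fullFactor
    (S.normPow_pos σ p).le)) (fun p ↦ ?_)
    ((S.summable_exp_neg_one_add (sub_pos.mpr hσ)).mul_left (h : ℝ))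
  have hterm (k : ℕ) (hk : k ∈ Finset.Ioo h (2 * h)) :
      S.normPow σ p ^ k ≤ S.normPow σ p ^ (h + 1) :=
    pow_le_pow_of_le_one (S.normPow_pos σ p).le (S.normPow_lt_one hσ0 p).le
      (Finset.mem_Ioo.mp hk).1
  calc fullFactor h (S.normPow σ p) - 1 = ∑ k ∈ Finset.Ioo h (2 * h), S.normPow σ p ^ k :=
        add_sub_cancel_left _ _
    _ ≤ (Finset.Ioo h (2 * h)).card • S.normPow σ p ^ (h + 1) :=
        Finset.sum_le_card_nsmul _ _ _ hterm
    _ ≤ h * S.normPow σ p ^ (h + 1) := by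
        rw [nsmul_eq_mul]
        refine mul_le_mul_of_nonneg_right (Nat.cast_le.mpr ?_)
          (pow_nonneg (S.normPow_pos σ p).le _)
        rw [Nat.card_Ioo]
        omega
    _ = h * Real.exp (-(1 + (σ * (h + 1) - 1)) * S.logNorm p) := by
        rw [normPow_pow, add_sub_cancel, Nat.cast_succ]

theorem multipliable_fullFactor (hσ : 1 < σ * (h + 1)) :
    Multipliable fun p ↦ fullFactor h (S.normPow σ p) := by
  simpa using Real.multipliable_one_add_of_summable (S.summable_fullFactor_sub_one hσ)

theorem hasProd_sum_fullDigits (hh : 0 < h) (hσ : 1 < σ * (h + 1)) (c : Finset P) :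
    HasProd (fun p ↦ ∑ k ∈ fullDigits h c p, S.normPow σ p ^ k)
      ((∏' p, fullFactor h (S.normPow σ p)) * ∏ p ∈ c, fullDensity h (S.normPow σ p)) := by
  classical
  have hσ0 : 0 < σ := pos_of_mul_pos_left (zero_lt_one.trans hσ) (by positivity)
  have hc : HasProd (fun p ↦ if p ∈ c then fullDensity h (S.normPow σ p) else 1)
      (∏ p ∈ c, fullDensity h (S.normPow σ p)) := by
    rw [Finset.prod_congr rfl fun p hp ↦ (if_pos hp).symm]
    exact hasProd_prod_of_ne_finset_one fun p hp ↦ if_neg hp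
  simpa only [sum_fullDigits_pow hh c _ (S.normPow_pos σ _) (S.normPow_lt_one hσ0 _)] using
    (S.multipliable_fullFactor hσ).hasProd.mul hc

theorem hasSum_indicator_exp_neg_height (hh : 0 < h) (hσ : 1 < σ * (h + 1)) (c : Finset P) :
    HasSum ({b : P →₀ ℕ | ∀ p, b p ∈ fullDigits h c p}.indicator
      fun b ↦ Real.exp (-σ * S.height b))
      ((∏' p, fullFactor h (S.normPow σ p)) * ∏ p ∈ c, fullDensity h (S.normPow σ p)) := by
  have hprod := S.hasProd_sum_fullDigits hh hσ c
  rw [← hprod.tprod_eq]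
  simp only [← prod_normPow_pow]
  exact hasSum_indicator_finsupp_prod (fun _ ↦ pow_zero _)
    (fun p k ↦ pow_nonneg (S.normPow_pos σ p).le k) (fun _ hp ↦ zero_mem_fullDigits hp)
    hprod.multipliable

theorem fullDensity_normPow_le (hσ : 0 < σ) (h : ℕ) (p : P) : fullDensity h (S.normPow σ p) ≤
    (1 - Real.exp (-(σ / 2)))⁻¹ * Real.exp (-(σ * h) * S.logNorm p) := by
  rw [← normPow_pow, ← div_eq_inv_mul]
  refine (fullDensity_le (S.normPow_pos σ p) (S.normPow_lt_one hσ p)).trans ?_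
  exact div_le_div_of_nonneg_left (pow_nonneg (S.normPow_pos σ p).le h)
    (sub_pos.mpr (exp_neg_half_lt_one hσ)) (sub_le_sub_left (S.normPow_le hσ p) 1)

theorem abs_count_sub_le_of_le {d : ℝ} (hd : 0 ≤ d) (hdδ : d ≤ S.δ) (s : ℝ) :
    |S.count s - S.κ * Real.exp s| ≤ (S.κ + S.C) * Real.exp ((1 - d) * s) := by
  have hκ := S.κ_pos
  have hC := S.C_nonneg
  rcases lt_or_ge s 0 with hs | hs
  · rw [S.count_of_neg hs, zero_sub, abs_neg, abs_of_pos (by positivity)]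
    gcongr
    · linarith
    · nlinarith
  · refine (S.abs_count_sub_le s).trans ?_
    gcongr
    linarith

/-- The density of the multiples of a prime among the `h`-full elements. -/
def density (h : ℕ) (p : P) : ℝ := fullDensity h (S.normPow (1 / h) p)

/-- The constant `γ_h`: the number of `h`-full elements of norm at most `x` is asymptotic to
`κ * γ_h * x ^ (1 / h)`. -/
def fullConstant (h : ℕ) : ℝ := ∏' p, fullFactor h (S.normPow (1 / h) p)

theorem one_le_tprod_fullFactor {σ : ℝ} (hσ : 1 < σ * (h + 1)) :
    1 ≤ ∏' p, fullFactor h (S.normPow σ p) :=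
  ge_of_tendsto' (S.multipliable_fullFactor hσ).hasProd fun _ ↦
    Finset.prod_induction _ (1 ≤ ·) (fun _ _ ↦ one_le_mul_of_one_le_of_one_le) le_rfl
      fun p _ ↦ one_le_fullFactor (S.normPow_pos σ p).le

theorem abs_card_fullElems_sub_le_mul {d : ℝ} (hh : 0 < h) (hd : 0 ≤ d) (hdδ : d ≤ S.δ)
    (hdh : 1 < (1 - d) / h * (h + 1)) (c : Finset P) (s : ℝ) :
    |(S.fullElems h c s).card - S.κ * Real.exp s * (S.fullConstant h * ∏ p ∈ c, S.density h p)| ≤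
      (S.κ + S.C) * Real.exp ((1 - d) * s) *
        ((∏' p, fullFactor h (S.normPow ((1 - d) / h) p)) *
          ∏ p ∈ c, fullDensity h (S.normPow ((1 - d) / h) p)) := by
  have hh' : (0 : ℝ) < h := Nat.cast_pos.mpr hh
  have h1 : 1 < 1 / (h : ℝ) * (h + 1) := by
    rw [div_mul_eq_mul_div, one_mul, one_lt_div hh']
    linarith
  have hcount := S.hasSum_indicator_count hh c s
  have hmain := (S.hasSum_indicator_exp_neg_height hh h1 c).mul_left (S.κ * Real.exp s)
  have herror := (S.hasSum_indicator_exp_neg_height hh hdh c).mul_left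
    ((S.κ + S.C) * Real.exp ((1 - d) * s))
  refine (hcount.sub hmain).norm_le_of_bounded herror fun b ↦ ?_
  by_cases hb : b ∈ {b : P →₀ ℕ | ∀ p, b p ∈ fullDigits h c p}
  · have hbound := S.abs_count_sub_le_of_le hd hdδ (s - S.height b / h)
    rw [Set.indicator_of_mem hb, Set.indicator_of_mem hb, Set.indicator_of_mem hb,
      Real.norm_eq_abs, mul_assoc, mul_assoc, ← Real.exp_add, ← Real.exp_add]
    convert hbound using 3 <;> ring_nf
  · simp [Set.indicator_of_notMem hb]

theorem prod_fullDensity_le {σ : ℝ} (hσ : 0 < σ) (h : ℕ) (c : Finset P) :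
    ∏ p ∈ c, fullDensity h (S.normPow σ p) ≤
      (1 - Real.exp (-(σ / 2)))⁻¹ ^ c.card * Real.exp (-(σ * h) * ∑ p ∈ c, S.logNorm p) := by
  rw [Finset.mul_sum, Real.exp_sum, ← Finset.prod_const, ← Finset.prod_mul_distrib]
  exact Finset.prod_le_prod
    (fun p _ ↦ fullDensity_nonneg (S.normPow_pos σ p) (S.normPow_lt_one hσ p))
    fun p _ ↦ S.fullDensity_normPow_le hσ h p

theorem exp_mul_exp_sum_logNorm (d : ℝ) (c : Finset P) (s : ℝ) :
    Real.exp ((1 - d) * s) * Real.exp (-(1 - d) * ∑ p ∈ c, S.logNorm p) =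
      Real.exp s * ((∏ p ∈ c, S.invNorm p) * Real.exp (-d * (s - ∑ p ∈ c, S.logNorm p))) := by
  simp only [invNorm]
  rw [← Real.exp_sum, Finset.sum_neg_distrib, ← Real.exp_add, ← Real.exp_add, ← Real.exp_add]
  ring_nf

theorem exists_abs_card_fullElems_sub_le (hh : 0 < h) :
    ∃ d > 0, ∃ C > 0, ∃ D > 0, ∀ (c : Finset P) (s : ℝ),
      |(S.fullElems h c s).card - S.κ * Real.exp s * (S.fullConstant h * ∏ p ∈ c, S.density h p)| ≤
        C * D ^ c.card * Real.exp s *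
          ((∏ p ∈ c, S.invNorm p) * Real.exp (-d * (s - ∑ p ∈ c, S.logNorm p))) := by
  have hh' : (1 : ℝ) ≤ h := Nat.one_le_cast.mpr hh
  set d := min S.δ (1 / (2 * h + 2))
  have hd : 0 < d := lt_min S.δ_pos (by positivity)
  have hd_le : d * (2 * h + 2) ≤ 1 := by
    rw [← le_div_iff₀ (by positivity)]
    exact min_le_right _ _
  set σ := (1 - d) / h with hσ_def
  have hσh : σ * h = 1 - d := div_mul_cancel₀ _ (by positivity)
  have hσ : 0 < σ := div_pos (by nlinarith [hh']) (by positivity)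
  have hσ1 : 1 < σ * (h + 1) := by
    rw [hσ_def, div_mul_eq_mul_div, one_lt_div (by positivity)]
    nlinarith
  set Z := ∏' p, fullFactor h (S.normPow σ p)
  have hZ : 0 < Z := one_pos.trans_le (S.one_le_tprod_fullFactor hσ1)
  refine ⟨d, hd, (S.κ + S.C) * Z, mul_pos S.κ_add_C_pos hZ, (1 - Real.exp (-(σ / 2)))⁻¹,
    inv_pos.mpr (sub_pos.mpr (exp_neg_half_lt_one hσ)), fun c s ↦ ?_⟩
  have hκC := S.κ_add_C_pos
  calc _ ≤ (S.κ + S.C) * Real.exp ((1 - d) * s) *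
        (Z * ∏ p ∈ c, fullDensity h (S.normPow σ p)) :=
        S.abs_card_fullElems_sub_le_mul hh hd.le (min_le_left _ _) hσ1 c s
    _ ≤ (S.κ + S.C) * Real.exp ((1 - d) * s) * (Z * ((1 - Real.exp (-(σ / 2)))⁻¹ ^ c.card *
          Real.exp (-(σ * h) * ∑ p ∈ c, S.logNorm p))) := by
        gcongr
        exact S.prod_fullDensity_le hσ h c
    _ = _ := by
        rw [hσh]
        linear_combination (S.κ + S.C) * Z * (1 - Real.exp (-(σ / 2)))⁻¹ ^ c.card *
          S.exp_mul_exp_sum_logNorm d c s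

variable {S} {c : Finset P} {s : ℝ} {f : P →₀ ℕ}

theorem sum_logNorm_le_of_mem_fullElems (hh : 0 < h) (hf : f ∈ S.fullElems h c s) :
    ∑ p ∈ c, S.logNorm p ≤ s := by
  obtain ⟨hfs, hfull, hfc⟩ := mem_fullElems.mp hf
  refine le_of_mul_le_mul_left (le_trans ?_ hfs) (Nat.cast_pos.mpr hh : (0 : ℝ) < h)
  rw [Finset.mul_sum, height, Finsupp.weight_apply, Finsupp.sum]
  refine (Finset.sum_le_sum fun p hp ↦ ?_).trans (Finset.sum_le_sum_of_subset_of_nonneg hfc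
    fun p _ _ ↦ nsmul_nonneg (S.logNorm_pos p).le _)
  rw [nsmul_eq_mul]
  exact mul_le_mul_of_nonneg_right (Nat.cast_le.mpr
    ((hfull p).resolve_left (Finsupp.mem_support_iff.mp (hfc hp)))) (S.logNorm_pos p).le

theorem mem_fullElems_of_subset_support (hf : f ∈ S.fullElems h ∅ s) (hc : c ⊆ f.support) :
    f ∈ S.fullElems h c s :=
  have hmem := mem_fullElems.mp hf
  mem_fullElems.mpr ⟨hmem.1, hmem.2.1, hc⟩

variable (S)

open scoped Classical in
theorem sum_card_fullElems {ι : Type*} (I : Finset ι) (c : ι → Finset P) (h : ℕ) (s : ℝ) :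
    ∑ i ∈ I, ((S.fullElems h (c i) s).card : ℝ) =
      ∑ f ∈ S.fullElems h ∅ s, ({i ∈ I | c i ⊆ f.support}.card : ℝ) := by
  simp only [Finset.card_filter, Nat.cast_sum]
  rw [Finset.sum_comm]
  refine Finset.sum_congr rfl fun i _ ↦ ?_
  rw [← Nat.cast_sum, ← Finset.card_filter]
  congr 2
  ext f
  simp [mem_fullElems, and_assoc]

theorem sum_card_support (hh : 0 < h) (s : ℝ) :
    ∑ f ∈ S.fullElems h ∅ s, (f.support.card : ℝ) =
      ∑ p ∈ S.primesLE s, ((S.fullElems h {p} s).card : ℝ) := by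
  classical
  rw [sum_card_fullElems]
  refine Finset.sum_congr rfl fun f hf ↦ ?_
  congr 2
  ext p
  rw [Finset.mem_filter, Finset.singleton_subset_iff, mem_primesLE, iff_and_self]
  intro hp
  simpa using sum_logNorm_le_of_mem_fullElems hh
    (mem_fullElems_of_subset_support hf (Finset.singleton_subset_iff.mpr hp))

open scoped Classical in
theorem sum_card_offDiag_support (hh : 0 < h) (s : ℝ) :
    ∑ f ∈ S.fullElems h ∅ s, (f.support.offDiag.card : ℝ) =
      ∑ x ∈ S.pairsLE s with x.1 ≠ x.2, ((S.fullElems h {x.1, x.2} s).card : ℝ) := by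
  rw [sum_card_fullElems]
  refine Finset.sum_congr rfl fun f hf ↦ ?_
  congr 2
  ext x
  rw [Finset.mem_offDiag, Finset.filter_filter, Finset.mem_filter, Finset.insert_subset_iff,
    Finset.singleton_subset_iff, mem_pairsLE]
  refine ⟨fun ⟨h₁, h₂, hne⟩ ↦ ⟨?_, hne, h₁, h₂⟩, fun ⟨_, hne, h₁, h₂⟩ ↦ ⟨h₁, h₂, hne⟩⟩
  simpa [Finset.sum_pair hne] using sum_logNorm_le_of_mem_fullElems hh
    (mem_fullElems_of_subset_support hf
      (Finset.insert_subset h₁ (Finset.singleton_subset_iff.mpr h₂)))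

open scoped Classical in
theorem sum_pairsLE_ne (ρ : P → ℝ) (s : ℝ) :
    ∑ x ∈ S.pairsLE s with x.1 ≠ x.2, ρ x.1 * ρ x.2 =
      S.primePairSum ρ s - S.primeSum (fun p ↦ ρ p ^ 2) (s / 2) := by
  have hdiag : ∑ x ∈ S.pairsLE s with ¬ x.1 ≠ x.2, ρ x.1 * ρ x.2 =
      S.primeSum (fun p ↦ ρ p ^ 2) (s / 2) := by
    refine Finset.sum_nbij' Prod.fst (fun p ↦ (p, p)) (fun x hx ↦ ?_) (fun p hp ↦ ?_)
      (fun x hx ↦ ?_) (fun p _ ↦ rfl) (fun x hx ↦ ?_)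
    · rw [Finset.mem_filter, mem_pairsLE, not_not] at hx
      rw [mem_primesLE]
      linarith [congrArg S.logNorm hx.2]
    · rw [mem_primesLE] at hp
      rw [Finset.mem_filter, mem_pairsLE, not_not]
      exact ⟨by linarith, rfl⟩
    · exact Prod.ext rfl (not_not.mp (Finset.mem_filter.mp hx).2)
    · rw [← not_not.mp (Finset.mem_filter.mp hx).2, sq]
  rw [← hdiag, primePairSum,
    ← Finset.sum_filter_add_sum_filter_not (S.pairsLE s) (fun x ↦ x.1 ≠ x.2), add_sub_cancel_right]

theorem exists_abs_sum_card_support_sub_le (hh : 0 < h) : ∃ C > 0, ∀ s : ℝ, 0 < s →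
    |∑ f ∈ S.fullElems h ∅ s, (f.support.card : ℝ) -
      S.κ * Real.exp s * (S.fullConstant h * S.primeSum (S.density h) s)| ≤
        C * (Real.exp s / s) := by
  obtain ⟨d, hd, C, hC, D, hD, hcard⟩ := S.exists_abs_card_fullElems_sub_le hh
  obtain ⟨E, hE, hshell⟩ := S.exists_sum_invNorm_mul_exp_le hd
  refine ⟨C * D * E, by positivity, fun s hs ↦ ?_⟩
  rw [S.sum_card_support hh, primeSum, Finset.mul_sum, Finset.mul_sum, ← Finset.sum_sub_distrib]
  calc _ ≤ ∑ p ∈ S.primesLE s, C * D * Real.exp s *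
        (S.invNorm p * Real.exp (-d * (s - S.logNorm p))) :=
        (Finset.abs_sum_le_sum_abs _ _).trans
          (Finset.sum_le_sum fun p _ ↦ by simpa using hcard {p} s)
    _ ≤ C * D * Real.exp s * (E / s) := by
        rw [← Finset.mul_sum]
        gcongr
        exact hshell s hs
    _ = _ := by ring

variable {S} in
theorem HasMertensConstant.exists_abs_sum_card_offDiag_support_sub_le {M : ℝ}
    (hM : S.HasMertensConstant S.invNorm M) (hh : 0 < h) : ∃ C > 0, ∀ s : ℝ, 2 ≤ s →
    |∑ f ∈ S.fullElems h ∅ s, (f.support.offDiag.card : ℝ) -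
      S.κ * Real.exp s * (S.fullConstant h * (S.primePairSum (S.density h) s -
        S.primeSum (fun p ↦ S.density h p ^ 2) (s / 2)))| ≤
          C * (Real.exp s * (Real.log s / s)) := by
  classical
  obtain ⟨d, hd, C, hC, D, hD, hcard⟩ := S.exists_abs_card_fullElems_sub_le hh
  obtain ⟨E, hE, hshell⟩ := hM.exists_sum_pairsLE_exp_le hd
  refine ⟨C * D ^ 2 * E, by positivity, fun s hs ↦ ?_⟩
  rw [S.sum_card_offDiag_support hh, ← sum_pairsLE_ne, Finset.mul_sum, Finset.mul_sum,
    ← Finset.sum_sub_distrib]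
  have hinvNorm (p : P) := S.invNorm_pos p
  calc _ ≤ ∑ x ∈ S.pairsLE s with x.1 ≠ x.2, C * D ^ 2 * Real.exp s *
        (S.invNorm x.1 * S.invNorm x.2 *
          Real.exp (-d * (s - (S.logNorm x.1 + S.logNorm x.2)))) := by
        refine (Finset.abs_sum_le_sum_abs _ _).trans (Finset.sum_le_sum fun x hx ↦ ?_)
        have hne := (Finset.mem_filter.mp hx).2
        simpa only [Finset.sum_pair hne, Finset.prod_pair hne, Finset.card_pair hne] using
          hcard {x.1, x.2} s
    _ ≤ ∑ x ∈ S.pairsLE s, C * D ^ 2 * Real.exp s * (S.invNorm x.1 * S.invNorm x.2 *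
          Real.exp (-d * (s - (S.logNorm x.1 + S.logNorm x.2)))) :=
        Finset.sum_le_sum_of_subset_of_nonneg (Finset.filter_subset _ _) fun x _ _ ↦ by
          have := hinvNorm x.1
          have := hinvNorm x.2
          positivity
    _ ≤ C * D ^ 2 * Real.exp s * (E * (Real.log s / s)) := by
        rw [← Finset.mul_sum]
        gcongr
        exact hshell s hs
    _ = _ := by ring

end BeurlingPrimes

/-! ## The second moment for prime systems -/

namespace BeurlingPrimes

variable {P : Type*} (S : BeurlingPrimes P) {h : ℕ}

theorem exp_neg_mul_le_inv_div {τ s : ℝ} (hτ : 0 < τ) (hs : 0 < s) :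
    Real.exp (-τ * s) ≤ τ⁻¹ / s := by
  rw [neg_mul, Real.exp_neg, ← one_div, ← one_div, div_div]
  exact one_div_le_one_div_of_le (mul_pos hτ hs) (by linarith [Real.add_one_le_exp (τ * s)])

theorem exists_abs_primeSum_sub_tsum_le {x : P → ℝ} {D τ : ℝ} (hτ : 0 < τ)
    (hx : ∀ p, |x p| ≤ D * Real.exp (-(1 + τ) * S.logNorm p)) :
    ∃ C > 0, ∀ s : ℝ, 0 < s → |S.primeSum x s - ∑' p, x p| ≤ C / s := by
  have hxsum : Summable x := .of_norm_bounded ((S.summable_exp_neg_one_add hτ).mul_left D) hx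
  have hnonneg (p : P) : 0 ≤ D := nonneg_of_mul_nonneg_left ((abs_nonneg _).trans (hx p))
    (Real.exp_pos _)
  set Z := ∑' p, D * Real.exp (-(1 + τ / 2) * S.logNorm p)
  have hZ : 0 ≤ Z := tsum_nonneg fun p ↦ mul_nonneg (hnonneg p) (Real.exp_pos _).le
  refine ⟨Z * (τ / 2)⁻¹ + 1, by positivity, fun s hs ↦ ?_⟩
  have htail := (hxsum.hasSum.sub (hasSum_sum_of_ne_finset_zero (L := .unconditional _)
    (f := (S.primesLE s : Set P).indicator x) (s := S.primesLE s)
      fun p hp ↦ Set.indicator_of_notMem hp x)).norm_le_of_bounded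
    (((S.summable_exp_neg_one_add (half_pos hτ)).mul_left D).hasSum.mul_left
      (Real.exp (-(τ / 2) * s))) fun p ↦ ?_
  · rw [Finset.sum_indicator_subset x subset_rfl, Real.norm_eq_abs, abs_sub_comm] at htail
    calc |S.primeSum x s - ∑' p, x p| ≤ Real.exp (-(τ / 2) * s) * Z := htail
      _ ≤ (τ / 2)⁻¹ / s * Z := by
          gcongr
          exact exp_neg_mul_le_inv_div (half_pos hτ) hs
      _ = Z * (τ / 2)⁻¹ / s := by ring
      _ ≤ _ := by gcongr; linarith
  · by_cases hp : p ∈ S.primesLE s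
    · rw [Set.indicator_of_mem (Finset.mem_coe.mpr hp), sub_self, norm_zero]
      exact mul_nonneg (Real.exp_pos _).le (mul_nonneg (hnonneg p) (Real.exp_pos _).le)
    · rw [Set.indicator_of_notMem (Finset.mem_coe.not.mpr hp), sub_zero, Real.norm_eq_abs,
        mul_left_comm, ← Real.exp_add]
      refine (hx p).trans (mul_le_mul_of_nonneg_left (Real.exp_le_exp.mpr ?_) (hnonneg p))
      rw [mem_primesLE, not_le] at hp
      nlinarith

theorem density_nonneg (hh : 0 < h) (p : P) : 0 ≤ S.density h p :=
  have hσ : (0 : ℝ) < 1 / h := by positivity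
  fullDensity_nonneg (S.normPow_pos _ p) (S.normPow_lt_one hσ p)

theorem normPow_one_div_pow (hh : 0 < h) (p : P) : S.normPow (1 / h) p ^ h = S.invNorm p := by
  rw [normPow_pow, one_div_mul_cancel (Nat.cast_pos.mpr hh).ne', neg_one_mul, invNorm]

theorem invNorm_le_normPow_one_div (hh : 0 < h) (p : P) : S.invNorm p ≤ S.normPow (1 / h) p := by
  have hσ : (0 : ℝ) < 1 / h := by positivity
  rw [← S.normPow_one_div_pow hh]
  exact pow_le_of_le_one (S.normPow_pos _ p).le (S.normPow_lt_one hσ p).le hh.ne'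

theorem density_eq (hh : 0 < h) (p : P) : S.density h p =
    S.invNorm p + S.density h p * S.normPow (1 / h) p - S.density h p * S.invNorm p := by
  have hσ : (0 : ℝ) < 1 / h := by positivity
  simpa only [density, S.normPow_one_div_pow hh] using
    fullDensity_eq (h := h) (S.normPow_pos (1 / h) p) (S.normPow_lt_one hσ p)

theorem exists_density_le (hh : 0 < h) : ∃ D > 0, ∀ p, S.density h p ≤ D * S.invNorm p := by
  have hσ : (0 : ℝ) < 1 / h := by positivity
  refine ⟨(1 - Real.exp (-(1 / h / 2)))⁻¹, inv_pos.mpr (sub_pos.mpr (exp_neg_half_lt_one hσ)),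
    fun p ↦ ?_⟩
  refine (S.fullDensity_normPow_le hσ h p).trans_eq ?_
  rw [← normPow_pow, S.normPow_one_div_pow hh]

theorem invNorm_mul_normPow (σ : ℝ) (p : P) :
    S.invNorm p * S.normPow σ p = Real.exp (-(1 + σ) * S.logNorm p) := by
  rw [invNorm, normPow, ← Real.exp_add]
  ring_nf

theorem exists_abs_primeSum_density_mul_sub_le (hh : 0 < h) {x : P → ℝ} {D : ℝ}
    (hx0 : ∀ p, 0 ≤ x p) (hx : ∀ p, x p ≤ D * S.normPow (1 / h) p) :
    ∃ C > 0, ∀ s : ℝ, 0 < s → |S.primeSum (fun p ↦ S.density h p * x p) s -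
      ∑' p, S.density h p * x p| ≤ C / s := by
  obtain ⟨E, hE, hdensity⟩ := S.exists_density_le hh
  have hτ : (0 : ℝ) < 1 / h := by positivity
  refine S.exists_abs_primeSum_sub_tsum_le (D := E * D) hτ fun p ↦ ?_
  rw [abs_of_nonneg (mul_nonneg (S.density_nonneg hh p) (hx0 p)), ← invNorm_mul_normPow,
    mul_mul_mul_comm]
  exact mul_le_mul (hdensity p) (hx p) (hx0 p) (mul_nonneg hE.le (S.invNorm_pos p).le)

/-- The Mertens constant of the densities of `h`-full elements in terms of the Mertens constant
`A` of the inverse norms. -/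
def densityMertens (h : ℕ) (A : ℝ) : ℝ :=
  A + ∑' p, S.density h p * S.normPow (1 / h) p - ∑' p, S.density h p * S.invNorm p

variable {S} {A : ℝ}

theorem HasMertensConstant.density (hA : S.HasMertensConstant S.invNorm A) (hh : 0 < h) :
    S.HasMertensConstant (S.density h) (S.densityMertens h A) := by
  obtain ⟨C₀, hC₀, h₀⟩ := hA
  obtain ⟨C₁, hC₁, h₁⟩ := S.exists_abs_primeSum_density_mul_sub_le hh
    (fun p ↦ (S.normPow_pos (1 / h) p).le) (fun p ↦ (one_mul (S.normPow (1 / h) p)).ge)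
  obtain ⟨C₂, hC₂, h₂⟩ := S.exists_abs_primeSum_density_mul_sub_le hh
    (fun p ↦ (S.invNorm_pos p).le)
    (fun p ↦ (S.invNorm_le_normPow_one_div hh p).trans (one_mul (S.normPow (1 / h) p)).ge)
  refine ⟨C₀ + C₁ + C₂, by positivity, fun s hs ↦ ?_⟩
  have hsplit : S.primeSum (S.density h) s = S.primeSum S.invNorm s +
      S.primeSum (fun p ↦ S.density h p * S.normPow (1 / h) p) s -
        S.primeSum (fun p ↦ S.density h p * S.invNorm p) s := by
    simp only [primeSum]
    rw [← Finset.sum_add_distrib, ← Finset.sum_sub_distrib]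
    exact Finset.sum_congr rfl fun p _ ↦ S.density_eq hh p
  have hs0 : 0 < s := by linarith
  have b₀ := abs_le.mp (h₀ s hs)
  have b₁ := abs_le.mp (h₁ s hs0)
  have b₂ := abs_le.mp (h₂ s hs0)
  rw [hsplit, densityMertens, add_div, add_div, abs_le]
  constructor <;> linarith

variable (S) in
theorem exists_abs_primeSum_density_sq_sub_le (hh : 0 < h) : ∃ C > 0, ∀ s : ℝ, 0 < s →
    |S.primeSum (fun p ↦ S.density h p ^ 2) s - ∑' p, S.density h p ^ 2| ≤ C / s := by
  obtain ⟨D, hD, hdensity⟩ := S.exists_density_le hh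
  simp only [sq]
  exact S.exists_abs_primeSum_density_mul_sub_le hh (S.density_nonneg hh) fun p ↦
    (hdensity p).trans (mul_le_mul_of_nonneg_left (S.invNorm_le_normPow_one_div hh p) hD.le)

variable (S) in
/-- The main term of the mean square of the number of prime factors over `h`-full elements of norm
at most `exp (h * s)`. -/
def meanSquareMain (h : ℕ) (A s : ℝ) : ℝ :=
  (Real.log s + S.densityMertens h A) ^ 2 - Real.pi ^ 2 / 6 +
    (Real.log s + S.densityMertens h A) - ∑' p, S.density h p ^ 2

theorem HasMertensConstant.exists_abs_sub_meanSquareMain_le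
    (hA : S.HasMertensConstant S.invNorm A) (hh : 0 < h) : ∃ C > 0, ∀ s : ℝ, 2 ≤ s →
      |S.primeSum (S.density h) s + (S.primePairSum (S.density h) s -
        S.primeSum (fun p ↦ S.density h p ^ 2) (s / 2)) - S.meanSquareMain h A s| ≤
          C * (Real.log s / s) := by
  obtain ⟨C₁, hC₁, h₁⟩ := hA.density hh
  obtain ⟨C₂, hC₂, h₂⟩ := (hA.density hh).exists_abs_primePairSum_sub_le (S.density_nonneg hh)
  obtain ⟨C₃, hC₃, h₃⟩ := S.exists_abs_primeSum_density_sq_sub_le hh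
  refine ⟨2 * C₁ + C₂ + 4 * C₃, by positivity, fun s hs ↦ ?_⟩
  have hl := one_div_le_two_mul_log_div hs
  have b₁ := (h₁ s (by linarith)).trans_eq (div_eq_mul_one_div C₁ s)
  have b₃ := (h₃ (s / 2) (by linarith)).trans_eq
    (by field_simp : C₃ / (s / 2) = 2 * C₃ * (1 / s))
  have c₁ := b₁.trans (mul_le_mul_of_nonneg_left hl hC₁.le)
  have c₃ := b₃.trans (mul_le_mul_of_nonneg_left hl (by positivity))
  rw [abs_le] at c₁ c₃
  have c₂ := abs_le.mp (h₂ s hs)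
  rw [meanSquareMain, abs_le]
  constructor <;> linarith

theorem card_sq_eq_card_add_card_offDiag (c : Finset P) :
    (c.card : ℝ) ^ 2 = c.card + c.offDiag.card := by
  classical
  rw [Finset.offDiag_card, Nat.cast_sub (Nat.le_mul_self _), Nat.cast_mul]
  ring

theorem HasMertensConstant.exists_abs_sum_card_support_sq_sub_le
    (hA : S.HasMertensConstant S.invNorm A) (hh : 0 < h) : ∃ C > 0, ∀ s : ℝ, 2 ≤ s →
      |∑ f ∈ S.fullElems h ∅ s, (f.support.card : ℝ) ^ 2 -
        S.κ * S.fullConstant h * Real.exp s * S.meanSquareMain h A s| ≤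
          C * (Real.exp s * (Real.log s / s)) := by
  classical
  obtain ⟨C₁, hC₁, h₁⟩ := S.exists_abs_sum_card_support_sub_le hh
  obtain ⟨C₂, hC₂, h₂⟩ := hA.exists_abs_sum_card_offDiag_support_sub_le hh
  obtain ⟨C₃, hC₃, h₃⟩ := hA.exists_abs_sub_meanSquareMain_le hh
  refine ⟨2 * C₁ + C₂ + |S.κ * S.fullConstant h| * C₃, by positivity, fun s hs ↦ ?_⟩
  have b₁ : C₁ * (Real.exp s / s) ≤ 2 * C₁ * (Real.exp s * (Real.log s / s)) :=
    calc C₁ * (Real.exp s / s) = C₁ * Real.exp s * (1 / s) := by ring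
      _ ≤ C₁ * Real.exp s * (2 * (Real.log s / s)) := by
          gcongr
          exact one_div_le_two_mul_log_div hs
      _ = _ := by ring
  have b₃ := mul_le_mul_of_nonneg_left (h₃ s hs)
    (abs_nonneg (S.κ * S.fullConstant h * Real.exp s))
  rw [← abs_mul, abs_mul _ (Real.exp s), Real.abs_exp] at b₃
  simp_rw [card_sq_eq_card_add_card_offDiag]
  rw [Finset.sum_add_distrib, add_mul, add_mul]
  refine le_trans (le_of_eq ?_) ((abs_add_three _ _ _).trans (add_le_add (add_le_add
    ((h₁ s (by linarith)).trans b₁) (h₂ s hs)) (b₃.trans_eq (by ring))))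
  ring_nf

end BeurlingPrimes

/-! ## Prime ideals of a number field -/

section DedekindDomain

open UniqueFactorizationMonoid

variable {R : Type*} [CommRing R]

/-- The nonzero prime ideals, indexing the primes of the system attached to a ring. -/
abbrev PrimeIdeal (R : Type*) [CommRing R] : Type _ := {p : Ideal R // p.IsPrime ∧ p ≠ ⊥}

/-- The ideal whose exponents in the factorisation into prime ideals are given by `f`. -/
def primeIdealProd (f : PrimeIdeal R →₀ ℕ) : Ideal R := f.prod fun p k ↦ p.1 ^ k

theorem primeIdealProd_eq_multiset_prod (f : PrimeIdeal R →₀ ℕ) :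
    primeIdealProd f = ((Finsupp.toMultiset f).map Subtype.val).prod := by
  rw [primeIdealProd, Finsupp.toMultiset_map, Finsupp.prod_toMultiset, Finsupp.prod_mapDomain_index
    (fun _ ↦ pow_zero _) fun _ _ _ ↦ pow_add _ _ _]

variable [IsDedekindDomain R]

theorem prime_of_primeIdeal (p : PrimeIdeal R) : Prime p.1 := Ideal.prime_of_isPrime p.2.2 p.2.1

theorem normalizedFactors_primeIdealProd (f : PrimeIdeal R →₀ ℕ) :
    normalizedFactors (primeIdealProd f) = (Finsupp.toMultiset f).map Subtype.val := by
  rw [primeIdealProd_eq_multiset_prod]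
  refine normalizedFactors_prod_of_prime fun p hp ↦ ?_
  obtain ⟨q, -, rfl⟩ := Multiset.mem_map.mp hp
  exact prime_of_primeIdeal q

theorem primeIdealProd_ne_bot (f : PrimeIdeal R →₀ ℕ) : primeIdealProd f ≠ ⊥ :=
  Finset.prod_ne_zero_iff.mpr fun p _ ↦ pow_ne_zero _ (prime_of_primeIdeal p).ne_zero

theorem primeIdealProd_injective : Function.Injective (primeIdealProd (R := R)) := by
  classical
  intro f g hfg
  have hfactors := normalizedFactors_primeIdealProd f
  rw [hfg, normalizedFactors_primeIdealProd] at hfactors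
  exact (Multiset.toFinsupp.symm.injective
    (Multiset.map_injective Subtype.val_injective hfactors)).symm

theorem exists_primeIdealProd_eq {I : Ideal R} (hI : I ≠ ⊥) : ∃ f, primeIdealProd f = I := by
  classical
  have hprime : ∀ p ∈ normalizedFactors I, p.IsPrime ∧ p ≠ ⊥ := fun p hp ↦
    ⟨Ideal.isPrime_of_prime (prime_of_normalized_factor p hp),
      (prime_of_normalized_factor p hp).ne_zero⟩
  lift normalizedFactors I to Multiset (PrimeIdeal R) using hprime with m hm
  refine ⟨Multiset.toFinsupp m, ?_⟩
  rw [primeIdealProd_eq_multiset_prod, Multiset.toFinsupp_toMultiset, hm,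
    Ideal.prod_normalizedFactors_eq_self hI]

theorem pow_dvd_primeIdealProd_iff {f : PrimeIdeal R →₀ ℕ} {p : PrimeIdeal R} {k : ℕ} :
    p.1 ^ k ∣ primeIdealProd f ↔ k ≤ f p := by
  classical
  have hp := prime_of_primeIdeal p
  rw [dvd_iff_normalizedFactors_le_normalizedFactors (pow_ne_zero _ hp.ne_zero)
      (primeIdealProd_ne_bot f), normalizedFactors_pow,
    normalizedFactors_irreducible hp.irreducible, normalize_eq, Multiset.nsmul_singleton,
    ← Multiset.le_count_iff_replicate_le, normalizedFactors_primeIdealProd,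
    Multiset.count_map_eq_count' _ _ Subtype.val_injective, Finsupp.count_toMultiset]

theorem dvd_primeIdealProd_iff {f : PrimeIdeal R →₀ ℕ} {p : PrimeIdeal R} :
    p.1 ∣ primeIdealProd f ↔ f p ≠ 0 := by
  rw [← pow_one p.1, pow_dvd_primeIdealProd_iff, Nat.one_le_iff_ne_zero]

variable [Module.Free ℤ R] [Module.Finite ℤ R]

theorem one_lt_absNorm (p : PrimeIdeal R) : 1 < Ideal.absNorm p.1 :=
  Nat.one_lt_iff_ne_zero_and_ne_one.mpr
    ⟨Ideal.absNorm_eq_zero_iff.not.mpr p.2.2, Ideal.absNorm_eq_one_iff.not.mpr p.2.1.ne_top⟩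

theorem absNorm_cast_pos (p : PrimeIdeal R) : (0 : ℝ) < Ideal.absNorm p.1 :=
  Nat.cast_pos.mpr (one_lt_absNorm p).pos

theorem log_absNorm_primeIdealProd (f : PrimeIdeal R →₀ ℕ) :
    Real.log (Ideal.absNorm (primeIdealProd f)) =
      Finsupp.weight (fun p : PrimeIdeal R ↦ Real.log (Ideal.absNorm p.1)) f := by
  rw [primeIdealProd, Finsupp.prod, map_prod, Nat.cast_prod, Real.log_prod, Finsupp.weight_apply,
    Finsupp.sum]
  · refine Finset.sum_congr rfl fun p _ ↦ ?_
    rw [map_pow, Nat.cast_pow, Real.log_pow, nsmul_eq_mul]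
  · intro p _
    rw [map_pow, Nat.cast_pow]
    exact pow_ne_zero _ (absNorm_cast_pos p).ne'

theorem weight_log_absNorm_le_iff {f : PrimeIdeal R →₀ ℕ} {s : ℝ} :
    Finsupp.weight (fun p : PrimeIdeal R ↦ Real.log (Ideal.absNorm p.1)) f ≤ s ↔
      Ideal.absNorm (primeIdealProd f) ≤ Real.exp s := by
  rw [← log_absNorm_primeIdealProd, Real.log_le_iff_le_exp]
  exact Nat.cast_pos.mpr (Nat.pos_of_ne_zero
    (Ideal.absNorm_eq_zero_iff.not.mpr (primeIdealProd_ne_bot f)))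

theorem primorial_mem_of_absNorm_le {p : PrimeIdeal R} {n : ℕ} (hn : Ideal.absNorm p.1 ≤ n) :
    (primorial n : R) ∈ p.1 := by
  have hne : Ideal.absNorm p.1 ≠ 0 := (one_lt_absNorm p).ne_bot
  obtain ⟨ℓ, hℓ, hℓp⟩ : ∃ ℓ ∈ (Ideal.absNorm p.1).primeFactorsList, (ℓ : R) ∈ p.1 := by
    have hmem := Ideal.absNorm_mem p.1
    rw [← Nat.prod_primeFactorsList hne, Nat.cast_list_prod, ← Multiset.prod_coe,
      p.2.1.multiset_prod_mem_iff_exists_mem] at hmem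
    simpa using hmem
  obtain ⟨hℓprime, hdvd⟩ := (Nat.mem_primeFactorsList hne).mp hℓ
  have hℓn : ℓ ≤ n := (Nat.le_of_dvd (Nat.pos_of_ne_zero hne) hdvd).trans hn
  have hprimorial : ℓ ∣ primorial n := hℓprime.dvd_primorial_iff.mpr hℓn
  exact Ideal.mem_of_dvd _ (Nat.cast_dvd_cast hprimorial) hℓp

theorem prod_absNorm_dvd_primorial_pow {F : Finset (PrimeIdeal R)} {n : ℕ}
    (hF : ∀ p ∈ F, Ideal.absNorm p.1 ≤ n) :
    ∏ p ∈ F, Ideal.absNorm p.1 ∣ primorial n ^ Module.finrank ℤ R := by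
  classical
  have hdvd : ∏ p ∈ F.image Subtype.val, p ∣ Ideal.span {(primorial n : R)} := by
    refine Finset.prod_primes_dvd _ ?_ ?_
    · simpa using fun p hp hbot _ ↦ prime_of_primeIdeal ⟨p, hp, hbot⟩
    · simpa [Ideal.dvd_span_singleton] using
        fun p hp hbot hmem ↦ primorial_mem_of_absNorm_le (hF ⟨p, hp, hbot⟩ hmem)
  rw [Finset.prod_image Subtype.val_injective.injOn] at hdvd
  rw [← map_prod, ← Ideal.absNorm_span_natCast]
  exact Ideal.absNorm_dvd_absNorm_of_le (Ideal.dvd_iff_le.mp hdvd)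

theorem sum_log_absNorm_le (F : Finset (PrimeIdeal R)) (s : ℝ)
    (hF : ∀ p ∈ F, Real.log (Ideal.absNorm p.1) ≤ s) :
    ∑ p ∈ F, Real.log (Ideal.absNorm p.1) ≤ Module.finrank ℤ R * Real.log 4 * Real.exp s := by
  have hle : ∀ p ∈ F, Ideal.absNorm p.1 ≤ ⌊Real.exp s⌋₊ := fun p hp ↦
    Nat.le_floor ((Real.log_le_iff_le_exp (absNorm_cast_pos p)).mp (hF p hp))
  have hprod : ∏ p ∈ F, (Ideal.absNorm p.1 : ℝ) ≤
      (primorial ⌊Real.exp s⌋₊ : ℝ) ^ Module.finrank ℤ R := by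
    exact_mod_cast Nat.le_of_dvd (pow_pos (primorial_pos _) _) (prod_absNorm_dvd_primorial_pow hle)
  calc ∑ p ∈ F, Real.log (Ideal.absNorm p.1)
      = Real.log (∏ p ∈ F, (Ideal.absNorm p.1 : ℝ)) :=
        (Real.log_prod fun p _ ↦ (absNorm_cast_pos p).ne').symm
    _ ≤ Module.finrank ℤ R * Chebyshev.theta (Real.exp s) := by
        rw [Chebyshev.theta_eq_log_primorial, ← Real.log_pow]
        exact Real.log_le_log (Finset.prod_pos fun p _ ↦ absNorm_cast_pos p) hprod
    _ ≤ Module.finrank ℤ R * (Real.log 4 * Real.exp s) := by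
        gcongr
        exact Chebyshev.theta_le_log4_mul_x (Real.exp_pos s).le
    _ = Module.finrank ℤ R * Real.log 4 * Real.exp s := (mul_assoc _ _ _).symm

end DedekindDomain

section NumberField

open scoped nonZeroDivisors

variable (K : Type*) [Field K] [NumberField K]

theorem bijOn_primeIdealProd (s : ℝ) :
    Set.BijOn (fun f ↦ ⟨primeIdealProd f, mem_nonZeroDivisors_of_ne_zero (primeIdealProd_ne_bot f)⟩)
      {f | Finsupp.weight (fun p : PrimeIdeal (𝓞 K) ↦ Real.log (Ideal.absNorm p.1)) f ≤ s}
      {I : (Ideal (𝓞 K))⁰ | Ideal.absNorm I.1 ≤ Real.exp s} := by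
  refine ⟨fun f hf ↦ weight_log_absNorm_le_iff.mp hf,
    fun f _ g _ hfg ↦ primeIdealProd_injective (congrArg Subtype.val hfg), ?_⟩
  rintro ⟨I, hI⟩ hIs
  obtain ⟨f, rfl⟩ := exists_primeIdealProd_eq (nonZeroDivisors.ne_zero hI)
  exact ⟨f, weight_log_absNorm_le_iff.mpr hIs, rfl⟩

theorem ncard_setOf_weight_log_absNorm_le (s : ℝ) :
    {f : PrimeIdeal (𝓞 K) →₀ ℕ |
        Finsupp.weight (fun p ↦ Real.log (Ideal.absNorm p.1)) f ≤ s}.ncard =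
      idealCount K (Real.exp s) := by
  rw [idealCount, ← (bijOn_primeIdealProd K s).image_eq,
    (bijOn_primeIdealProd K s).injOn.ncard_image]

/-- The nonzero prime ideals of a number field as a system of Beurling primes. Its generalised
integers are the nonzero ideals, through `primeIdealProd`. -/
def primeIdealSystem : BeurlingPrimes (PrimeIdeal (𝓞 K)) where
  logNorm p := Real.log (Ideal.absNorm p.1)
  log_two_le_logNorm p := Real.log_le_log two_pos (by exact_mod_cast one_lt_absNorm p)
  finite_setOf_weight_le s :=
    (bijOn_primeIdealProd K s).finite_iff_finite.mpr (finite_setOf_absNorm_le K _)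
  κ := kappaK K
  κ_pos := kappaK_pos K
  δ := 1 / (2 * (Module.finrank ℚ K : ℝ))
  δ_pos := by
    have hpos : (0 : ℝ) < Module.finrank ℚ K := Nat.cast_pos.mpr Module.finrank_pos
    positivity
  C := (exists_abs_idealCount_sub_le K).choose
  abs_ncard_sub_le s := by
    rw [ncard_setOf_weight_log_absNorm_le, mul_comm _ s, Real.exp_mul]
    exact (exists_abs_idealCount_sub_le K).choose_spec.2 _ (Real.exp_pos s)
  B := Module.finrank ℤ (𝓞 K) * Real.log 4
  sum_logNorm_le := sum_log_absNorm_le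

variable {K} {h : ℕ} {A : ℝ}

theorem invNorm_primeIdealSystem (p : PrimeIdeal (𝓞 K)) :
    (primeIdealSystem K).invNorm p = (Ideal.absNorm p.1 : ℝ)⁻¹ := by
  rw [BeurlingPrimes.invNorm, Real.exp_neg, primeIdealSystem, Real.exp_log (absNorm_cast_pos p)]

theorem normPow_primeIdealSystem (σ : ℝ) (p : PrimeIdeal (𝓞 K)) :
    (primeIdealSystem K).normPow σ p = ((Ideal.absNorm p.1 : ℝ) ^ σ)⁻¹ := by
  rw [BeurlingPrimes.normPow, primeIdealSystem, ← Real.rpow_neg (absNorm_cast_pos p).le,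
    Real.rpow_def_of_pos (absNorm_cast_pos p), mul_comm]

theorem density_primeIdealSystem (hh : 0 < h) (p : PrimeIdeal (𝓞 K)) :
    (primeIdealSystem K).density h p =
      ((Ideal.absNorm p.1 : ℝ) - (Ideal.absNorm p.1 : ℝ) ^ (1 - 1 / (h : ℝ)) + 1)⁻¹ := by
  have hpos := absNorm_cast_pos p
  rw [BeurlingPrimes.density, fullDensity, BeurlingPrimes.normPow_one_div_pow _ hh,
    invNorm_primeIdealSystem, normPow_primeIdealSystem, Real.rpow_sub hpos, Real.rpow_one]
  field_simp

theorem LhK_add_one (hh : 0 < h) : LhK K h (h + 1) =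
    ∑' p, (primeIdealSystem K).density h p * (primeIdealSystem K).normPow (1 / h) p := by
  refine tsum_congr fun p ↦ ?_
  have hexp : ((h : ℝ) + 1) / h - 1 = 1 / h := by
    field_simp
    ring
  rw [density_primeIdealSystem hh, normPow_primeIdealSystem, hexp, one_div, mul_inv, mul_comm]

theorem LhK_two_mul (hh : 0 < h) : LhK K h (2 * h) =
    ∑' p, (primeIdealSystem K).density h p * (primeIdealSystem K).invNorm p := by
  refine tsum_congr fun p ↦ ?_
  have hexp : 2 * (h : ℝ) / h - 1 = 1 := by
    field_simp
    ring
  rw [density_primeIdealSystem hh, invNorm_primeIdealSystem, hexp, Real.rpow_one, one_div, mul_inv,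
    mul_comm]

theorem gammaK_eq_fullConstant (hh : 0 < h) :
    gammaK K h = (primeIdealSystem K).fullConstant h := by
  refine tprod_congr fun p ↦ ?_
  have hpos := absNorm_cast_pos p
  have hroot : 1 < (Ideal.absNorm p.1 : ℝ) ^ (1 / (h : ℝ)) :=
    Real.one_lt_rpow (Nat.one_lt_cast.mpr (one_lt_absNorm p)) (by positivity)
  rw [fullFactor_eq hh (BeurlingPrimes.normPow_lt_one _ (by positivity) p),
    BeurlingPrimes.normPow_one_div_pow _ hh, invNorm_primeIdealSystem, normPow_primeIdealSystem]
  have hsub := (sub_pos.mpr hroot).ne'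
  field_simp
  ring

theorem tendsto_primeSum_invNorm (hA : MertensK K A) :
    Tendsto (fun s ↦ (primeIdealSystem K).primeSum (primeIdealSystem K).invNorm s - Real.log s)
      atTop (𝓝 A) := by
  refine (hA.comp Real.tendsto_exp_atTop).congr fun s ↦ ?_
  have himage : {p : Ideal (𝓞 K) | p.IsPrime ∧ p ≠ ⊥ ∧ (Ideal.absNorm p : ℝ) ≤ Real.exp s} =
      Subtype.val '' ((primeIdealSystem K).primesLE s : Set (PrimeIdeal (𝓞 K))) := by
    ext p
    simp only [Set.mem_ofPred_eq, Set.mem_image, Finset.mem_coe, BeurlingPrimes.mem_primesLE,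
      primeIdealSystem, Real.log_le_iff_le_exp (absNorm_cast_pos _), Subtype.exists,
      exists_and_right, exists_eq_right]
    tauto
  rw [Function.comp_apply, Real.log_exp, himage, finsum_mem_image Subtype.val_injective.injOn,
    finsum_mem_coe_finset, BeurlingPrimes.primeSum]
  simp only [invNorm_primeIdealSystem, one_div]

theorem omegaK_primeIdealProd (f : PrimeIdeal (𝓞 K) →₀ ℕ) :
    omegaK (primeIdealProd f) = f.support.card := by
  have himage : {p | p.IsPrime ∧ p ≠ ⊥ ∧ p ∣ primeIdealProd f} =
      Subtype.val '' (f.support : Set (PrimeIdeal (𝓞 K))) := by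
    ext p
    simp only [Set.mem_ofPred_eq, Set.mem_image, Finset.mem_coe, Finsupp.mem_support_iff,
      ← dvd_primeIdealProd_iff, Subtype.exists, exists_and_right, exists_eq_right]
    tauto
  rw [omegaK, himage, Set.ncard_image_of_injective _ Subtype.val_injective, Set.ncard_coe_finset]

theorem hFullI_primeIdealProd_iff {f : PrimeIdeal (𝓞 K) →₀ ℕ} :
    HFullI h (primeIdealProd f) ↔ IsFull h f := by
  have hiff (p : PrimeIdeal (𝓞 K)) : (p.1 ∣ primeIdealProd f → p.1 ^ h ∣ primeIdealProd f) ↔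
      f p = 0 ∨ h ≤ f p := by
    rw [dvd_primeIdealProd_iff, pow_dvd_primeIdealProd_iff, or_iff_not_imp_left]
  exact ⟨fun hf p ↦ (hiff p).mp (hf p.1 p.2.1 p.2.2),
    fun hf p hp hbot ↦ (hiff ⟨p, hp, hbot⟩).mpr (hf _)⟩

theorem finsum_omegaK_sq_eq (hh : 0 < h) {x : ℝ} (hx : 0 < x) :
    ∑ᶠ I ∈ {I : Ideal (𝓞 K) | I ≠ ⊥ ∧ HFullI h I ∧ (Ideal.absNorm I : ℝ) ≤ x},
        (omegaK I : ℝ) ^ 2 =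
      ∑ f ∈ (primeIdealSystem K).fullElems h ∅ (Real.log x / h), (f.support.card : ℝ) ^ 2 := by
  have himage : {I : Ideal (𝓞 K) | I ≠ ⊥ ∧ HFullI h I ∧ (Ideal.absNorm I : ℝ) ≤ x} =
      primeIdealProd '' ((primeIdealSystem K).fullElems h ∅ (Real.log x / h) : Set _) := by
    have hmem (f : PrimeIdeal (𝓞 K) →₀ ℕ) :
        f ∈ (primeIdealSystem K).fullElems h ∅ (Real.log x / h) ↔
          HFullI h (primeIdealProd f) ∧ Ideal.absNorm (primeIdealProd f) ≤ x := by
      rw [BeurlingPrimes.mem_fullElems, mul_div_cancel₀ _ (Nat.cast_ne_zero.mpr hh.ne'),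
        hFullI_primeIdealProd_iff, BeurlingPrimes.height, primeIdealSystem,
        weight_log_absNorm_le_iff, Real.exp_log hx]
      simp [and_comm]
    ext I
    constructor
    · rintro ⟨hI, hfull⟩
      obtain ⟨f, rfl⟩ := exists_primeIdealProd_eq hI
      exact ⟨f, (hmem f).mpr hfull, rfl⟩
    · rintro ⟨f, hf, rfl⟩
      exact ⟨primeIdealProd_ne_bot f, (hmem f).mp hf⟩
  rw [himage, finsum_mem_image primeIdealProd_injective.injOn, finsum_mem_coe_finset]
  simp only [omegaK_primeIdealProd]

theorem D1K_eq (hh : 0 < h) :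
    D1K K h A = (primeIdealSystem K).densityMertens h A - Real.log h := by
  rw [D1K, LhK_add_one hh, LhK_two_mul hh, BeurlingPrimes.densityMertens]
  ring

theorem meanSquareMain_primeIdealSystem (hh : 0 < h) {y : ℝ} (hy : 0 < y) :
    (primeIdealSystem K).meanSquareMain h A (y / h) =
      Real.log y ^ 2 + (2 * D1K K h A + 1) * Real.log y + D2K K h A := by
  simp only [BeurlingPrimes.meanSquareMain, D2K, BconstK, ← density_primeIdealSystem hh]
  rw [D1K_eq hh, Real.log_div hy.ne' (Nat.cast_ne_zero.mpr hh.ne')]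
  ring

theorem exists_abs_finsum_omegaK_sq_sub_le (hh : 0 < h) (hA : MertensK K A) :
    ∃ C > 0, ∀ x : ℝ, Real.exp (2 * h) ≤ x →
      |∑ᶠ I ∈ {I : Ideal (𝓞 K) | I ≠ ⊥ ∧ HFullI h I ∧ (Ideal.absNorm I : ℝ) ≤ x},
          (omegaK I : ℝ) ^ 2 -
        kappaK K * gammaK K h * x ^ (1 / (h : ℝ)) * (Real.log (Real.log x) ^ 2 +
          (2 * D1K K h A + 1) * Real.log (Real.log x) + D2K K h A)| ≤
      C * (x ^ (1 / (h : ℝ)) * Real.log (Real.log x) / Real.log x) := by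
  have hMertens := (primeIdealSystem K).hasMertensConstant_invNorm (tendsto_primeSum_invNorm hA)
  obtain ⟨C, hC, hmain⟩ := hMertens.exists_abs_sum_card_support_sq_sub_le hh
  have hh1 : (1 : ℝ) ≤ h := Nat.one_le_cast.mpr hh
  refine ⟨C * h, by positivity, fun x hx ↦ ?_⟩
  have hx0 : 0 < x := (Real.exp_pos _).trans_le hx
  have hlog : 2 * h ≤ Real.log x := (Real.le_log_iff_exp_le hx0).mpr hx
  have hlog0 : 0 < Real.log x := by linarith
  have hroot : Real.exp (Real.log x / h) = x ^ (1 / (h : ℝ)) := by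
    rw [Real.rpow_def_of_pos hx0, mul_one_div]
  specialize hmain (Real.log x / h) ((le_div_iff₀ (by positivity)).mpr hlog)
  rw [← finsum_omegaK_sq_eq hh hx0, hroot, ← gammaK_eq_fullConstant hh,
    meanSquareMain_primeIdealSystem hh hlog0] at hmain
  calc _ ≤ C * (x ^ (1 / (h : ℝ)) * (Real.log (Real.log x / h) / (Real.log x / h))) := hmain
    _ ≤ C * (x ^ (1 / (h : ℝ)) * (Real.log (Real.log x) / (Real.log x / h))) := by
        gcongr
        exact div_le_self hlog0.le hh1
    _ = C * h * (x ^ (1 / (h : ℝ)) * Real.log (Real.log x) / Real.log x) := by field_simp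

end NumberField

theorem second_moment_omega_hfull_ideals_general (K : Type*) [Field K] [NumberField K]
    (h : ℕ) (hh : 0 < h) (A : ℝ) (hA : MertensK K A) :
    (fun x : ℝ =>
        (∑ᶠ I ∈ {I : Ideal (𝓞 K) | I ≠ ⊥ ∧ HFullI h I ∧ (Ideal.absNorm I : ℝ) ≤ x},
            (omegaK I : ℝ) ^ 2)
          - kappaK K * gammaK K h * (x ^ (1 / (h : ℝ)) * Real.log (Real.log x) ^ 2)
          - kappaK K * gammaK K h * (2 * D1K K h A + 1) *
              (x ^ (1 / (h : ℝ)) * Real.log (Real.log x))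
          - kappaK K * gammaK K h * D2K K h A * x ^ (1 / (h : ℝ)))
      =O[atTop]
        fun x : ℝ => x ^ (1 / (h : ℝ)) * Real.log (Real.log x) / Real.log x := by
  obtain ⟨C, hC, hbound⟩ := exists_abs_finsum_omegaK_sq_sub_le hh hA
  refine .of_bound C ?_
  filter_upwards [eventually_ge_atTop (Real.exp (2 * h))] with x hx
  refine le_trans (Eq.le ?_) ((hbound x hx).trans (mul_le_mul_of_nonneg_left (le_abs_self _) hC.le))
  rw [Real.norm_eq_abs]
  simp only [Set.mem_ofPred_eq]
  ring_nf

/-- Second moment of `ω` over `h`-full ideals of a number field. -/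
theorem second_moment_omega_hfull_ideals (K : Type*) [Field K] [NumberField K]
    (h : ℕ) (hh : 2 ≤ h) (A : ℝ) (hA : MertensK K A) :
    (fun x : ℝ =>
        (∑ᶠ I ∈ {I : Ideal (𝓞 K) | I ≠ ⊥ ∧ HFullI h I ∧ (Ideal.absNorm I : ℝ) ≤ x},
            (omegaK I : ℝ) ^ 2)
          - kappaK K * gammaK K h * (x ^ (1 / (h : ℝ)) * Real.log (Real.log x) ^ 2)
          - kappaK K * gammaK K h * (2 * D1K K h A + 1) *
              (x ^ (1 / (h : ℝ)) * Real.log (Real.log x))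
          - kappaK K * gammaK K h * D2K K h A * x ^ (1 / (h : ℝ)))
      =O[atTop]
        fun x : ℝ => x ^ (1 / (h : ℝ)) * Real.log (Real.log x) / Real.log x :=
  second_moment_omega_hfull_ideals_general K h (by lia) A hA
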